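/- Let R be a Noetherian local ring containing a field and let M be a finitely generated R-module of dimension d = dim(R/Ann_R(M)). Let Min_d(M) denote the set of prime ideals P minimal over Ann_R(M) with dim(R/P) = d. Then for every system of parameters x_1,…,x_d of M (i.e., d elements of the maximal ideal with dim M/(x_1,…,x_d)M = 0), 𝔥^d_x(M) = max{ rank_{R/P}(M/PM) : P ∈ Min_d(M) }, where for a domain T, rank_T of a T-module is the dimension over Frac(T) of its base change to Frac(T). -/

import Mathlib

open scoped BigOperators ENNReal

set_option linter.all false

universe u v

/-- A filtration of `M` of length `h` whose factors are cyclic modules killed by `J`. -/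
def HasQLFiltration (S : Type u) [CommRing S] (J : Ideal S)
    (M : Type v) [AddCommGroup M] [Module S M] (h : ℕ) : Prop :=
  ∃ c : Fin (h + 1) → Submodule S M,
    Monotone c ∧ c 0 = ⊥ ∧ c (Fin.last h) = ⊤ ∧
    ∀ i : Fin h,
      (∃ m : M, c i.succ = c i.castSucc ⊔ Submodule.span S {m}) ∧
      ∀ a ∈ J, ∀ x ∈ c i.succ, a • x ∈ c i.castSucc

/-- The `J`-quasilength of `M`. -/
noncomputable def quasilength (S : Type u) [CommRing S] (J : Ideal S)
    (M : Type v) [AddCommGroup M] [Module S M] : ℕ∞ :=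
  sInf {n : ℕ∞ | ∃ h : ℕ, n = (h : ℕ∞) ∧ HasQLFiltration S J M h}

/-- The ideal `(x₁^{t₁}, …, x_d^{t_d})`. -/
def powerIdeal {R : Type u} [CommRing R] {d : ℕ} (x : Fin d → R) (t : Fin d → ℕ) : Ideal R :=
  Ideal.span (Set.range fun i => x i ^ t i)

/-- The content `𝔥^d_x(M)` of `M` with respect to `x₁, …, x_d`. -/
noncomputable def content {R : Type u} [CommRing R] {d : ℕ} (x : Fin d → R)
    (M : Type v) [AddCommGroup M] [Module R M] : ℝ≥0∞ :=
  ⨆ s : ℕ, ⨅ t : {t : Fin d → ℕ // ∀ i, s ≤ t i ∧ 0 < t i},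
    (quasilength R (Ideal.span (Set.range x))
        (M ⧸ (powerIdeal x (t : Fin d → ℕ) • (⊤ : Submodule R M))) : ℝ≥0∞) /
      ∏ i, ((t : Fin d → ℕ) i : ℝ≥0∞)



universe w

section

open Polynomial in
theorem AL_core {E C : Type*} [CommRing E] [IsDomain E] [IsIntegrallyClosed E] [CharZero E]
    [CommRing C] [IsDomain C] [Algebra E C] [FaithfulSMul E C] [Algebra.IsAlgebraic E C]
    {m : ℕ} (Y : Fin m → C) (hY : Algebra.adjoin E (Set.range Y) = ⊤) :
    ∃ (F : E[X]) (g : E) (θ : C) (G : Fin m → E[X]),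
      aeval θ F = 0 ∧ aeval θ (derivative F) ≠ 0 ∧ g ≠ 0 ∧
      (∀ i, algebraMap E C g * Y i = aeval θ (G i)) ∧ ∀ W : E[X], aeval θ W = 0 → F ∣ W := by
  classical
  let Q := FractionRing E
  let L := FractionRing C
  have hinjEC : Function.Injective (algebraMap E C) := FaithfulSMul.algebraMap_injective E C
  have : FaithfulSMul E L := (faithfulSMul_iff_algebraMap_injective E L).2 (by
    rw [IsScalarTower.algebraMap_eq E C L]
    exact (IsFractionRing.injective C L).comp hinjEC)
  letI : Algebra Q L := FractionRing.liftAlgebra E L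
  have : IsScalarTower E Q L := inferInstance
  have hden : ∀ l : L, ∃ e : E, e ≠ 0 ∧ ∃ c : C, algebraMap E L e * l = algebraMap C L c := by
    intro l
    obtain ⟨a, b, hb, rfl⟩ := IsFractionRing.div_surjective (A := C) l
    have hb0 : b ≠ 0 := nonZeroDivisors.ne_zero hb
    obtain ⟨e, he, c, hc⟩ := (Algebra.IsAlgebraic.isAlgebraic (R := E) b).exists_nonzero_dvd
      (mem_nonZeroDivisors_of_ne_zero hb0)
    refine ⟨e, he, c * a, ?_⟩
    have hb' : algebraMap C L b ≠ 0 := by simpa using hb0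
    rw [IsScalarTower.algebraMap_apply E C L, hc, mul_div_assoc', div_eq_iff hb', ← map_mul, ← map_mul]
    congr 1; ring
  have : Algebra.IsAlgebraic C L := IsLocalization.isAlgebraic _ (nonZeroDivisors C)
  have hEL : Algebra.IsAlgebraic E L := Algebra.IsAlgebraic.trans E C L
  have hQL : Algebra.IsAlgebraic Q L :=
    (IsFractionRing.comap_isAlgebraic_iff (A := E) (K := Q) (C := L)).1 hEL
  have hadj : Algebra.adjoin Q (Set.range fun i => algebraMap C L (Y i)) = ⊤ := by
    rw [eq_top_iff]
    intro l _
    obtain ⟨e, he, c, hc⟩ := hden l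
    have he' : algebraMap E Q e ≠ 0 := by simpa using he
    have hcm : ∀ c : C, algebraMap C L c ∈ Algebra.adjoin Q (Set.range fun i => algebraMap C L (Y i)) := by
      intro c
      have : c ∈ Algebra.adjoin E (Set.range Y) := by rw [hY]; trivial
      induction this using Algebra.adjoin_induction with
      | mem x hx =>
        obtain ⟨i, rfl⟩ := hx
        exact Algebra.subset_adjoin ⟨i, rfl⟩
      | algebraMap r =>
        rw [← IsScalarTower.algebraMap_apply E C L, IsScalarTower.algebraMap_apply E Q L]
        exact Subalgebra.algebraMap_mem _ _
      | add x y _ _ h1 h2 => rw [map_add]; exact add_mem h1 h2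
      | mul x y _ _ h1 h2 => rw [map_mul]; exact mul_mem h1 h2
    have : l = (algebraMap E Q e)⁻¹ • algebraMap C L c := by
      rw [← hc, IsScalarTower.algebraMap_apply E Q L, Algebra.smul_def, ← mul_assoc, ← map_mul,
        inv_mul_cancel₀ he', map_one, one_mul]
    rw [this]
    exact Subalgebra.smul_mem _ (hcm c) _
  have hft : Algebra.FiniteType Q L := ⟨⟨(Set.finite_range _).toFinset, by simpa using hadj⟩⟩
  have hIntegral : Algebra.IsIntegral Q L := inferInstance
  have hfin : Module.Finite Q L := Algebra.IsIntegral.finite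
  have : CharZero Q := charZero_of_injective_algebraMap (R := E) (IsFractionRing.injective E Q)
  obtain ⟨β, hβ⟩ := Field.exists_primitive_element Q L
  obtain ⟨e1, he1, c1, hc1⟩ := hden β
  obtain ⟨e2, he2, hint2⟩ := (Algebra.IsAlgebraic.isAlgebraic (R := E) c1).exists_integral_multiple
  obtain ⟨θ, hθ⟩ : ∃ θ : C, θ = e2 • c1 := ⟨_, rfl⟩
  rw [← hθ] at hint2
  have hθL : algebraMap C L θ = (algebraMap E Q (e2 * e1)) • β := by
    rw [hθ, Algebra.smul_def, map_mul, ← hc1, ← IsScalarTower.algebraMap_apply E C L,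
      Algebra.smul_def, ← IsScalarTower.algebraMap_apply E Q L, map_mul, mul_assoc]
  have he12 : algebraMap E Q (e2 * e1) ≠ 0 := by simpa using ⟨he2, he1⟩
  have hθtop : Algebra.adjoin Q {algebraMap C L θ} = ⊤ := by
    have h1 : IntermediateField.adjoin Q {algebraMap C L θ} = ⊤ := by
      rw [eq_top_iff, ← hβ, IntermediateField.adjoin_le_iff, Set.singleton_subset_iff]
      have : β = (algebraMap E Q (e2 * e1))⁻¹ • algebraMap C L θ := by
        rw [hθL, smul_smul, inv_mul_cancel₀ he12, one_smul]
      rw [this]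
      exact IntermediateField.smul_mem _ (IntermediateField.mem_adjoin_simple_self _ _)
    rw [← IntermediateField.adjoin_simple_toSubalgebra_of_isAlgebraic
      (Algebra.IsAlgebraic.isAlgebraic (R := Q) (algebraMap C L θ)), h1]
    rfl
  let F := minpoly E θ
  have hFdvd : ∀ W : E[X], aeval θ W = 0 → F ∣ W := fun W hW =>
    minpoly.isIntegrallyClosed_dvd hint2 hW
  have hFm : F.Monic := minpoly.monic hint2
  have hF1 : F.natDegree ≠ 0 := (minpoly.natDegree_pos hint2).ne'
  have hclear : ∀ p : Q[X], ∃ e : E, e ≠ 0 ∧ ∃ w : E[X], algebraMap E Q e • p = w.map (algebraMap E Q) := by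
    intro p
    obtain ⟨b, hb, w⟩ := IsLocalization.integerNormalization_spec (nonZeroDivisors E) (S := Q) p
    refine ⟨b, nonZeroDivisors.ne_zero hb, IsLocalization.integerNormalization (nonZeroDivisors E) p, ?_⟩
    rw [w, algebraMap_smul]
  have hGi : ∀ i, ∃ e : E, e ≠ 0 ∧ ∃ w : E[X], algebraMap E C e * Y i = aeval θ w := by
    intro i
    have : algebraMap C L (Y i) ∈ Algebra.adjoin Q {algebraMap C L θ} := by rw [hθtop]; trivial
    rw [Algebra.adjoin_singleton_eq_range_aeval] at this
    obtain ⟨p, hp⟩ := this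
    obtain ⟨e, he, w, hw⟩ := hclear p
    refine ⟨e, he, w, IsFractionRing.injective C L ?_⟩
    rw [map_mul, ← hp, ← IsScalarTower.algebraMap_apply E C L, ← aeval_algebraMap_apply,
      IsScalarTower.algebraMap_apply E Q L, ← aeval_map_algebraMap Q, ← hw,
      Algebra.smul_def, map_mul]
    rw [Polynomial.algebraMap_apply, aeval_C]
    rfl
  choose e he w hw using hGi
  refine ⟨F, ∏ i, e i, θ, fun i => Polynomial.C (∏ j ∈ Finset.univ.erase i, e j) * w i, minpoly.aeval _ _, ?_,
    Finset.prod_ne_zero_iff.2 fun i _ => he i, ?_, hFdvd⟩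
  · intro h0
    have hdv := hFdvd _ h0
    have hne : derivative F ≠ 0 := by
      intro h
      exact hF1 (Polynomial.derivative_eq_zero.1 h)
    have := Polynomial.natDegree_le_of_dvd hdv hne
    have := natDegree_derivative_lt hF1
    omega
  · intro i
    rw [map_mul, aeval_C, ← hw, ← Finset.prod_erase_mul _ _ (Finset.mem_univ i), map_mul, mul_assoc]

open Polynomial in
/-- presentation of a f.g. domain as generically one equation over a polynomial ring -/
theorem AL_exists {C : Type u} [CommRing C] [IsDomain C] [CharZero C] [Algebra.FiniteType ℤ C]
    {d : ℕ} (x : Fin d → C) (hx : AlgebraicIndependent ℤ x) :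
    ∃ (ι : Type u) (_ : Finite ι) (z : ι → C) (j : Fin d → ι) (F : (MvPolynomial ι ℤ)[X])
      (g : MvPolynomial ι ℤ) (θ : C) (m : ℕ) (G : Fin m → (MvPolynomial ι ℤ)[X]) (Y : Fin m → C),
      Function.Injective j ∧ (∀ i, z (j i) = x i) ∧
      F.eval₂ (MvPolynomial.aeval z : MvPolynomial ι ℤ →ₐ[ℤ] C).toRingHom θ = 0 ∧
      (derivative F).eval₂ (MvPolynomial.aeval z : MvPolynomial ι ℤ →ₐ[ℤ] C).toRingHom θ ≠ 0 ∧
      MvPolynomial.aeval z g ≠ 0 ∧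
      (∀ i, MvPolynomial.aeval z g * Y i =
        (G i).eval₂ (MvPolynomial.aeval z : MvPolynomial ι ℤ →ₐ[ℤ] C).toRingHom θ) ∧
      (Algebra.adjoin ℤ (Set.range Y) = ⊤) ∧
      (∀ W : (MvPolynomial ι ℤ)[X],
        W.eval₂ (MvPolynomial.aeval z : MvPolynomial ι ℤ →ₐ[ℤ] C).toRingHom θ = 0 → F ∣ W) := by
  classical
  obtain ⟨s, hs⟩ := (Algebra.FiniteType.out : (⊤ : Subalgebra ℤ C).FG)
  have htop : Algebra.adjoin ℤ (Set.range x ∪ (s : Set C)) = ⊤ := by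
    rw [eq_top_iff, ← hs]; exact Algebra.adjoin_mono Set.subset_union_right
  have : Algebra.IsAlgebraic (Algebra.adjoin ℤ (Set.range x ∪ (s : Set C))) C := by
    refine ⟨fun c => ?_⟩
    have hc : c ∈ Algebra.adjoin ℤ (Set.range x ∪ (s : Set C)) := by rw [htop]; trivial
    exact isAlgebraic_algebraMap (⟨c, hc⟩ : Algebra.adjoin ℤ (Set.range x ∪ (s : Set C)))
  obtain ⟨u, hu1, hu2, hu⟩ := exists_isTranscendenceBasis_between (R := ℤ) (Set.range x)
    (Set.range x ∪ (s : Set C)) Set.subset_union_left (AlgebraicIndependent.coe_range hx)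
  have hufin : u.Finite := ((Set.finite_range x).union s.finite_toSet).subset hu2
  have : Finite u := hufin
  let E := MvPolynomial u ℤ
  letI algEC : Algebra E C :=
    (MvPolynomial.aeval ((↑) : u → C) : MvPolynomial u ℤ →ₐ[ℤ] C).toRingHom.toAlgebra
  have hinj : Function.Injective (algebraMap E C) := hu.1
  have : FaithfulSMul E C := (faithfulSMul_iff_algebraMap_injective E C).2 hinj
  have algC : Algebra.IsAlgebraic E C := by
    have := hu.isAlgebraic
    refine ⟨fun c => ?_⟩
    obtain ⟨p, hp0, hp⟩ := this.isAlgebraic c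
    let e : Algebra.adjoin ℤ (Set.range ((↑) : u → C)) ≃ₐ[ℤ] E := hu.1.aevalEquiv.symm
    refine ⟨p.map e.toRingEquiv.toRingHom, ?_, ?_⟩
    · rwa [Ne, Polynomial.map_eq_zero_iff e.injective]
    · rw [Polynomial.aeval_def, Polynomial.eval₂_map]
      rw [Polynomial.aeval_def] at hp
      have heq : (algebraMap E C).comp e.toRingEquiv.toRingHom =
        algebraMap (Algebra.adjoin ℤ (Set.range ((↑) : u → C))) C := by
        refine RingHom.ext fun y => ?_
        change (MvPolynomial.aeval ((↑) : u → C)) (e y) = (y : C)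
        rw [← hu.1.algebraMap_aevalEquiv]
        change ((hu.1.aevalEquiv (hu.1.aevalEquiv.symm y) : _) : C) = y
        rw [AlgEquiv.apply_symm_apply]
      rw [heq]; exact hp
  have : Module.Free ℤ E := inferInstance
  have : CharZero E := charZero_of_injective_algebraMap (R := ℤ) (MvPolynomial.C_injective _ _)
  obtain ⟨Y, hYr⟩ : ∃ Y : Fin s.card → C, Set.range Y = s := by
    refine ⟨fun i => (s.equivFin.symm i : C), ?_⟩
    ext c; constructor
    · rintro ⟨i, rfl⟩; exact (s.equivFin.symm i).2
    · intro hc; exact ⟨s.equivFin ⟨c, hc⟩, by simp⟩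
  have hYtop : Algebra.adjoin ℤ (Set.range Y) = ⊤ := by rw [hYr, hs]
  have hYE : Algebra.adjoin E (Set.range Y) = ⊤ := by
    rw [eq_top_iff]
    intro c _
    have hc : c ∈ Algebra.adjoin ℤ (Set.range Y) := by rw [hYtop]; trivial
    induction hc using Algebra.adjoin_induction with
    | mem x hx => exact Algebra.subset_adjoin hx
    | algebraMap r =>
      simp only [algebraMap_int_eq, eq_intCast]; exact intCast_mem _ _
    | add x y _ _ h1 h2 => exact add_mem (h1 trivial) (h2 trivial)
    | mul x y _ _ h1 h2 => exact mul_mem (h1 trivial) (h2 trivial)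
  obtain ⟨F, g, θ, G, h1, h2, h3, h4, h5⟩ := AL_core (E := E) Y hYE
  refine ⟨u, inferInstance, (↑), fun i => ⟨x i, hu1 ⟨i, rfl⟩⟩, F, g, θ, s.card, G, Y, ?_, ?_, h1, h2,
    ?_, h4, hYtop, h5⟩
  · intro a b h
    exact hx.injective (congrArg Subtype.val h)
  · intro i; rfl
  · intro h; exact h3 (hinj (by rw [map_zero]; exact h))

open Polynomial in
theorem AL_univ {C : Type u} [CommRing C] [IsDomain C] {ι : Type u}
    (z : ι → C) (F : (MvPolynomial ι ℤ)[X])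
    (g : MvPolynomial ι ℤ) (θ : C) (m : ℕ) (G : Fin m → (MvPolynomial ι ℤ)[X]) (Y : Fin m → C)
    (h4 : MvPolynomial.aeval z g ≠ 0)
    (h5 : ∀ i, MvPolynomial.aeval z g * Y i =
        (G i).eval₂ (MvPolynomial.aeval z : MvPolynomial ι ℤ →ₐ[ℤ] C).toRingHom θ)
    (h6 : Algebra.adjoin ℤ (Set.range Y) = ⊤)
    (h7 : ∀ W : (MvPolynomial ι ℤ)[X],
        W.eval₂ (MvPolynomial.aeval z : MvPolynomial ι ℤ →ₐ[ℤ] C).toRingHom θ = 0 → F ∣ W)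
    {B : Type v} [CommRing B] [IsDomain B] (η : MvPolynomial ι ℤ →+* B) (θ' : B)
    (hF : F.eval₂ η θ' = 0) (hg : η g ≠ 0) (hG : ∀ i, η g ∣ (G i).eval₂ η θ') :
    ∃ ψ : C →+* B, ∀ i, ψ (z i) = η (MvPolynomial.X i) := by
  classical
  choose y hy using hG
  let π : MvPolynomial (Fin m) ℤ →ₐ[ℤ] C := MvPolynomial.aeval Y
  let χ : MvPolynomial (Fin m) ℤ →ₐ[ℤ] B := MvPolynomial.aeval y
  have hπ : Function.Surjective π := by
    rw [← AlgHom.range_eq_top, ← Algebra.adjoin_range_eq_range_aeval, h6]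
  set ev : (MvPolynomial ι ℤ)[X] →+* C :=
    eval₂RingHom (MvPolynomial.aeval z : MvPolynomial ι ℤ →ₐ[ℤ] C).toRingHom θ with hev
  set ev' : (MvPolynomial ι ℤ)[X] →+* B := eval₂RingHom η θ' with hev'
  have hevC : ∀ e, ev (Polynomial.C e) = MvPolynomial.aeval z e := fun e => by
    simp [hev]
  have hevC' : ∀ e, ev' (Polynomial.C e) = η e := fun e => by simp [hev']
  have key : ∀ f : MvPolynomial (Fin m) ℤ, ∃ (M : ℕ) (W : (MvPolynomial ι ℤ)[X]),
      (MvPolynomial.aeval z g) ^ M * π f = ev W ∧ (η g) ^ M * χ f = ev' W := by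
    intro f
    induction f using MvPolynomial.induction_on with
    | C a => exact ⟨0, Polynomial.C (MvPolynomial.C a), by simp [hevC, π], by simp [hevC', χ]⟩
    | add p q hp hq =>
      obtain ⟨M, W, h1, h2⟩ := hp
      obtain ⟨M', W', h1', h2'⟩ := hq
      refine ⟨M + M', Polynomial.C g ^ M' * W + Polynomial.C g ^ M * W', ?_, ?_⟩
      · rw [map_add, map_add, map_mul, map_mul, map_pow, map_pow, hevC, ← h1, ← h1']; ring
      · rw [map_add, map_add, map_mul, map_mul, map_pow, map_pow, hevC', ← h2, ← h2']; ring
    | mul_X p i hp =>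
      obtain ⟨M, W, h1, h2⟩ := hp
      refine ⟨M + 1, W * G i, ?_, ?_⟩
      · rw [map_mul, map_mul, ← h1]
        have : ev (G i) = MvPolynomial.aeval z g * Y i := (h5 i).symm
        rw [this]; simp only [π, MvPolynomial.aeval_X]; ring
      · rw [map_mul, map_mul, ← h2]
        have : ev' (G i) = η g * y i := hy i
        rw [this]; simp only [χ, MvPolynomial.aeval_X]; ring
  have hker : ∀ f, π f = 0 → χ f = 0 := by
    intro f hf
    obtain ⟨M, W, h1, h2⟩ := key f
    rw [hf, mul_zero] at h1
    obtain ⟨V, hV⟩ := h7 W h1.symm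
    have : ev' W = 0 := by rw [hV, map_mul]; simp [hev', hF]
    rw [this] at h2
    exact (mul_eq_zero.1 h2).resolve_left (pow_ne_zero _ hg)
  let ψ : C →+* B := RingHom.liftOfSurjective π.toRingHom hπ ⟨χ.toRingHom, fun f hf => hker f hf⟩
  have hψ : ∀ f, ψ (π f) = χ f := fun f =>
    RingHom.liftOfRightInverse_comp_apply π.toRingHom _ _ ⟨χ.toRingHom, fun f hf => hker f hf⟩ f
  have hψev : ∀ W, ψ (ev W) = ev' W := by
    have elt : ∀ (c : C) (W : (MvPolynomial ι ℤ)[X]), ev W = c → ψ c = ev' W := by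
      intro c W hW
      obtain ⟨f, rfl⟩ := hπ c
      rw [hψ]
      obtain ⟨M, W', h1, h2⟩ := key f
      have : ev (Polynomial.C g ^ M * W - W') = 0 := by
        rw [map_sub, map_mul, map_pow, hevC, hW, h1, sub_self]
      obtain ⟨V, hV⟩ := h7 _ this
      have h3 : ev' (Polynomial.C g ^ M * W - W') = 0 := by
        rw [hV, map_mul]; simp [hev', hF]
      rw [map_sub, map_mul, map_pow, hevC', ← h2, ← mul_sub] at h3
      exact (sub_eq_zero.1 ((mul_eq_zero.1 h3).resolve_left (pow_ne_zero _ hg))).symm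
    exact fun W => elt _ W rfl
  refine ⟨ψ, fun i => ?_⟩
  have := hψev (Polynomial.C (MvPolynomial.X i))
  rwa [hevC, hevC', MvPolynomial.aeval_X] at this

end

section

open Polynomial in
theorem taylor2 {B : Type*} [CommRing B] (f : B[X]) (x : B) :
    ∃ k : B[X], ∀ y : B, f.eval (x + y) = f.eval x + f.derivative.eval x * y + k.eval y * y ^ 2 := by
  obtain ⟨k, hk⟩ := binomExpansion (f.map (C : B →+* B[X])) (C x) X
  refine ⟨k, fun y => ?_⟩
  have := congrArg (Polynomial.eval y) hk
  simp only [eval_map, eval_add, eval_mul, eval_pow, eval_X, derivative_map] at this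
  have h1 : ∀ (g : B[X]) (q : B[X]), eval y (eval₂ C q g) = eval (eval y q) g := by
    intro g q
    rw [← eval_comp]; rfl
  have h2 : ∀ g : B[X], eval y (eval₂ C (C x) g) = eval x g := by
    intro g; rw [h1]; simp
  simpa only [h1, eval_add, eval_C, eval_X] using this

open Polynomial in
theorem hensel_nonmonic {B1 : Type*} [CommRing B1]
    (a e : PowerSeries B1) (ha : PowerSeries.X ∣ a) (R : (PowerSeries B1)[X]) :
    ∃ η : PowerSeries B1, 1 + η + a * η ^ 2 * R.eval (e * a * η) = 0 := by
  classical
  let B := PowerSeries B1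
  let I : Ideal B := Ideal.span {PowerSeries.X}
  have hH : HenselianRing B I := inferInstance
  set n := R.natDegree
  let Q : B[X] := ∑ i ∈ Finset.range (n + 1), C (R.coeff i * (e * a) ^ i) * X ^ (n - i)
  let m : B[X] := X ^ (n + 2) + (X ^ (n + 1) + C a * Q)
  have hQdeg : Q.degree ≤ (n : ℕ) := by
    refine (degree_sum_le _ _).trans (Finset.sup_le fun i _ => ?_)
    refine (degree_C_mul_X_pow_le _ _).trans ?_
    exact_mod_cast Nat.sub_le n i
  have hm : m.Monic := by
    refine monic_X_pow_add ?_
    refine lt_of_le_of_lt (degree_add_le _ _) (max_lt ?_ ?_)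
    · refine lt_of_le_of_lt (degree_X_pow_le _) ?_
      exact_mod_cast Nat.lt_succ_self _
    · rw [← smul_eq_C_mul]
      refine lt_of_le_of_lt (degree_smul_le _ _) (lt_of_le_of_lt hQdeg ?_)
      exact_mod_cast (by omega : n < n + 2)
  have haI : a ∈ I := Ideal.mem_span_singleton.2 ha
  obtain ⟨ω, hω, hω1⟩ := hH.is_henselian m hm (-1) (by
      simp only [m, eval_add, eval_pow, eval_X, eval_mul, eval_C]
      have : (-1 : B) ^ (n + 2) + ((-1) ^ (n + 1) + a * eval (-1) Q) = a * eval (-1) Q := by ring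
      rw [this]; exact Ideal.mul_mem_right _ _ haI) (by
      have : Ideal.Quotient.mk I (eval (-1) (derivative m)) = Ideal.Quotient.mk I ((-1) ^ (n + 1)) := by
        rw [Ideal.Quotient.eq]
        simp only [m, derivative_add, derivative_X_pow, derivative_mul, derivative_C, eval_add, eval_mul, eval_C,
          eval_pow, eval_X, zero_mul, zero_add]
        have : ((n + 2 : ℕ) : B) * (-1) ^ (n + 2 - 1) + (((n + 1 : ℕ) : B) * (-1) ^ (n + 1 - 1) + a * eval (-1) (derivative Q)) - (-1) ^ (n + 1) = a * eval (-1) (derivative Q) := by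
          rw [show n + 2 - 1 = n + 1 by omega, show n + 1 - 1 = n by omega]
          push_cast; ring
        rw [this]
        exact Ideal.mul_mem_right _ _ haI
      rw [this]
      exact ((isUnit_one.neg).pow _).map _)
  have hωu : IsUnit ω := by
    rw [PowerSeries.isUnit_iff_constantCoeff]
    obtain ⟨c, hc⟩ := Ideal.mem_span_singleton.1 hω1
    have : ω = -1 + PowerSeries.X * c := by rw [← hc]; ring
    rw [this]; simp
  obtain ⟨η, hη⟩ := hωu.exists_right_inv
  refine ⟨η, ?_⟩
  have h0 : ω ^ (n + 2) + (ω ^ (n + 1) + a * eval ω Q) = 0 := by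
    have := hω; simp only [IsRoot.def, m, eval_add, eval_pow, eval_X, eval_mul, eval_C] at this
    exact this
  have hQ : eval ω Q * η ^ n = R.eval (e * a * η) := by
    rw [eval_eq_sum_range (p := R)]
    simp only [Q]
    rw [eval_finset_sum, Finset.sum_mul]
    refine Finset.sum_congr rfl fun i hi => ?_
    simp only [eval_mul, eval_C, eval_pow, eval_X]
    have hi' : i ≤ n := by simpa [Nat.lt_succ_iff] using hi
    obtain ⟨k, hk⟩ := Nat.exists_eq_add_of_le hi'
    rw [hk, Nat.add_sub_cancel_left, pow_add]
    have : ω ^ k * η ^ k = 1 := by rw [← mul_pow, hη, one_pow]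
    calc R.coeff i * (e * a) ^ i * ω ^ k * (η ^ i * η ^ k)
        = R.coeff i * ((e * a) ^ i * η ^ i) * (ω ^ k * η ^ k) := by ring
      _ = _ := by rw [this, mul_one, ← mul_pow]
  have h1 : ω ^ n * η ^ n = 1 := by rw [← mul_pow, hη, one_pow]
  have := congrArg (· * η ^ (n + 2)) h0
  simp only [zero_mul] at this
  rw [← this, ← hQ]
  have h2 : ω ^ (n+2) * η ^ (n+2) = 1 := by rw [← mul_pow, hη, one_pow]
  have h3 : ω ^ (n+1) * η ^ (n+1) = 1 := by rw [← mul_pow, hη, one_pow]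
  linear_combination (-1 : B) * h2 - η * h3

open Polynomial in
theorem AL_solve {E : Type*} [CommRing E] {B1 : Type*} [CommRing B1] [IsDomain B1]
    (F : E[X]) (g : E) {m : ℕ} (G : Fin m → E[X]) (η : E →+* PowerSeries B1)
    (θ P H w : PowerSeries B1) (Y L : Fin m → PowerSeries B1) (hP0 : P ≠ 0) (hXP : PowerSeries.X ∣ P)
    (hw : IsUnit w) (hF : F.eval₂ η θ = P ^ 3 * H)
    (hF' : PowerSeries.X * (derivative F).eval₂ η θ * η g = P * w)
    (hG : ∀ i, (G i).eval₂ η θ - Y i * η g = P ^ 3 * L i) :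
    ∃ θ' : PowerSeries B1, F.eval₂ η θ' = 0 ∧ η g ≠ 0 ∧ ∀ i, η g ∣ (G i).eval₂ η θ' := by
  have hg0 : η g ≠ 0 := by
    intro h
    rw [h, mul_zero] at hF'
    exact mul_ne_zero hP0 hw.ne_zero hF'.symm
  obtain ⟨w', hw'⟩ := hw.exists_right_inv
  obtain ⟨R, hR⟩ := taylor2 (F.map η) θ
  simp only [derivative_map, eval_map] at hR
  set δ := (derivative F).eval₂ η θ with hδ
  let κ := η g * PowerSeries.X * w'
  have hPκ : P = δ * κ := by
    simp only [κ]; linear_combination (-P) * hw' - w' * hF'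
  let a := κ ^ 2 * P * H
  have hFa : F.eval₂ η θ = δ ^ 2 * a := by
    rw [hF]; simp only [a]
    calc P ^ 3 * H = P ^ 2 * P * H := by ring
      _ = (δ * κ) ^ 2 * P * H := by rw [← hPκ]
      _ = _ := by ring
  obtain ⟨ε, hε⟩ := hensel_nonmonic a δ (by
    simp only [a]; exact Dvd.dvd.mul_right (Dvd.dvd.mul_left hXP _) _) R
  have hgP : η g ∣ P := ⟨δ * PowerSeries.X * w', by rw [hPκ]; simp only [κ]; ring⟩
  refine ⟨θ + δ * a * ε, ?_, hg0, fun i => ?_⟩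
  · rw [hR, hFa]
    linear_combination δ ^ 2 * a * hε
  · obtain ⟨q, hq⟩ := evalSubFactor ((G i).map η) (θ + δ * a * ε) θ
    simp only [eval_map] at hq
    have h1 : (G i).eval₂ η (θ + δ * a * ε) = q * (δ * a * ε) + Y i * η g + P ^ 3 * L i := by
      rw [← hG i]; linear_combination hq
    rw [h1]
    refine dvd_add (dvd_add ?_ (Dvd.intro_left _ rfl)) (Dvd.dvd.mul_right (dvd_pow hgP (by norm_num)) _)
    refine Dvd.dvd.mul_left (Dvd.dvd.mul_right (Dvd.dvd.mul_left ?_ _) _) _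
    simp only [a]
    exact Dvd.dvd.mul_right (Dvd.dvd.mul_left hgP _) _

end

section

open Polynomial in
theorem AL_step {C : Type u} [CommRing C] [IsDomain C] {ι : Type u} [Finite ι]
    (z : ι → C) (F : (MvPolynomial ι ℤ)[X])
    (g : MvPolynomial ι ℤ) (θ : C) (m : ℕ) (G : Fin m → (MvPolynomial ι ℤ)[X]) (Y : Fin m → C)
    (h3 : F.eval₂ (MvPolynomial.aeval z : MvPolynomial ι ℤ →ₐ[ℤ] C).toRingHom θ = 0)
    (h4 : MvPolynomial.aeval z g ≠ 0)
    (h5 : ∀ i, MvPolynomial.aeval z g * Y i =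
        (G i).eval₂ (MvPolynomial.aeval z : MvPolynomial ι ℤ →ₐ[ℤ] C).toRingHom θ)
    (h6 : Algebra.adjoin ℤ (Set.range Y) = ⊤)
    (h7 : ∀ W : (MvPolynomial ι ℤ)[X],
        W.eval₂ (MvPolynomial.aeval z : MvPolynomial ι ℤ →ₐ[ℤ] C).toRingHom θ = 0 → F ∣ W)
    {A1 : Type v} [CommRing A1] [IsDomain A1] [IsLocalRing A1]
    [IsAdicComplete (IsLocalRing.maximalIdeal A1) A1]
    (τ : C →+* PowerSeries A1)
    (hres : (τ ((derivative F).eval₂ (MvPolynomial.aeval z : MvPolynomial ι ℤ →ₐ[ℤ] C).toRingHom θ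
      * MvPolynomial.aeval z g)).map (IsLocalRing.residue A1) ≠ 0)
    (S : Set ι) (zz : ι → A1[X]) (hzz : ∀ i ∈ S, τ (z i) = (zz i : PowerSeries A1)) :
    ∃ T : Set A1[X], T.Finite ∧ ∀ (C1 : Subalgebra ℤ A1), (∀ p ∈ T, ∀ n, p.coeff n ∈ C1) →
      ∀ {B1 : Type w} [CommRing B1] [IsDomain B1] (φ : C1 →+* B1),
      ∃ ψ : C →+* PowerSeries B1, ∀ i ∈ S, ∀ w : C1[X],
        w.map (C1.val : C1 →+* A1) = zz i → ψ (z i) = ((w.map φ : B1[X]) : PowerSeries B1) := by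
  classical
  set ev : MvPolynomial ι ℤ →+* C := (MvPolynomial.aeval z : MvPolynomial ι ℤ →ₐ[ℤ] C).toRingHom with hev
  have hevX : ∀ i, ev (MvPolynomial.X i) = z i := fun i => by simp [hev]
  have hevg : MvPolynomial.aeval z g = ev g := rfl
  rw [hevg] at h4 hres
  simp only [hevg] at h5
  set δ := τ ((derivative F).eval₂ ev θ * ev g) with hδ
  let co : A1[X] →+* PowerSeries A1 := coeToPowerSeries.ringHom
  have hco : ∀ p, co p = (p : PowerSeries A1) := fun p => rfl
  have hcoinj : Function.Injective co := fun p q h => by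
    exact Polynomial.coe_injective A1 h
  obtain ⟨P, u, hPu⟩ := PowerSeries.exists_isWeierstrassFactorization (g := PowerSeries.X * δ) (by
    rw [map_mul, PowerSeries.map_X]
    exact mul_ne_zero PowerSeries.X_ne_zero hres)
  have hPd := hPu.isDistinguishedAt
  have hP3d : (P ^ 3).IsDistinguishedAt (IsLocalRing.maximalIdeal A1) := by
    have := (hPd.mul hPd).mul hPd
    rwa [← pow_two, ← pow_succ] at this
  have happ : ∀ a : PowerSeries A1, ∃ p : A1[X], co (P ^ 3) ∣ co p - a := by
    intro a
    obtain ⟨q, hq⟩ := hP3d.algEquivQuotient.surjective (Ideal.Quotient.mk _ a)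
    obtain ⟨p, rfl⟩ := Ideal.Quotient.mk_surjective q
    refine ⟨p, ?_⟩
    rw [← Ideal.mem_span_singleton, ← Ideal.Quotient.eq]
    exact hq
  have hdiv : ∀ {Q : A1[X]}, Q.IsDistinguishedAt (IsLocalRing.maximalIdeal A1) → ∀ q, co Q ∣ co q → Q ∣ q := by
    intro Q hQ q hq
    rw [← Ideal.mem_span_singleton, ← Ideal.Quotient.eq_zero_iff_mem]
    apply hQ.algEquivQuotient.injective
    rw [map_zero]
    refine Eq.trans (b := Ideal.Quotient.mk _ (co q)) rfl ?_
    rw [Ideal.Quotient.eq_zero_iff_mem, Ideal.mem_span_singleton]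
    exact hq
  choose ap hap using happ
  let zh : ι → A1[X] := fun i => if i ∈ S then zz i else ap (τ (z i))
  let θh := ap (τ θ)
  let Yh := fun i => ap (τ (Y i))
  let evz : MvPolynomial ι ℤ →+* A1[X] := (MvPolynomial.aeval zh : MvPolynomial ι ℤ →ₐ[ℤ] A1[X]).toRingHom
  have hevzX : ∀ i, evz (MvPolynomial.X i) = zh i := fun i => by simp [evz]
  let mk := Ideal.Quotient.mk (Ideal.span {co (P ^ 3)})
  have hmk : ∀ a b, mk a = mk b ↔ co (P ^ 3) ∣ a - b := fun a b => by
    rw [Ideal.Quotient.eq, Ideal.mem_span_singleton]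
  have hz : (mk.comp co).comp evz = (mk.comp τ).comp ev := by
    refine MvPolynomial.ringHom_ext (by intro r; simp) fun i => ?_
    simp only [RingHom.comp_apply, hevzX, hevX]
    by_cases hi : i ∈ S
    · simp only [zh, if_pos hi, hzz i hi]; rfl
    · simp only [zh, if_neg hi]; exact (hmk _ _).2 (hap _)
  have hcong : ∀ W : (MvPolynomial ι ℤ)[X], co (P ^ 3) ∣ co (W.eval₂ evz θh) - τ (W.eval₂ ev θ) := by
    intro W
    rw [← hmk]
    have h1 : mk (co (W.eval₂ evz θh)) = W.eval₂ ((mk.comp co).comp evz) (mk (co θh)) := by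
      rw [hom_eval₂, hom_eval₂]; rfl
    have h2 : mk (τ (W.eval₂ ev θ)) = W.eval₂ ((mk.comp τ).comp ev) (mk (τ θ)) := by
      rw [hom_eval₂, hom_eval₂]; rfl
    rw [h1, h2, hz, (hmk _ _).2 (hap _)]
  obtain ⟨H, hH⟩ : P ^ 3 ∣ F.eval₂ evz θh := by
    refine hdiv hP3d _ ?_
    have := hcong F
    rwa [h3, map_zero, sub_zero] at this
  have hL : ∀ i, P ^ 3 ∣ (G i).eval₂ evz θh - Yh i * evz g := by
    intro i
    refine hdiv hP3d _ ?_
    have h1 := (hmk _ _).2 (hcong (G i))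
    have h2 : mk (co (evz g)) = mk (τ (ev g)) := by
      have := hcong (Polynomial.C g); rw [eval₂_C, eval₂_C] at this; exact (hmk _ _).2 this
    have h3' : mk (co (Yh i)) = mk (τ (Y i)) := (hmk _ _).2 (hap _)
    rw [← sub_zero (co (_ - _)), ← hmk, map_zero, map_sub, map_sub, map_mul, map_mul, h1, h2, h3', ← h5]
    simp [mul_comm]
  choose L hL using hL
  have hPco : co P * u = PowerSeries.X * δ := hPu.eq_mul.symm
  obtain ⟨r, hr⟩ := hcong (derivative F * Polynomial.C g)
  rw [eval₂_mul, eval₂_mul, eval₂_C, eval₂_C, ← hδ] at hr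
  have hcoX : co X = PowerSeries.X := by rw [hco, Polynomial.coe_X]
  have hXD : co (X * (derivative F).eval₂ evz θh * evz g) = co P * (u + PowerSeries.X * (co P) ^ 2 * r) := by
    rw [mul_assoc, map_mul, hcoX, sub_eq_iff_eq_add.1 hr, mul_add, mul_add, hPco, map_pow]; ring
  obtain ⟨uh, huh⟩ : P ∣ X * (derivative F).eval₂ evz θh * evz g := hdiv hPd _ ⟨_, hXD⟩
  have hcoP0 : co P ≠ 0 := by
    rw [Ne, ← map_zero co]; exact fun h => hPd.monic.ne_zero (hcoinj h)
  have huh1 : co uh = u + PowerSeries.X * (co P) ^ 2 * r := by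
    rw [huh, map_mul] at hXD
    exact mul_left_cancel₀ hcoP0 hXD
  have huh0 : uh.coeff 0 = PowerSeries.constantCoeff u := by
    have := congrArg PowerSeries.constantCoeff huh1
    simp only [map_add, map_mul, PowerSeries.constantCoeff_X, zero_mul, add_zero] at this
    rw [← this, hco]; simp
  have hu0 : IsUnit (uh.coeff 0) := by
    rw [huh0]; exact PowerSeries.isUnit_iff_constantCoeff.1 hPu.isUnit
  obtain ⟨v, hv⟩ := hu0.exists_right_inv
  have hP0 : P.coeff 0 = 0 := by
    have := congrArg PowerSeries.constantCoeff hPco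
    simp only [map_mul, PowerSeries.constantCoeff_X, zero_mul, hco] at this
    have h := (mul_eq_zero.1 this).resolve_right (PowerSeries.isUnit_iff_constantCoeff.1 hPu.isUnit).ne_zero
    simpa using h
  refine ⟨{P, H, uh, Polynomial.C v, θh} ∪ (Set.range zh ∪ Set.range Yh ∪ Set.range L), ?_, ?_⟩
  · exact (Set.toFinite _).union (((Set.finite_range _).union (Set.finite_range _)).union (Set.finite_range _))
  intro C1 hC1 B1 _ _ φ
  have hlift : ∀ p ∈ ({P, H, uh, Polynomial.C v, θh} ∪ (Set.range zh ∪ Set.range Yh ∪ Set.range L) : Set A1[X]),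
      ∃ q : C1[X], q.map (C1.val : C1 →+* A1) = p := by
    intro p hp
    rw [← mem_lifts, lifts_iff_coeff_lifts]
    exact fun n => ⟨⟨_, hC1 p hp n⟩, rfl⟩
  let vm : C1[X] →+* A1[X] := mapRingHom (C1.val : C1 →+* A1)
  have hvalinj : Function.Injective (C1.val : C1 →+* A1) := Subtype.val_injective
  have hvm : Function.Injective vm := Polynomial.map_injective _ hvalinj
  obtain ⟨P', hP'⟩ := hlift P (by simp)
  obtain ⟨H', hH'⟩ := hlift H (by simp)
  obtain ⟨uh', huh'⟩ := hlift uh (by simp)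
  obtain ⟨v', hv'⟩ := hlift (Polynomial.C v) (by simp)
  obtain ⟨θ', hθ'⟩ := hlift θh (by simp)
  choose z' hz' using fun i => hlift (zh i) (Or.inr (Or.inl (Or.inl ⟨i, rfl⟩)))
  choose Y' hY' using fun i => hlift (Yh i) (Or.inr (Or.inl (Or.inr ⟨i, rfl⟩)))
  choose L' hL' using fun i => hlift (L i) (Or.inr (Or.inr ⟨i, rfl⟩))
  let evz' : MvPolynomial ι ℤ →+* C1[X] := (MvPolynomial.aeval z' : MvPolynomial ι ℤ →ₐ[ℤ] C1[X]).toRingHom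
  have hevz'X : ∀ i, evz' (MvPolynomial.X i) = z' i := fun i => by simp [evz']
  have hvmev : vm.comp evz' = evz := by
    refine MvPolynomial.ringHom_ext (by intro r; simp) fun i => ?_
    simp only [RingHom.comp_apply, hevzX, hevz'X]; exact hz' i
  have hvmW : ∀ W : (MvPolynomial ι ℤ)[X], vm (W.eval₂ evz' θ') = W.eval₂ evz θh := by
    intro W; rw [hom_eval₂, hvmev]; congr 1
  have hvmg : vm (evz' g) = evz g := by rw [← RingHom.comp_apply, hvmev]
  have e1 : F.eval₂ evz' θ' = P' ^ 3 * H' := hvm (by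
    rw [hvmW, hH, map_mul, map_pow]; exact congrArg₂ (fun a b => a ^ 3 * b) hP'.symm hH'.symm)
  have e2 : X * (derivative F).eval₂ evz' θ' * evz' g = P' * uh' := hvm (by
    rw [map_mul, map_mul, hvmW, hvmg, map_mul]
    rw [show vm X = X from Polynomial.map_X _, huh]; exact congrArg₂ (· * ·) hP'.symm huh'.symm)
  have e3 : ∀ i, (G i).eval₂ evz' θ' - Y' i * evz' g = P' ^ 3 * L' i := fun i => hvm (by
    rw [map_sub, map_mul, hvmW, hvmg, map_mul, map_pow, show vm (Y' i) = Yh i from hY' i, hL]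
    exact congrArg₂ (fun a b => a ^ 3 * b) hP'.symm (hL' i).symm)
  let Φ : C1[X] →+* PowerSeries B1 := (coeToPowerSeries.ringHom).comp (mapRingHom φ)
  have hΦ : ∀ p, Φ p = ((p.map φ : B1[X]) : PowerSeries B1) := fun p => rfl
  have hΦ0 : ∀ p, PowerSeries.constantCoeff (Φ p) = φ (p.coeff 0) := fun p => by
    rw [hΦ, ← PowerSeries.coeff_zero_eq_constantCoeff_apply, Polynomial.coeff_coe, Polynomial.coeff_map]
  obtain ⟨θt, t1, t2, t3⟩ := AL_solve F g G (Φ.comp evz') (Φ θ') (Φ P') (Φ H') (Φ uh') (fun i => Φ (Y' i))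
    (fun i => Φ (L' i)) (by
      have hm : P'.Monic := by
        refine Polynomial.monic_of_injective hvalinj ?_
        rw [hP']; exact hPd.monic
      rw [hΦ]
      intro h
      have := Polynomial.coe_injective B1 (h.trans Polynomial.coe_zero.symm)
      exact (hm.map φ).ne_zero this) (by
      rw [PowerSeries.X_dvd_iff, hΦ0]
      have : P'.coeff 0 = 0 := hvalinj (by rw [← Polynomial.coeff_map, hP', hP0, map_zero])
      rw [this, map_zero]) (by
      rw [PowerSeries.isUnit_iff_constantCoeff, hΦ0]
      refine IsUnit.of_mul_eq_one (φ (v'.coeff 0)) ?_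
      rw [← map_mul]
      have : uh'.coeff 0 * v'.coeff 0 = 1 := hvalinj (by
        rw [map_mul, ← Polynomial.coeff_map, ← Polynomial.coeff_map, huh', hv', Polynomial.coeff_C_zero, hv, map_one])
      rw [this, map_one])
    (by rw [← hom_eval₂, e1, map_mul, map_pow]) (by
      rw [← hom_eval₂, RingHom.comp_apply, ← map_mul, ← e2, map_mul, map_mul]
      rw [show Φ X = PowerSeries.X by rw [hΦ]; simp]
      rfl) (fun i => by
      rw [← hom_eval₂]
      change Φ _ - Φ _ * Φ _ = _
      rw [← map_mul, ← map_sub, e3, map_mul, map_pow])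
  obtain ⟨ψ, hψ⟩ := AL_univ z F g θ m G Y h4 h5 h6 h7 (Φ.comp evz') θt t1 t2 t3
  refine ⟨ψ, fun i hi w hw => ?_⟩
  rw [hψ, RingHom.comp_apply, hevz'X, hΦ]
  have : z' i = w := hvm (by
    refine (hz' i).trans (Eq.trans ?_ hw.symm)
    simp only [zh, if_pos hi])
  rw [this]

end

section

open MvPowerSeries in
theorem mps_decomp {σ K κ : Type*} [CommRing K] [Fintype κ] (f : MvPowerSeries σ K) (m : κ → σ →₀ ℕ)
    (h : ∀ e, coeff e f ≠ 0 → ∃ i, m i ≤ e) :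
    ∃ b : κ → MvPowerSeries σ K, f = ∑ i, monomial (m i) 1 * b i := by
  classical
  by_cases hk : Nonempty κ
  swap
  · have : f = 0 := by
      ext e
      by_contra hh
      obtain ⟨i, _⟩ := h e hh
      exact hk ⟨i⟩
    refine ⟨fun _ => 0, by simp [this]⟩
  have : ∀ e, ∃ i, coeff e f ≠ 0 → m i ≤ e := by
    intro e
    by_cases he : coeff e f = 0
    · exact ⟨hk.some, fun hh => absurd he hh⟩
    · obtain ⟨i, hi⟩ := h e he
      exact ⟨i, fun _ => hi⟩
  choose c hc using this
  let b : κ → MvPowerSeries σ K := fun i e => if c (e + m i) = i then coeff (e + m i) f else 0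
  refine ⟨b, ?_⟩
  ext e
  rw [map_sum]
  simp_rw [coeff_monomial_mul]
  have hb : ∀ i e, coeff e (b i) = if c (e + m i) = i then coeff (e + m i) f else 0 := fun i e => rfl
  by_cases he : coeff e f = 0
  · rw [he, Finset.sum_eq_zero]
    intro i _
    split_ifs with hle
    · rw [hb, tsub_add_cancel_of_le hle, he]; simp
    · rfl
  · rw [Finset.sum_eq_single (c e)]
    · rw [if_pos (hc e he), hb, tsub_add_cancel_of_le (hc e he)]; simp
    · intro i _ hi
      split_ifs with hle
      · rw [hb, tsub_add_cancel_of_le hle, if_neg (Ne.symm hi)]; simp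
      · rfl
    · simp

theorem mps_maximalIdeal {K : Type*} [Field K] {σ : Type*} [Fintype σ] :
    IsLocalRing.maximalIdeal (MvPowerSeries σ K) = Ideal.span (Set.range MvPowerSeries.X) := by
  apply le_antisymm
  · intro f hf
    have h0 : MvPowerSeries.constantCoeff f = 0 := by
      by_contra hh
      exact hf (MvPowerSeries.isUnit_iff_constantCoeff.2 (isUnit_iff_ne_zero.2 hh))
    obtain ⟨b, hb⟩ := mps_decomp f (fun i : σ => Finsupp.single i 1) (by
      intro e he
      by_contra! hh
      apply he
      have : e = 0 := by
        ext i
        have := hh i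
        rw [Finsupp.single_le_iff] at this
        simpa using this
      rw [this]; exact h0)
    rw [hb]
    refine Ideal.sum_mem _ fun i _ => Ideal.mul_mem_right _ _ (Ideal.subset_span ⟨i, rfl⟩)
  · rw [Ideal.span_le]
    rintro _ ⟨i, rfl⟩
    show ¬ IsUnit _
    rw [MvPowerSeries.isUnit_iff_constantCoeff]
    simp

instance mps_complete {K : Type*} [Field K] {σ : Type*} [Fintype σ] :
    IsAdicComplete (IsLocalRing.maximalIdeal (MvPowerSeries σ K)) (MvPowerSeries σ K) := by
  rw [mps_maximalIdeal]; infer_instance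

theorem mps_residue_eq {K : Type*} [Field K] {σ : Type*} [Fintype σ] (f : MvPowerSeries σ K) :
    IsLocalRing.residue _ f = 0 ↔ MvPowerSeries.constantCoeff f = 0 := by
  rw [IsLocalRing.residue_eq_zero_iff, IsLocalRing.mem_maximalIdeal, mem_nonunits_iff,
    MvPowerSeries.isUnit_iff_constantCoeff, isUnit_iff_ne_zero, not_not]

theorem mps_algInd (d : ℕ) (K : Type*) [Field K] [CharZero K] :
    AlgebraicIndependent ℤ (fun i : Fin d => (MvPowerSeries.X i : MvPowerSeries (Fin d) K)) := by
  rw [algebraicIndependent_iff_injective_aeval]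
  have h : ∀ p : MvPolynomial (Fin d) ℤ, MvPolynomial.aeval (fun i : Fin d => (MvPowerSeries.X i : MvPowerSeries (Fin d) K)) p
     = ((MvPolynomial.map (Int.castRingHom K) p : MvPolynomial (Fin d) K) : MvPowerSeries (Fin d) K) := by
    intro p
    induction p using MvPolynomial.induction_on with
    | C a =>
      simp
      exact (map_intCast (MvPolynomial.coeToMvPowerSeries.ringHom (σ := Fin d) (R := K)) a).symm
    | add p q hp hq => simp [hp, hq]
    | mul_X p i hp => simp [hp]
  intro p q hpq
  rw [h, h] at hpq
  exact MvPolynomial.map_injective (Int.castRingHom K) (RingHom.injective_int _) (MvPolynomial.coe_injective _ _ hpq)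

end

section

open MvPowerSeries

noncomputable def linv (K : Type*) [Field K] {d : ℕ} (n : Fin d → ℤ) : Fin (d+1) → MvPowerSeries (Fin (d+1)) K :=
  Fin.cases (X 0) (fun j => X j.succ + (n j : MvPowerSeries (Fin (d+1)) K) * X 0)

theorem linv_hasSubst (K : Type*) [Field K] {d : ℕ} (n : Fin d → ℤ) : HasSubst (linv K n) := by
  apply hasSubst_of_constantCoeff_zero
  intro i
  refine Fin.cases ?_ (fun j => ?_) i <;> simp [linv]

noncomputable def linσ (K : Type*) [Field K] {d : ℕ} (n : Fin d → ℤ) :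
    MvPowerSeries (Fin (d+1)) K →ₐ[K] MvPowerSeries (Fin (d+1)) K := substAlgHom (linv_hasSubst K n)

theorem linσ_X0 (K : Type*) [Field K] {d : ℕ} (n : Fin d → ℤ) : linσ K n (X 0) = X 0 := by
  rw [linσ, substAlgHom_X]; rfl

theorem linσ_Xs (K : Type*) [Field K] {d : ℕ} (n : Fin d → ℤ) (j : Fin d) :
    linσ K n (X j.succ) = X j.succ + (n j : MvPowerSeries (Fin (d+1)) K) * X 0 := by
  rw [linσ, substAlgHom_X]; rfl

noncomputable def linρ (K : Type*) [Field K] (d : ℕ) :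
    MvPowerSeries (Fin (d+1)) K →+* PowerSeries K :=
  (PowerSeries.map (MvPowerSeries.constantCoeff (σ := Fin d) (R := K))).comp
    (MvPowerSeries.finSuccEquiv K d).toRingHom

theorem linρ_coeff (K : Type*) [Field K] (d : ℕ) (f) (N : ℕ) :
    PowerSeries.coeff N (linρ K d f) = coeff (Finsupp.single 0 N) f := by
  simp only [linρ, RingHom.comp_apply, PowerSeries.coeff_map]
  rw [← coeff_zero_eq_constantCoeff_apply]
  erw [coeff_coeff_finSuccEquiv]
  congr 1
  congr 1
  ext i
  refine Fin.cases ?_ (fun j => ?_) i <;> simp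

theorem linρ_linv (K : Type*) [Field K] {d : ℕ} (n : Fin d → ℤ) (i : Fin (d+1)) :
    linρ K d (linv K n i) = (Fin.cases 1 (fun j => (n j : K)) i : K) • PowerSeries.X := by
  have h0 : linρ K d (X 0) = PowerSeries.X := by
    simp [linρ]
  refine Fin.cases ?_ (fun j => ?_) i
  · simp [linv, h0]
  · have h1 : linρ K d (X j.succ) = 0 := by
      simp [linρ]
    simp only [linv, Fin.cases_succ, map_add, h1, map_mul, h0, zero_add, map_intCast]
    rw [PowerSeries.smul_eq_C_mul]; simp

theorem lin_exists {K : Type*} [Field K] [CharZero K] {d : ℕ} (f : MvPowerSeries (Fin (d+1)) K) (hf : f ≠ 0) :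
    ∃ n : Fin d → ℤ, linρ K d (linσ K n f) ≠ 0 := by
  classical
  obtain ⟨e0, he0⟩ : ∃ e, coeff e f ≠ 0 := by
    by_contra! h
    exact hf (by ext e; simpa using h e)
  let N := e0.degree
  let S : Finset (Fin (d+1) →₀ ℕ) := Finset.univ.finsuppAntidiag N
  have hS : ∀ e, e ∈ S ↔ e.degree = N := by
    intro e
    simp [S, Finset.mem_finsuppAntidiag, Finsupp.degree_eq_sum]
  let q : MvPolynomial (Fin d) K := ∑ e ∈ S, MvPolynomial.monomial e.tail (coeff e f)
  have hq : q ≠ 0 := by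
    intro h
    have h1 : MvPolynomial.coeff e0.tail q = coeff e0 f := by
      simp only [q, MvPolynomial.coeff_sum, MvPolynomial.coeff_monomial]
      rw [Finset.sum_eq_single e0]
      · simp
      · intro e he hne
        rw [if_neg]
        intro ht
        apply hne
        have h2 := (hS e).1 he
        have h3 : e.degree = e0.degree := h2
        rw [Finsupp.degree_eq_sum, Finsupp.degree_eq_sum, Fin.sum_univ_succ, Fin.sum_univ_succ] at h3
        have h4 : ∀ j : Fin d, e j.succ = e0 j.succ := fun j => by
          have := DFunLike.congr_fun ht j
          simpa [Finsupp.tail_apply] using this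
        simp only [h4, add_left_inj] at h3
        ext i
        exact Fin.cases h3 h4 i
      · intro h; exact absurd ((hS e0).2 rfl) h
    rw [h] at h1
    exact he0 h1.symm
  obtain ⟨n, hn⟩ : ∃ n : Fin d → ℤ, MvPolynomial.eval (fun j => (n j : K)) q ≠ 0 := by
    by_contra! h
    apply hq
    refine MvPolynomial.funext_set (fun _ => Set.range (fun n : ℤ => (n : K))) (fun _ => Set.infinite_range_of_injective Int.cast_injective) ?_
    intro x hx
    choose y hy using fun i => hx i (Set.mem_univ i)
    have := h y
    simp only [hy] at this
    simpa using this
  refine ⟨n, fun h => hn ?_⟩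
  have hc : ∀ g, coeff (Finsupp.single 0 N) g = PowerSeries.coeff N (linρ K d g) := fun g => (linρ_coeff K d g N).symm
  have h1 := linρ_coeff K d (linσ K n f) N
  rw [h, linσ, substAlgHom_apply, coeff_subst (linv_hasSubst K n)] at h1
  have h2 : ∀ e : Fin (d+1) →₀ ℕ, coeff (Finsupp.single 0 N) (e.prod fun s k => linv K n s ^ k)
      = if e.degree = N then ∏ j : Fin d, (n j : K) ^ e j.succ else 0 := by
    intro e
    rw [hc, Finsupp.prod_fintype _ _ (by simp), map_prod]
    simp_rw [map_pow, linρ_linv, smul_pow]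
    rw [Finset.prod_smul, Finset.prod_pow_eq_pow_sum, map_smul, PowerSeries.coeff_X_pow, Fin.prod_univ_succ]
    rw [Finsupp.degree_eq_sum]
    simp [eq_comm]
  simp_rw [h2] at h1
  rw [finsum_eq_sum_of_support_subset (s := S)] at h1
  · simp only [q, map_sum, MvPolynomial.eval_monomial]
    rw [map_zero] at h1
    rw [h1]
    refine Finset.sum_congr rfl fun e he => ?_
    rw [if_pos ((hS e).1 he), smul_eq_mul, Finsupp.prod_fintype _ _ (by simp)]
    simp [Finsupp.tail_apply]
  · intro e he
    rw [Finset.mem_coe, hS]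
    by_contra hh
    simp [hh] at he

end

section

open MvPowerSeries

theorem isJacobsonRing_int' : IsJacobsonRing ℤ := by
  rw [isJacobsonRing_iff_prime_eq]
  intro P hP
  by_cases h : P = ⊥
  · subst h
    rw [eq_bot_iff]
    intro x hx
    rw [Ideal.mem_jacobson_bot] at hx
    have := hx x
    rw [Int.isUnit_iff] at this
    have h2 : x = 0 := by
      rcases this with h | h <;> nlinarith
    simpa using h2
  · haveI := hP.isMaximal h
    exact Ideal.jacobson_eq_self_of_isMaximal

theorem finiteType_closure {A : Type*} [CommRing A] (s : Set A) (hs : s.Finite) :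
    Algebra.FiniteType ℤ (Subring.closure s) := by
  have h : (Algebra.adjoin ℤ s).FG := Subalgebra.fg_def.2 ⟨s, hs, rfl⟩
  rw [Algebra.adjoin_int] at h
  exact (Subalgebra.fg_iff_finiteType _).1 h

theorem transfer_zero {K : Type u} [Field K] (s : Set K) (hs : s.Finite) :
    ∃ (p : ℕ) (_ : p.Prime) (k : Type u) (_ : Field k) (_ : CharP k p), Nonempty (Subring.closure s →+* k) := by
  set C := Subring.closure s
  haveI : Algebra.FiniteType ℤ C := finiteType_closure s hs
  obtain ⟨m, hm⟩ := Ideal.exists_maximal C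
  letI : Field (C ⧸ m) := Ideal.Quotient.field m
  haveI : Algebra.FiniteType ℤ (C ⧸ m) := Algebra.FiniteType.of_surjective (Ideal.Quotient.mkₐ ℤ m) (Ideal.Quotient.mkₐ_surjective ℤ m)
  haveI := isJacobsonRing_int'
  haveI : Module.Finite ℤ (C ⧸ m) := finite_of_finite_type_of_isJacobsonRing ℤ (C ⧸ m)
  have hch : ringChar (C ⧸ m) ≠ 0 := by
    intro h
    haveI : CharP (C ⧸ m) 0 := h ▸ ringChar.charP (C ⧸ m)
    haveI : CharZero (C ⧸ m) := CharP.charP_to_charZero _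
    have : IsField ℤ := isField_of_isIntegral_of_isField (R := ℤ) (S := C ⧸ m) (FaithfulSMul.algebraMap_injective ℤ (C ⧸ m)) (Field.toIsField _)
    exact Int.not_isField this
  refine ⟨ringChar (C ⧸ m), (CharP.char_is_prime_or_zero (C ⧸ m) _).resolve_right hch, C ⧸ m, inferInstance, ringChar.charP _, ⟨Ideal.Quotient.mk m⟩⟩

open Polynomial in
theorem AL_step' {C : Type u} [CommRing C] [IsDomain C] {ι : Type u} [Finite ι]
    (z : ι → C) (F : (MvPolynomial ι ℤ)[X])
    (g : MvPolynomial ι ℤ) (θ : C) (m : ℕ) (G : Fin m → (MvPolynomial ι ℤ)[X]) (Y : Fin m → C)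
    (h3 : F.eval₂ (MvPolynomial.aeval z : MvPolynomial ι ℤ →ₐ[ℤ] C).toRingHom θ = 0)
    (h4 : MvPolynomial.aeval z g ≠ 0)
    (h5 : ∀ i, MvPolynomial.aeval z g * Y i =
        (G i).eval₂ (MvPolynomial.aeval z : MvPolynomial ι ℤ →ₐ[ℤ] C).toRingHom θ)
    (h6 : Algebra.adjoin ℤ (Set.range Y) = ⊤)
    (h7 : ∀ W : (MvPolynomial ι ℤ)[X],
        W.eval₂ (MvPolynomial.aeval z : MvPolynomial ι ℤ →ₐ[ℤ] C).toRingHom θ = 0 → F ∣ W)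
    {A1 : Type v} [CommRing A1] [IsDomain A1] [IsLocalRing A1]
    [IsAdicComplete (IsLocalRing.maximalIdeal A1) A1]
    (τ : C →+* PowerSeries A1)
    (hres : (τ ((derivative F).eval₂ (MvPolynomial.aeval z : MvPolynomial ι ℤ →ₐ[ℤ] C).toRingHom θ
      * MvPolynomial.aeval z g)).map (IsLocalRing.residue A1) ≠ 0)
    (S : Set ι) (zz : ι → A1[X]) (hzz : ∀ i ∈ S, τ (z i) = (zz i : PowerSeries A1)) :
    ∃ T : Set A1, T.Finite ∧ ∀ (C1 : Subring A1), T ⊆ C1 →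
      ∀ {B1 : Type w} [CommRing B1] [IsDomain B1] (φ : C1 →+* B1),
      ∃ ψ : C →+* PowerSeries B1, ∀ i ∈ S, ∀ w : C1[X],
        w.map C1.subtype = zz i → ψ (z i) = ((w.map φ : B1[X]) : PowerSeries B1) := by
  obtain ⟨T, hT, H⟩ := AL_step z F g θ m G Y h3 h4 h5 h6 h7 τ hres S zz hzz
  refine ⟨⋃ p ∈ T, (p.coeffs : Set A1), hT.biUnion (fun p _ => Finset.finite_toSet _), ?_⟩
  intro C1 hC1 B1 _ _ φ
  refine H (subalgebraOfSubring C1) ?_ φ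
  intro p hp n
  by_cases h0 : p.coeff n = 0
  · rw [h0]; exact zero_mem _
  · exact hC1 (Set.mem_biUnion hp (Polynomial.coeff_mem_coeffs h0))

theorem poly_coe_int {R : Type*} [CommRing R] (n : ℤ) :
    (((n : Polynomial R)) : PowerSeries R) = n :=
  map_intCast (Polynomial.coeToPowerSeries.ringHom (R := R)) n

set_option maxHeartbeats 1000000 in
theorem transfer (d : ℕ) : ∀ (K : Type u) [Field K] (s : Set (MvPowerSeries (Fin d) K)) (hs : s.Finite)
    (C : Subring (MvPowerSeries (Fin d) K)) (hC : C = Subring.closure s)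
    (hX : ∀ i, X i ∈ C), ∃ (p : ℕ) (_ : p.Prime) (k : Type u) (_ : Field k) (_ : CharP k p)
      (ψ : C →+* MvPowerSeries (Fin d) k), ∀ i, ψ ⟨X i, hX i⟩ = X i := by
  induction d with
  | zero =>
    intro K _ s hs C hC hX
    let e : MvPowerSeries (Fin 0) K →+* K := (constantCoeff (σ := Fin 0) (R := K))
    obtain ⟨p, hp, k, _, _, ⟨φ⟩⟩ := transfer_zero (e '' s) (hs.image _)
    have hm : C ≤ (Subring.closure (e '' s)).comap e := by
      rw [hC, Subring.closure_le]
      intro x hx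
      exact Subring.subset_closure ⟨x, hx, rfl⟩
    refine ⟨p, hp, k, inferInstance, inferInstance, ((MvPowerSeries.C (σ := Fin 0) (R := k)).comp φ).comp
      (e.restrict C _ hm), fun i => i.elim0⟩
  | succ d ih =>
    intro K _ s hs C hC hX
    by_cases hch : ringChar K = 0
    swap
    · refine ⟨ringChar K, (CharP.char_is_prime_or_zero K _).resolve_right hch, K, inferInstance, ringChar.charP _,
        C.subtype, fun i => rfl⟩
    haveI : CharP K 0 := hch ▸ ringChar.charP K
    haveI : CharZero K := CharP.charP_to_charZero _
    haveI : CharZero (MvPowerSeries (Fin (d+1)) K) := charZero_of_injective_algebraMap (FaithfulSMul.algebraMap_injective K _)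
    haveI : Algebra.FiniteType ℤ C := hC ▸ finiteType_closure s hs
    have hx : AlgebraicIndependent ℤ (fun i : Fin (d+1) => (⟨X i, hX i⟩ : C)) := by
      have h1 := mps_algInd (d+1) K
      rw [algebraicIndependent_iff] at h1 ⊢
      intro p hp
      apply h1
      have h2 := congrArg C.subtype hp
      rw [map_zero] at h2
      rw [← h2]
      rw [MvPolynomial.aeval_def, MvPolynomial.aeval_def, MvPolynomial.eval₂_comp_left]
      congr 1
      exact RingHom.ext_int _ _
    haveI : IsDomain (MvPowerSeries (Fin (d+1)) K) := NoZeroDivisors.to_isDomain _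
    haveI : IsDomain (MvPowerSeries (Fin d) K) := NoZeroDivisors.to_isDomain _
    haveI : IsDomain C := inferInstance
    haveI : CharZero C := inferInstance
    obtain ⟨ι, hι, z, j, F, g, θ, m, G, Y, hj, h2, h3, h3', h4, h5, h6, h7⟩ := AL_exists _ hx
    set δ : C := ((Polynomial.derivative F).eval₂ (MvPolynomial.aeval z : MvPolynomial ι ℤ →ₐ[ℤ] C).toRingHom θ
      * MvPolynomial.aeval z g : C) with hδ
    obtain ⟨n, hn⟩ := lin_exists (K := K) (d := d) (δ : MvPowerSeries (Fin (d+1)) K) (by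
        intro h
        rw [ZeroMemClass.coe_eq_zero] at h
        exact mul_ne_zero h3' h4 h)
    let τ : C →+* PowerSeries (MvPowerSeries (Fin d) K) :=
      ((MvPowerSeries.finSuccEquiv K d).toRingHom.comp (linσ K n).toRingHom).comp C.subtype
    let zw : Fin (d+1) → Polynomial (MvPowerSeries (Fin d) K) :=
      Fin.cases Polynomial.X (fun i => Polynomial.C (X i) + (n i : Polynomial (MvPowerSeries (Fin d) K)) * Polynomial.X)
    let zz : ι → Polynomial (MvPowerSeries (Fin d) K) := fun i => Function.extend j zw 0 i
    have hzz : ∀ i, zz (j i) = zw i := fun i => hj.extend_apply _ _ _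
    have hτ : ∀ i, τ (z (j i)) = (zw i : PowerSeries (MvPowerSeries (Fin d) K)) := by
      intro i
      rw [h2]
      simp only [τ, RingHom.comp_apply]
      refine Fin.cases ?_ (fun i => ?_) i
      · simp [linσ_X0, zw]
      · simp [linσ_Xs, zw, poly_coe_int]
    obtain ⟨T, hT, H⟩ := AL_step' z F g θ m G Y h3 h4 h5 h6 h7 τ (by
      rw [← hδ]
      intro h
      apply hn
      ext N
      have h8 := congrArg (PowerSeries.coeff N) h
      simp only [PowerSeries.coeff_map, map_zero, mps_residue_eq] at h8
      simpa [linρ, τ] using h8) (Set.range j) zz (by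
        rintro _ ⟨i, rfl⟩
        rw [hτ, hzz])
    let C1 := Subring.closure (T ∪ Set.range X)
    have hX1 : ∀ i, X i ∈ C1 := fun i => Subring.subset_closure (Or.inr ⟨i, rfl⟩)
    obtain ⟨p, hp, k, _, _, φ, hφ⟩ := ih K (T ∪ Set.range X) (hT.union (Set.finite_range _)) C1 rfl hX1
    haveI : IsDomain (MvPowerSeries (Fin d) k) := NoZeroDivisors.to_isDomain _
    obtain ⟨ψ, hψ⟩ := H C1 (fun t ht => Subring.subset_closure (Or.inl ht)) φ
    refine ⟨p, hp, k, inferInstance, inferInstance,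
      ((linσ k (fun i => - n i)).toRingHom.comp (MvPowerSeries.finSuccEquiv k d).symm.toRingHom).comp ψ, ?_⟩
    let w : Fin (d+1) → Polynomial C1 :=
      Fin.cases Polynomial.X (fun i => Polynomial.C ⟨X i, hX1 i⟩ + (n i : Polynomial C1) * Polynomial.X)
    intro i
    rw [← h2]
    simp only [RingHom.comp_apply]
    rw [hψ (j i) ⟨i, rfl⟩ (w i) (by
      rw [hzz]
      refine Fin.cases ?_ (fun i => ?_) i <;> simp [w, zw])]
    have e0 : (MvPowerSeries.finSuccEquiv k d).symm PowerSeries.X = X 0 := by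
      rw [AlgEquiv.symm_apply_eq, finSuccEquiv_X_zero]
    have e1 : ∀ i, (MvPowerSeries.finSuccEquiv k d).symm (PowerSeries.C (X i)) = X i.succ := by
      intro i
      rw [AlgEquiv.symm_apply_eq, finSuccEquiv_X_succ]
    refine Fin.cases ?_ (fun i => ?_) i
    · simp [w, e0, linσ_X0]
    · simp [w, hφ, e0, e1, linσ_X0, linσ_Xs, poly_coe_int]

end

section

section
variable {k S M : Type*} [CommRing k] [CommRing S] [Algebra k S] [AddCommGroup M] [Module k M] [Module S M]
  [IsScalarTower k S M]

theorem len_step (J : Ideal S) (W : Submodule S M) (m : M) (hm : ∀ a ∈ J, a • m ∈ W) :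
    Module.length k (M ⧸ W) ≤ Module.length k (S ⧸ J) + Module.length k (M ⧸ (W ⊔ Submodule.span S {m})) := by
  let g : S ⧸ J →ₗ[S] M ⧸ W := Submodule.liftQ J (LinearMap.toSpanSingleton S (M ⧸ W) (W.mkQ m)) (by
    intro a ha
    rw [LinearMap.mem_ker, LinearMap.toSpanSingleton_apply, ← map_smul, Submodule.mkQ_apply, Submodule.Quotient.mk_eq_zero]
    exact hm a ha)
  have hle0 : W ≤ W ⊔ Submodule.span S {m} := le_sup_left
  let π : M ⧸ W →ₗ[S] M ⧸ (W ⊔ Submodule.span S {m}) := Submodule.factor hle0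
  have hπ : Function.Surjective (π.restrictScalars k) := Submodule.factor_surjective hle0
  rw [Module.length_eq_add_of_exact (LinearMap.ker (π.restrictScalars k)).subtype (π.restrictScalars k)
    (Submodule.subtype_injective _) hπ (LinearMap.exact_subtype_ker_map _)]
  gcongr
  have hle : LinearMap.ker (π.restrictScalars k) ≤ LinearMap.range (g.restrictScalars k) := by
    intro y hy
    obtain ⟨y, rfl⟩ := Submodule.mkQ_surjective W y
    have h1 : y ∈ W ⊔ Submodule.span S {m} := by
      have : π (W.mkQ y) = 0 := hy
      simpa [π] using this
    obtain ⟨w, hw, z, hz, rfl⟩ := Submodule.mem_sup.1 h1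
    obtain ⟨a, rfl⟩ := Submodule.mem_span_singleton.1 hz
    refine ⟨J.mkQ a, ?_⟩
    show g (Submodule.mkQ J a) = _
    have : W.mkQ w = 0 := by simpa using hw
    rw [map_add, this, zero_add]
    simp only [g, Submodule.mkQ_apply, Submodule.liftQ_apply, LinearMap.toSpanSingleton_apply, map_smul]
  calc Module.length k (LinearMap.ker (π.restrictScalars k)) ≤ Module.length k (LinearMap.range (g.restrictScalars k)) :=
        Module.length_le_of_injective (Submodule.inclusion hle) (Submodule.inclusion_injective hle)
    _ ≤ _ := Module.length_le_of_surjective (g.restrictScalars k).rangeRestrict (LinearMap.surjective_rangeRestrict _)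

theorem len_chain (J : Ideal S) (h : ℕ) : ∀ (W : Submodule S M) (u : Fin h → M)
    (hu : ∀ a ∈ J, ∀ j, a • u j ∈ W ⊔ Submodule.span S (u '' {i | i < j})),
    Module.length k (M ⧸ W) ≤ h * Module.length k (S ⧸ J) + Module.length k (M ⧸ (W ⊔ Submodule.span S (Set.range u))) := by
  induction h with
  | zero =>
    intro W u hu
    have : Set.range u = ∅ := Set.range_eq_empty u
    rw [this, Submodule.span_empty, sup_bot_eq]
    simp
  | succ h ih =>
    intro W u hu
    have h1 := len_step (k := k) J W (u 0) (by
      intro a ha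
      have := hu a ha 0
      simpa using this)
    have h2 := ih (W ⊔ Submodule.span S {u 0}) (fun j => u j.succ) (by
      intro a ha j
      have := hu a ha j.succ
      have hh : u '' {i | i < j.succ} ⊆ {u 0} ∪ ((fun j => u (Fin.succ j)) '' {i | i < j}) := by
        rintro _ ⟨i, hi, rfl⟩
        induction i using Fin.cases with
        | zero => left; rfl
        | succ i => right; exact ⟨i, by simpa using hi, rfl⟩
      refine SetLike.le_def.1 (sup_le (le_sup_left.trans le_sup_left) ((Submodule.span_mono hh).trans ?_)) this
      rw [Submodule.span_union]
      exact sup_le (le_sup_right.trans le_sup_left) le_sup_right)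
    have hr : W ⊔ Submodule.span S {u 0} ⊔ Submodule.span S (Set.range fun j : Fin h => u j.succ) = W ⊔ Submodule.span S (Set.range u) := by
      rw [sup_assoc, ← Submodule.span_union]
      congr 2
      ext y
      constructor
      · rintro (rfl | ⟨j, rfl⟩)
        exacts [⟨0, rfl⟩, ⟨j.succ, rfl⟩]
      · rintro ⟨j, rfl⟩
        induction j using Fin.cases with
        | zero => left; rfl
        | succ i => right; exact ⟨i, rfl⟩
    rw [hr] at h2
    refine h1.trans ((add_le_add_right h2 _).trans (le_of_eq ?_))
    push_cast
    ring

theorem len_gen (J : Ideal S) (h : ℕ) (W : Submodule S M) (u : Fin h → M)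
    (hu : ∀ a ∈ J, ∀ j, a • u j ∈ W) (ht : W ⊔ Submodule.span S (Set.range u) = ⊤) :
    Module.length k (M ⧸ W) ≤ h * Module.length k (S ⧸ J) := by
  have := len_chain (k := k) J h W u (fun a ha j => Submodule.mem_sup_left (hu a ha j))
  rw [ht] at this
  have h0 : Module.length k (M ⧸ (⊤ : Submodule S M)) = 0 := Module.length_eq_zero
  rwa [h0, add_zero] at this
end

section
open MvPowerSeries
variable {k : Type*} [Field k] {d : ℕ}

noncomputable def xI (k : Type*) [Field k] {d : ℕ} (s : Fin d → ℕ) : Ideal (MvPowerSeries (Fin d) k) :=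
  Ideal.span (Set.range fun i => X i ^ s i)

theorem mem_xI (s : Fin d → ℕ) (f : MvPowerSeries (Fin d) k) :
    f ∈ xI k s ↔ ∀ e : Fin d →₀ ℕ, (∀ i, e i < s i) → coeff e f = 0 := by
  classical
  constructor
  · intro hf e he
    rw [xI, Ideal.mem_span_range_iff_exists_fun] at hf
    obtain ⟨b, rfl⟩ := hf
    rw [map_sum]
    refine Finset.sum_eq_zero fun i _ => ?_
    rw [X_pow_eq, coeff_mul_monomial, if_neg]
    intro h
    rw [Finsupp.single_le_iff] at h
    exact absurd (he i) (not_lt.2 h)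
  · intro hf
    obtain ⟨b, hb⟩ := mps_decomp f (fun i : Fin d => Finsupp.single i (s i)) (by
      intro e he
      by_contra! hh
      apply he
      apply hf
      intro i
      have := hh i
      rw [Finsupp.single_le_iff] at this
      simpa using this)
    rw [hb]
    refine Ideal.sum_mem _ fun i _ => Ideal.mul_mem_right _ _ (Ideal.subset_span ⟨i, ?_⟩)
    exact X_pow_eq _ _

theorem len_xI_le (s : Fin d → ℕ) : Module.length k (MvPowerSeries (Fin d) k ⧸ xI k s) ≤ (∏ i, s i : ℕ) := by
  let g0 : MvPowerSeries (Fin d) k →ₗ[k] ((∀ i, Fin (s i)) → k) :=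
    LinearMap.pi fun b => coeff (Finsupp.equivFunOnFinite.symm fun i => (b i : ℕ))
  have hk : ∀ f, g0 f = 0 ↔ f ∈ xI k s := by
    intro f
    rw [mem_xI]
    constructor
    · intro h e he
      have := congrFun h (fun i => ⟨e i, he i⟩)
      have h2 : (Finsupp.equivFunOnFinite.symm fun i => e i) = e := by ext; simp
      simpa [g0, h2] using this
    · intro h
      ext b
      exact h _ (fun i => by simp)
  let g : (MvPowerSeries (Fin d) k ⧸ (xI k s).restrictScalars k) →ₗ[k] ((∀ i, Fin (s i)) → k) :=
    Submodule.liftQ _ g0 (by intro f hf; exact (hk f).2 hf)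
  have hg : Function.Injective g := by
    rw [← LinearMap.ker_eq_bot]
    apply Submodule.ker_liftQ_eq_bot
    intro f hf
    exact (hk f).1 hf
  rw [← (Submodule.Quotient.restrictScalarsEquiv k (xI k s)).length_eq]
  refine (Module.length_le_of_injective g hg).trans ?_
  rw [Module.length_pi, Module.length_eq_one, mul_one]
  simp

abbrev box {d : ℕ} (s : Fin d → ℕ) (α : Fin d →₀ ℕ) := ∀ i, Fin (s i - α i)

noncomputable def g0 (k : Type*) [Field k] {d : ℕ} (s : Fin d → ℕ) (α : Fin d →₀ ℕ) : (box s α → k) →ₗ[k] MvPowerSeries (Fin d) k :=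
  Fintype.linearCombination k (fun b => monomial (Finsupp.equivFunOnFinite.symm fun i => (b i : ℕ)) (1:k))

theorem g0_key (s : Fin d → ℕ) (α : Fin d →₀ ℕ) (c : MvPowerSeries (Fin d) k) (hα : lexOrder c = toLex α)
    (w : box s α → k) (h : c * g0 k s α w ∈ xI k s) : w = 0 := by
  classical
  have hc : ∀ b : box s α, coeff (Finsupp.equivFunOnFinite.symm fun i => (b i : ℕ)) (g0 k s α w) = w b := by
    intro b
    simp only [g0, Fintype.linearCombination_apply, map_sum, map_smul, coeff_monomial]
    rw [Finset.sum_eq_single b]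
    · simp
    · intro b' _ hb
      rw [if_neg]
      · simp
      · intro hh
        apply hb
        ext i
        have := DFunLike.congr_fun hh i
        simpa using this.symm
    · simp
  by_cases hz : g0 k s α w = 0
  · ext b
    rw [← hc b, hz]; simp
  exfalso
  obtain ⟨a, ha⟩ := exists_finsupp_eq_lexOrder_of_ne_zero hz
  have hne := coeff_ne_zero_of_lexOrder ha.symm
  have hbox : ∀ i, a i < s i - α i := by
    simp only [g0, Fintype.linearCombination_apply, map_sum, map_smul, coeff_monomial] at hne
    obtain ⟨b, _, hb⟩ := Finset.exists_ne_zero_of_sum_ne_zero hne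
    have : a = Finsupp.equivFunOnFinite.symm fun i => (b i : ℕ) := by
      by_contra hh
      rw [if_neg hh] at hb
      simp at hb
    intro i
    rw [this]
    exact (b i).2
  have h2 := (mem_xI s _).1 h (α + a) (fun i => by
    have := hbox i
    simp; omega)
  rw [coeff_mul_of_add_lexOrder hα ha] at h2
  exact mul_ne_zero (coeff_ne_zero_of_lexOrder hα.symm) hne h2

theorem len_c_xI_le (s : Fin d → ℕ) (α : Fin d →₀ ℕ) (c : MvPowerSeries (Fin d) k) (hα : lexOrder c = toLex α) :
    Module.length k (MvPowerSeries (Fin d) k ⧸ (Ideal.span {c} ⊔ xI k s)) ≤ (∏ i, s i - ∏ i, (s i - α i) : ℕ) := by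
  have hle0 : xI k s ≤ Ideal.span {c} ⊔ xI k s := le_sup_right
  let π : (MvPowerSeries (Fin d) k ⧸ xI k s) →ₗ[k] (MvPowerSeries (Fin d) k ⧸ (Ideal.span {c} ⊔ xI k s)) :=
    (Submodule.factor hle0).restrictScalars k
  have hπ : Function.Surjective π := Submodule.factor_surjective hle0
  have h1 := Module.length_eq_add_of_exact (LinearMap.ker π).subtype π
    (Submodule.subtype_injective _) hπ (LinearMap.exact_subtype_ker_map _)
  let j : (box s α → k) →ₗ[k] (MvPowerSeries (Fin d) k ⧸ xI k s) :=
    ((xI k s).mkQ.restrictScalars k) ∘ₗ (LinearMap.mulLeft k c) ∘ₗ (g0 k s α)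
  have hj0 : ∀ w, j w = (xI k s).mkQ (c * g0 k s α w) := fun w => rfl
  let j' : (box s α → k) →ₗ[k] LinearMap.ker π := LinearMap.codRestrict _ j (by
    intro w
    rw [LinearMap.mem_ker, hj0]
    show Submodule.factor hle0 (Submodule.mkQ _ _) = 0
    rw [Submodule.mkQ_apply]
    refine (Submodule.Quotient.mk_eq_zero _).2 ?_
    exact Ideal.mem_sup_left (Ideal.mul_mem_right _ _ (Ideal.mem_span_singleton_self c)))
  have hj : Function.Injective j' := by
    rw [injective_iff_map_eq_zero]
    intro w hw
    have h2 : j w = 0 := congrArg Subtype.val hw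
    rw [hj0] at h2
    apply g0_key s α c hα
    exact (Submodule.Quotient.mk_eq_zero _).1 h2
  have h3 := Module.length_le_of_injective j' hj
  rw [Module.length_pi, Module.length_eq_one, mul_one] at h3
  have h4 : ENat.card (box s α) = (∏ i, (s i - α i) : ℕ) := by simp [box]
  rw [h4] at h3
  have h5 := len_xI_le (k := k) s
  rw [h1] at h5
  generalize Module.length k (MvPowerSeries (Fin d) k ⧸ (Ideal.span {c} ⊔ xI k s)) = y at *
  have h6 : ((∏ i, (s i - α i) : ℕ) : ℕ∞) + y ≤ (∏ i, s i : ℕ) := (add_le_add_left h3 y).trans h5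
  cases y with
  | top => rw [add_top, top_le_iff] at h6; exact absurd h6 (ENat.coe_ne_top _)
  | coe y => norm_cast at h6 ⊢; omega
end

end

section

open MvPowerSeries

section
variable {k : Type u} [Field k] {d : ℕ} {D : Type v} [CommRing D] [Algebra (MvPowerSeries (Fin d) k) D]

noncomputable def xD (k : Type u) [Field k] {d : ℕ} (D : Type v) [CommRing D] [Algebra (MvPowerSeries (Fin d) k) D]
    (s : Fin d → ℕ) : Ideal D := (xI k s).map (algebraMap (MvPowerSeries (Fin d) k) D)

theorem xD_eq (s : Fin d → ℕ) : xD k D s = Ideal.span (Set.range fun i => algebraMap (MvPowerSeries (Fin d) k) D (X i) ^ s i) := by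
  rw [xD, xI, Ideal.map_span, ← Set.range_comp]
  congr 2
  ext i
  simp

variable [Algebra k D] [IsScalarTower k (MvPowerSeries (Fin d) k) D]

theorem G3 (ν : ℕ) (f : Fin ν → D) (hf : Submodule.span (MvPowerSeries (Fin d) k) (Set.range f) = ⊤)


    (c1 : MvPowerSeries (Fin d) k) (α1 : Fin d →₀ ℕ) (hα1 : lexOrder c1 = toLex α1) (s : Fin d → ℕ)
    (I : Submodule (MvPowerSeries (Fin d) k) D) (hI : ∀ y, c1 • y ∈ I) (hI2 : (xD k D s).restrictScalars _ ≤ I) :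
    Module.length k (D ⧸ I) ≤
      (ν * (∏ i, s i - ∏ i, (s i - α1 i)) : ℕ) := by
  refine (len_gen (k := k) (S := MvPowerSeries (Fin d) k) (Ideal.span {c1} ⊔ xI k s) ν I f ?_ (by simp [hf])).trans ?_
  · intro a ha j
    obtain ⟨y, hy, z, hz, rfl⟩ := Submodule.mem_sup.1 ha
    obtain ⟨b, rfl⟩ := Ideal.mem_span_singleton'.1 hy
    rw [add_smul, mul_smul]
    refine I.add_mem (I.smul_mem _ (hI _)) (hI2 ?_)
    rw [Algebra.smul_def]
    exact Ideal.mul_mem_right _ _ (Ideal.mem_map_of_mem _ hz)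
  · push_cast
    gcongr
    exact_mod_cast len_c_xI_le s α1 c1 hα1

theorem G2 (ν n : ℕ) (f : Fin ν → D) (hf : Submodule.span (MvPowerSeries (Fin d) k) (Set.range f) = ⊤)
    (e : Fin n → D) (lam : Fin n → D →ₗ[MvPowerSeries (Fin d) k] (MvPowerSeries (Fin d) k)) (c : MvPowerSeries (Fin d) k)
    (hcy : ∀ y : D, c • y = ∑ i, lam i y • e i) (α : Fin d →₀ ℕ) (hα : lexOrder c = toLex α)
    (s : Fin d → ℕ) : Module.length k (D ⧸ xD k D s) ≤
    (n * ∏ i, s i + ν * (∏ i, s i - ∏ i, (s i - α i)) : ℕ) := by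
  rw [← (Submodule.Quotient.restrictScalarsEquiv (MvPowerSeries (Fin d) k) (xD k D s)).restrictScalars k |>.length_eq]
  refine (len_chain (k := k) (S := MvPowerSeries (Fin d) k) (xI k s) n ((xD k D s).restrictScalars _) e ?_).trans ?_
  · intro a ha j
    refine Submodule.mem_sup_left ?_
    rw [Algebra.smul_def]
    exact Ideal.mul_mem_right _ _ (Ideal.mem_map_of_mem _ ha)
  · push_cast
    gcongr
    · exact_mod_cast len_xI_le s
    · refine (G3 ν f hf c α hα s _ ?_ le_sup_left).trans (by push_cast; rfl)
      intro y
      rw [hcy]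
      refine Submodule.mem_sup_right (Submodule.sum_mem _ fun i _ => Submodule.smul_mem _ _ (Submodule.subset_span ⟨i, rfl⟩))

noncomputable def xW (k : Type u) [Field k] {d : ℕ} (D : Type v) [CommRing D] [Algebra (MvPowerSeries (Fin d) k) D]
    (r : ℕ) (s : Fin d → ℕ) : Submodule D (Fin r → D) := Submodule.pi Set.univ (fun _ => xD k D s)

theorem mem_xW {r : ℕ} {s : Fin d → ℕ} (y : Fin r → D) : y ∈ xW k D r s ↔ ∀ b, y b ∈ xD k D s := by
  simp [xW, Submodule.mem_pi]

theorem lam_mem (l : D →ₗ[MvPowerSeries (Fin d) k] (MvPowerSeries (Fin d) k)) (s : Fin d → ℕ) (y : D) (hy : y ∈ xD k D s) :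
    l y ∈ xI k s := by
  rw [xD_eq, Ideal.mem_span_range_iff_exists_fun] at hy
  obtain ⟨b, rfl⟩ := hy
  rw [map_sum]
  refine Ideal.sum_mem _ fun i _ => ?_
  rw [← map_pow, mul_comm, ← Algebra.smul_def, map_smul]
  exact Ideal.mul_mem_right _ _ (Ideal.subset_span ⟨i, rfl⟩)

theorem G1 (n : ℕ) (e : Fin n → D) (lam : Fin n → D →ₗ[MvPowerSeries (Fin d) k] (MvPowerSeries (Fin d) k))
    (c : MvPowerSeries (Fin d) k) (hle : ∀ i j, lam i (e j) = if i = j then c else 0) (α : Fin d →₀ ℕ)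
    (hα : lexOrder c = toLex α)
    (r : ℕ) (s : Fin d → ℕ) : ((r * n * ∏ i, (s i - α i) : ℕ) : ℕ∞) ≤ Module.length k ((Fin r → D) ⧸ xW k D r s) := by
  let g1 : (Fin r → Fin n → box s α → k) →ₗ[k] (Fin r → D) :=
    LinearMap.pi fun b => ∑ i, ((LinearMap.toSpanSingleton (MvPowerSeries (Fin d) k) D (e i)).restrictScalars k) ∘ₗ (g0 k s α) ∘ₗ
      LinearMap.proj i ∘ₗ LinearMap.proj b
  have hg1 : ∀ w b, g1 w b = ∑ i, g0 k s α (w b i) • e i := by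
    intro w b
    simp [g1]
  let g : (Fin r → Fin n → box s α → k) →ₗ[k] ((Fin r → D) ⧸ xW k D r s) :=
    ((xW k D r s).mkQ.restrictScalars k) ∘ₗ g1
  have hg : Function.Injective g := by
    rw [injective_iff_map_eq_zero]
    intro w hw
    have h2 : g1 w ∈ xW k D r s := (Submodule.Quotient.mk_eq_zero _).1 hw
    rw [mem_xW] at h2
    ext b i x
    have h3 := lam_mem (lam i) s _ (h2 b)
    rw [hg1, map_sum] at h3
    simp only [map_smul, hle] at h3
    rw [Finset.sum_eq_single i (by intro j _ hj; simp [hj.symm]) (by simp), if_pos rfl, smul_eq_mul, mul_comm] at h3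
    rw [g0_key s α c hα _ h3]; rfl
  refine le_trans (le_of_eq ?_) (Module.length_le_of_injective g hg)
  rw [Module.length_pi, Module.length_pi, Module.length_pi, Module.length_eq_one]
  simp [box]
  ring

theorem frob_xD (p : ℕ) [Fact p.Prime] [CharP D p] (m : ℕ) (t : Fin d → ℕ) (y : D) (hy : y ∈ xD k D t) :
    y ^ (p^m) ∈ xD k D (fun i => p^m * t i) := by
  have : xD k D t ≤ (xD k D (fun i => p^m * t i)).comap (iterateFrobenius D p m) := by
    conv_lhs => rw [xD_eq]
    rw [Ideal.span_le]
    rintro _ ⟨i, rfl⟩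
    rw [SetLike.mem_coe, Ideal.mem_comap]
    rw [iterateFrobenius_def, ← pow_mul, mul_comm, xD_eq]
    exact Ideal.subset_span ⟨i, rfl⟩
  exact this hy

theorem frob_span (p : ℕ) [Fact p.Prime] [CharP D p] (m : ℕ) (t : Fin d → ℕ) {r h : ℕ} (u : Fin h → Fin r → D) (S : Set (Fin h))
    (y : Fin r → D) (hy : y ∈ xW k D r t ⊔ Submodule.span D (u '' S)) :
    y ^ (p^m) ∈ xW k D r (fun i => p^m * t i) ⊔ Submodule.span D ((fun j => u j ^ (p^m)) '' S) := by
  let N := xW k D r (fun i => p^m * t i) ⊔ Submodule.span D ((fun j => u j ^ (p^m)) '' S)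
  let P : Submodule D (Fin r → D) :=
    { carrier := {y | y ^ (p^m) ∈ N}
      add_mem' := by
        intro a b ha hb
        have : (a + b) ^ (p^m) = a ^ (p^m) + b ^ (p^m) := by
          ext i
          exact add_pow_char_pow (R := D) (p := p) (n := m) (a i) (b i)
        show (a + b) ^ (p^m) ∈ N
        rw [this]; exact N.add_mem ha hb
      zero_mem' := by
        show (0 : Fin r → D) ^ (p^m) ∈ N
        rw [zero_pow (pow_ne_zero _ (Fact.out : p.Prime).ne_zero)]; exact N.zero_mem
      smul_mem' := by
        intro a b hb
        show (a • b) ^ (p^m) ∈ N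
        rw [smul_pow]; exact N.smul_mem _ hb }
  have : xW k D r t ⊔ Submodule.span D (u '' S) ≤ P := by
    refine sup_le ?_ (Submodule.span_le.2 ?_)
    · intro y hy
      refine Submodule.mem_sup_left ?_
      rw [mem_xW] at hy ⊢
      intro b
      exact frob_xD p m t _ (hy b)
    · rintro _ ⟨j, hj, rfl⟩
      exact Submodule.mem_sup_right (Submodule.subset_span ⟨j, hj, rfl⟩)
  exact this hy

theorem charp_ineq_q (ν n : ℕ) (f : Fin ν → D) (hf : Submodule.span (MvPowerSeries (Fin d) k) (Set.range f) = ⊤)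
    (e : Fin n → D) (lam : Fin n → D →ₗ[MvPowerSeries (Fin d) k] (MvPowerSeries (Fin d) k)) (c : MvPowerSeries (Fin d) k)
    (hle : ∀ i j, lam i (e j) = if i = j then c else 0) (hcy : ∀ y : D, c • y = ∑ i, lam i y • e i) (α : Fin d →₀ ℕ) (hα : lexOrder c = toLex α)
    (p : ℕ) [Fact p.Prime] [CharP D p] (m : ℕ) (r h : ℕ) (t : Fin d → ℕ) (u : Fin h → Fin r → D)
    (h1 : ∀ (i : Fin d) (j : Fin h), algebraMap (MvPowerSeries (Fin d) k) D (X i) • u j ∈ xW k D r t ⊔ Submodule.span D (u '' {a | a < j}))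
    (h2 : ∀ b, algebraMap (MvPowerSeries (Fin d) k) D c • (Pi.single b 1 : Fin r → D) ∈ xW k D r t ⊔ Submodule.span D (Set.range u)) :
    r * n * ∏ i, (p^m * t i - α i) ≤ h * (n * ∏ i : Fin d, p^m + ν * (∏ i : Fin d, p^m - ∏ i, (p^m - α i))) +
      r * (ν * (∏ i, (p^m * t i) - ∏ i, (p^m * t i - p^m * α i))) := by
  set q := p^m with hq
  have e1 := G1 n e lam c hle α hα r (fun i => q * t i)
  have e2 := G2 ν n f hf e lam c hcy α hα (fun _ => q)
  have hαq : lexOrder (c ^ q) = toLex (q • α) := by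
    have : ∀ q : ℕ, lexOrder (c ^ q) = toLex (q • α) := by
      intro q
      induction q with
      | zero =>
        rw [pow_zero, zero_smul]
        apply le_antisymm
        · exact lexOrder_le_of_coeff_ne_zero (by simp)
        · rw [le_lexOrder_iff]
          intro e he
          rw [coeff_one, if_neg]
          rintro rfl
          exact lt_irrefl _ he
      | succ q ih => rw [pow_succ, lexOrder_mul, ih, hα, add_smul, one_smul]; rfl
    exact this q
  have e3 := G3 (D := D) ν f hf (c^q) (q • α) hαq (fun i => q * t i)
    ((Ideal.span {algebraMap (MvPowerSeries (Fin d) k) D (c^q)} ⊔ xD k D (fun i => q * t i)).restrictScalars _) (by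
      intro y
      show _ ∈ Ideal.span {algebraMap (MvPowerSeries (Fin d) k) D (c^q)} ⊔ xD k D (fun i => q * t i)
      rw [Algebra.smul_def]
      exact Ideal.mem_sup_left (Ideal.mul_mem_right _ _ (Ideal.mem_span_singleton_self _)))
      (by intro y hy; exact Ideal.mem_sup_right hy)
  rw [((Submodule.Quotient.restrictScalarsEquiv (MvPowerSeries (Fin d) k) (Ideal.span {algebraMap (MvPowerSeries (Fin d) k) D (c^q)} ⊔ xD k D (fun i => q * t i))).restrictScalars k).length_eq] at e3
  have e4 := len_chain (k := k) (S := D) (xD k D (fun _ : Fin d => q)) h (xW k D r (fun i => q * t i)) (fun j => u j ^ q) (by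
    intro a ha j
    rw [xD_eq (k := k) (d := d), Ideal.mem_span_range_iff_exists_fun] at ha
    obtain ⟨b, rfl⟩ := ha
    rw [Finset.sum_smul]
    refine Submodule.sum_mem _ fun i _ => ?_
    rw [mul_smul, ← smul_pow]
    exact Submodule.smul_mem _ _ (frob_span p m t u _ _ (h1 i j)))
  have e5 := len_gen (k := k) (S := D) (Ideal.span {algebraMap (MvPowerSeries (Fin d) k) D (c^q)} ⊔ xD k D (fun i => q * t i)) r
    (xW k D r (fun i => q * t i) ⊔ Submodule.span D (Set.range fun j => u j ^ q)) (fun b => (Pi.single b 1 : Fin r → D)) (by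
      intro a ha b
      obtain ⟨y, hy, z, hz, rfl⟩ := Submodule.mem_sup.1 ha
      obtain ⟨a, rfl⟩ := Ideal.mem_span_singleton'.1 hy
      rw [add_smul, mul_smul]
      refine Submodule.add_mem _ (Submodule.smul_mem _ _ ?_) (Submodule.mem_sup_left ?_)
      · have := h2 b
        rw [← Set.image_univ] at this
        have := frob_span p m t u _ _ this
        rw [Set.image_univ, smul_pow] at this
        have h6 : (Pi.single b 1 : Fin r → D) ^ (p^m) = Pi.single b 1 := by
          ext b'
          by_cases hb : b' = b
          · subst hb; simp
          · simp [Pi.single_eq_of_ne hb, (Fact.out : p.Prime).ne_zero]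
        rw [h6, ← hq, ← map_pow] at this
        exact this
      · rw [mem_xW]
        intro b'
        exact Ideal.mul_mem_right _ _ hz) (by
      have : Submodule.span D (Set.range fun b => (Pi.single b 1 : Fin r → D)) = ⊤ := by
        rw [← (Pi.basisFun D (Fin r)).span_eq]
        congr 2
        ext b b'
        simp
      rw [this]; simp)
  have : ((r * n * ∏ i, (q * t i - α i) : ℕ) : ℕ∞) ≤ ((h * (n * ∏ i : Fin d, q + ν * (∏ i : Fin d, q - ∏ i, (q - α i))) +
      r * (ν * (∏ i, (q * t i) - ∏ i, (q * t i - q * α i))) : ℕ) : ℕ∞) := by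
    refine e1.trans (e4.trans ?_)
    refine (add_le_add (mul_le_mul_right e2 _) (e5.trans (mul_le_mul_right e3 _))).trans ?_
    norm_cast
  exact_mod_cast this
end

end

section

open MvPowerSeries Filter Topology

theorem tsub_div_tendsto (Q : ℕ → ℕ) (hQ : Tendsto Q atTop atTop) (t a : ℕ) :
    Tendsto (fun m => ((Q m * t - a : ℕ) : ℝ) / Q m) atTop (𝓝 t) := by
  have hQ' : Tendsto (fun m => (Q m : ℝ)) atTop atTop := tendsto_natCast_atTop_atTop.comp hQ
  have hlow : Tendsto (fun m => (t : ℝ) - a / Q m) atTop (𝓝 t) := by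
    have := (tendsto_const_nhds (x := (t:ℝ))).sub ((tendsto_const_nhds (x := (a:ℝ))).div_atTop hQ')
    simpa using this
  refine tendsto_of_tendsto_of_tendsto_of_le_of_le' hlow tendsto_const_nhds ?_ ?_
  · filter_upwards [hQ.eventually_gt_atTop 0] with m hm
    have : (0:ℝ) < Q m := by exact_mod_cast hm
    rw [le_div_iff₀ this, sub_mul, div_mul_cancel₀ _ this.ne']
    have h := Nat.sub_add_cancel (Nat.le_max_right 0 a)
    have : (Q m * t : ℝ) ≤ ((Q m * t - a : ℕ) : ℝ) + a := by
      exact_mod_cast (by omega : Q m * t ≤ (Q m * t - a) + a)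
    linarith
  · filter_upwards [hQ.eventually_gt_atTop 0] with m hm
    have : (0:ℝ) < Q m := by exact_mod_cast hm
    rw [div_le_iff₀ this]
    have : ((Q m * t - a : ℕ) : ℝ) ≤ (Q m * t : ℕ) := by exact_mod_cast Nat.sub_le _ _
    push_cast at this
    linarith

theorem charp_limit {d : ℕ} (ν n r h p : ℕ) (hp : p.Prime) (hn : 0 < n) (t : Fin d → ℕ) (α : Fin d → ℕ)
    (H : ∀ m : ℕ, r * n * ∏ i, (p^m * t i - α i) ≤ h * (n * ∏ i : Fin d, p^m + ν * (∏ i : Fin d, p^m - ∏ i, (p^m - α i))) +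
      r * (ν * (∏ i, (p^m * t i) - ∏ i, (p^m * t i - p^m * α i)))) :
    (r * ∏ i, (t i : ℝ)) ≤ h + (r * ν / n : ℝ) * (∏ i, (t i : ℝ) - ∏ i, ((t i - α i : ℕ) : ℝ)) := by
  have hQ : Tendsto (fun m => p^m) atTop atTop := tendsto_pow_atTop_atTop_of_one_lt hp.one_lt
  have l1 : Tendsto (fun m => ∏ i, (((p^m * t i - α i : ℕ) : ℝ) / (p^m : ℕ))) atTop (𝓝 (∏ i, (t i : ℝ))) :=
    tendsto_finset_prod _ fun i _ => tsub_div_tendsto _ hQ _ _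
  have l2 : Tendsto (fun m => ∏ i, (((p^m * 1 - α i : ℕ) : ℝ) / (p^m : ℕ))) atTop (𝓝 (∏ i : Fin d, ((1 : ℕ) : ℝ))) :=
    tendsto_finset_prod _ fun i _ => tsub_div_tendsto _ hQ _ _
  have l3 := (l1.const_mul ((r * n : ℝ)))
  have l4 := (((tendsto_const_nhds (x := (1:ℝ))).sub l2).const_mul (ν : ℝ)).const_add (n : ℝ) |>.const_mul (h : ℝ)
  have l5 := l4.add_const (r * (ν * (∏ i, (t i : ℝ) - ∏ i, ((t i - α i : ℕ) : ℝ))) : ℝ)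
  have key := le_of_tendsto_of_tendsto' l3 l5 (by
    intro m
    have hq : (0:ℝ) < ((p^m : ℕ) : ℝ) := by exact_mod_cast pow_pos hp.pos m
    have hm := H m
    set q := p^m with hqdef
    have i1 : ∏ i, (q - α i) ≤ ∏ i : Fin d, q := Finset.prod_le_prod' fun i _ => Nat.sub_le _ _
    have i2 : ∏ i, (q * t i - q * α i) ≤ ∏ i, (q * t i) := Finset.prod_le_prod' fun i _ => Nat.sub_le _ _
    have hm' : ((r * n * ∏ i, (q * t i - α i) : ℕ) : ℝ) ≤ ((h * (n * ∏ i : Fin d, q + ν * (∏ i : Fin d, q - ∏ i, (q - α i))) +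
      r * (ν * (∏ i, (q * t i) - ∏ i, (q * t i - q * α i))) : ℕ) : ℝ) := by exact_mod_cast hm
    rw [Nat.cast_add, Nat.cast_mul h, Nat.cast_add, Nat.cast_mul ν, Nat.cast_sub i1, Nat.cast_mul r (ν * _), Nat.cast_mul ν, Nat.cast_sub i2] at hm'
    simp_rw [← Nat.mul_sub] at hm'
    simp only [Nat.cast_prod, Nat.cast_mul, Nat.cast_pow, Finset.prod_mul_distrib, Finset.prod_const, Finset.card_univ, Fintype.card_fin] at hm'
    simp only [Finset.prod_div_distrib, Finset.prod_const, Finset.card_univ, Fintype.card_fin, mul_one]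
    have hqd : (0:ℝ) < (q:ℝ)^d := pow_pos hq d
    generalize ∏ i, ((q * t i - α i : ℕ) : ℝ) = A at *
    generalize ∏ i, ((q - α i : ℕ) : ℝ) = B at *
    generalize ∏ i, ((t i - α i : ℕ) : ℝ) = E at *
    generalize ∏ i, (t i : ℝ) = T at *
    have h2 : (r * n * (A / (q:ℝ)^d)) * (q:ℝ)^d ≤ (h * (n + ν * (1 - B / (q:ℝ)^d)) + r * (ν * (T - E))) * (q:ℝ)^d := by
      have hA : A / (q:ℝ)^d * (q:ℝ)^d = A := div_mul_cancel₀ _ hqd.ne'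
      have hB : B / (q:ℝ)^d * (q:ℝ)^d = B := div_mul_cancel₀ _ hqd.ne'
      calc _ = r * n * A := by rw [mul_assoc, hA]
        _ ≤ _ := hm'
        _ = h * (n * (q:ℝ)^d + ν * ((q:ℝ)^d - B / (q:ℝ)^d * (q:ℝ)^d)) + r * (ν * ((q:ℝ)^d * T - (q:ℝ)^d * E)) := by rw [hB]
        _ = _ := by ring
    exact le_of_mul_le_mul_right h2 hqd)
  simp only [Nat.cast_one, Finset.prod_const_one, sub_self, mul_zero, add_zero] at key
  have hn' : (0:ℝ) < n := by exact_mod_cast hn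
  generalize ∏ i, ((t i - α i : ℕ) : ℝ) = E at *
  generalize ∏ i, (t i : ℝ) = T at *
  have h2 : (r * T) * n ≤ (h + (r * ν / n : ℝ) * (T - E)) * n := by
    calc r * T * n = r * n * T := by ring
      _ ≤ _ := key
      _ = (h + (r * ν / n : ℝ) * (T - E)) * n := by field_simp
  exact le_of_mul_le_mul_right h2 hn'

theorem charp_ineq {k : Type u} [Field k] {d : ℕ} {D : Type v} [CommRing D] [Algebra (MvPowerSeries (Fin d) k) D]
  (ν n : ℕ) (hn : 0 < n) (f : Fin ν → D) (hf : Submodule.span (MvPowerSeries (Fin d) k) (Set.range f) = ⊤)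
  (e : Fin n → D) (lam : Fin n → D →ₗ[MvPowerSeries (Fin d) k] (MvPowerSeries (Fin d) k))
  (c : MvPowerSeries (Fin d) k) (hle : ∀ i j, lam i (e j) = if i = j then c else 0)
  (hcy : ∀ y : D, c • y = ∑ i, lam i y • e i) (α : Fin d →₀ ℕ) (hα : lexOrder c = toLex α)
  (p : ℕ) (hp : p.Prime) [CharP k p] (r h : ℕ) (t : Fin d → ℕ) (u : Fin h → Fin r → D)
    (h1 : ∀ (i : Fin d) (j : Fin h), algebraMap (MvPowerSeries (Fin d) k) D (X i) • u j ∈ xW k D r t ⊔ Submodule.span D (u '' {a | a < j}))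
    (h2 : ∀ b, algebraMap (MvPowerSeries (Fin d) k) D c • (Pi.single b 1 : Fin r → D) ∈ xW k D r t ⊔ Submodule.span D (Set.range u)) :
    (r * ∏ i, (t i : ℝ)) ≤ h + (r * ν / n : ℝ) * (∏ i, (t i : ℝ) - ∏ i, ((t i - α i : ℕ) : ℝ)) := by
  haveI : Fact p.Prime := ⟨hp⟩
  letI : Algebra k D := ((algebraMap (MvPowerSeries (Fin d) k) D).comp (algebraMap k _)).toAlgebra
  haveI : IsScalarTower k (MvPowerSeries (Fin d) k) D := IsScalarTower.of_algebraMap_eq' rfl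
  haveI : Nontrivial D := by
    refine ⟨e ⟨0, hn⟩, 0, ?_⟩
    intro h
    have := hle ⟨0, hn⟩ ⟨0, hn⟩
    rw [h, map_zero, if_pos rfl] at this
    rw [← this, lexOrder_zero] at hα
    exact WithTop.top_ne_coe hα
  haveI : CharP D p := charP_of_injective_algebraMap (algebraMap k D).injective p
  exact charp_limit ν n r h p hp hn t α (fun m => charp_ineq_q ν n f hf e lam c hle hcy α hα p m r h t u h1 h2)

end

section

open MvPowerSeries

noncomputable def lexm {d : ℕ} (α : Fin d →₀ ℕ) (i : Fin d) : Fin d →₀ ℕ :=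
  Finsupp.equivFunOnFinite.symm (fun l => if l < i then α l else if l = i then α i + 1 else 0)

theorem lexm_lt {d : ℕ} (α : Fin d →₀ ℕ) (i : Fin d) (e : Fin d →₀ ℕ) (h : lexm α i ≤ e) : toLex α < toLex e := by
  have h' : ∀ l, (if l < i then α l else if l = i then α i + 1 else 0) ≤ e l := fun l => h l
  by_cases hex : ∃ l, l < i ∧ α l ≠ e l
  · -- minimal
    have hs : (Finset.univ.filter fun l => l < i ∧ α l ≠ e l).Nonempty := by
      obtain ⟨l, hl⟩ := hex; exact ⟨l, by simpa using hl⟩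
    have hm := Finset.min'_mem _ hs
    set m := Finset.min' _ hs with hmdef
    simp only [Finset.mem_filter, Finset.mem_univ, true_and] at hm
    rw [Finsupp.Lex.lt_iff]
    refine ⟨m, ?_, ?_⟩
    · intro j hj
      by_contra hne
      have : m ≤ j := Finset.min'_le _ _ (by simp; exact ⟨hj.trans hm.1, hne⟩)
      exact absurd hj (not_lt.2 this)
    · have := h' m
      rw [if_pos hm.1] at this
      exact lt_of_le_of_ne this hm.2
  · push Not at hex
    rw [Finsupp.Lex.lt_iff]
    refine ⟨i, hex, ?_⟩
    have := h' i
    simp at this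
    exact this

theorem lexm_of_lt {d : ℕ} (α : Fin d →₀ ℕ) (e : Fin d →₀ ℕ) (h : toLex α < toLex e) : ∃ i, lexm α i ≤ e := by
  rw [Finsupp.Lex.lt_iff] at h
  obtain ⟨i, h1, h2⟩ := h
  refine ⟨i, fun l => ?_⟩
  show (if l < i then α l else if l = i then α i + 1 else 0) ≤ e l
  split_ifs with ha hb
  · exact (h1 l ha).le
  · subst hb; exact h2
  · exact Nat.zero_le _

theorem coeff_mono_mul_ne {K : Type u} [Field K] {d : ℕ} (m e : Fin d →₀ ℕ) (b : MvPowerSeries (Fin d) K)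
   (h : coeff e (monomial m (1:K) * b) ≠ 0) : m ≤ e := by
  classical
  rw [coeff_monomial_mul] at h
  by_contra hh
  rw [if_neg hh] at h
  exact h rfl

theorem lex_encode {K : Type u} [Field K] {d : ℕ} (c : MvPowerSeries (Fin d) K) (α : Fin d →₀ ℕ)
    (hα : lexOrder c = toLex α) : ∃ (w : MvPowerSeries (Fin d) K) (b : Fin d → MvPowerSeries (Fin d) K),
      IsUnit w ∧ c = monomial α 1 * w + ∑ i, monomial (lexm α i) 1 * b i := by
  classical
  obtain ⟨b, hb⟩ := mps_decomp c (fun o : Option (Fin d) => o.elim α (lexm α)) (by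
    intro e he
    have := lexOrder_le_of_coeff_ne_zero he
    rw [hα] at this
    have : toLex α ≤ toLex e := WithTop.coe_le_coe.1 this
    rcases this.eq_or_lt with h | h
    · exact ⟨none, le_of_eq (toLex.injective h)⟩
    · obtain ⟨i, hi⟩ := lexm_of_lt α e h
      exact ⟨some i, hi⟩)
  rw [Fintype.sum_option] at hb
  refine ⟨b none, fun i => b (some i), ?_, hb⟩
  rw [isUnit_iff_constantCoeff, isUnit_iff_ne_zero]
  intro h0
  have hc : coeff α c ≠ 0 := coeff_ne_zero_of_lexOrder hα.symm
  apply hc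
  rw [hb, map_add, map_sum]
  rw [Finset.sum_eq_zero, add_zero]
  · simp only [Option.elim]
    rw [coeff_monomial_mul]
    simp [h0]
  · intro i _
    by_contra hne
    exact absurd (lexm_lt α i α (coeff_mono_mul_ne _ _ _ hne)) (lt_irrefl _)

theorem lex_decode {K : Type u} [Field K] {d : ℕ} (c : MvPowerSeries (Fin d) K) (α : Fin d →₀ ℕ)
    (w : MvPowerSeries (Fin d) K) (b : Fin d → MvPowerSeries (Fin d) K)
      (hw : IsUnit w) (hc : c = monomial α 1 * w + ∑ i, monomial (lexm α i) 1 * b i) : lexOrder c = toLex α := by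
  classical
  have hz : ∀ e, toLex e ≤ toLex α → coeff e (∑ i, monomial (lexm α i) 1 * b i) = 0 := by
    intro e he
    rw [map_sum]
    refine Finset.sum_eq_zero fun i _ => ?_
    by_contra hne
    exact absurd (lexm_lt α i e (coeff_mono_mul_ne _ _ _ hne)) (not_lt.2 he)
  apply le_antisymm
  · apply lexOrder_le_of_coeff_ne_zero
    rw [hc, map_add, hz _ le_rfl, add_zero, coeff_monomial_mul]
    rw [isUnit_iff_constantCoeff, isUnit_iff_ne_zero] at hw
    simpa using hw
  · rw [le_lexOrder_iff]
    intro e he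
    have he' : toLex e < toLex α := WithTop.coe_lt_coe.1 he
    rw [hc, map_add, hz _ he'.le, add_zero]
    by_contra hne
    have := coeff_mono_mul_ne _ _ _ hne
    exact absurd (Finsupp.toLex_monotone this) (not_le.2 he')

theorem monomial_eq_prod {K : Type u} [Field K] {d : ℕ} (α : Fin d →₀ ℕ) :
    (monomial α 1 : MvPowerSeries (Fin d) K) = ∏ i, X i ^ α i := by
  have := MvPolynomial.monomial_eq (s := α) (a := (1:K))
  have h2 := congrArg (fun p : MvPolynomial (Fin d) K => (p : MvPowerSeries (Fin d) K)) this
  simp only [MvPolynomial.coe_monomial] at h2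
  rw [h2]
  rw [Finsupp.prod_fintype _ _ (by simp)]
  rw [← MvPolynomial.coeToMvPowerSeries.ringHom_apply]
  simp

end

section

open MvPowerSeries
open scoped TensorProduct

theorem mem_xW' {k : Type u} [Field k] {d : ℕ} {D : Type v} [CommRing D] [Algebra (MvPowerSeries (Fin d) k) D]
   (r : ℕ) (t : Fin d → ℕ) (v : Fin r → D) : v ∈ xW k D r t ↔ ∀ b, v b ∈ xD k D t := by
  simp [xW, Submodule.mem_pi]

theorem mem_explicit {k : Type u} [Field k] {d : ℕ} {D : Type v} [CommRing D] [Algebra (MvPowerSeries (Fin d) k) D]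
   (r h : ℕ) (t : Fin d → ℕ) (u : Fin h → Fin r → D) (S : Set (Fin h)) (v : Fin r → D) :
   v ∈ xW k D r t ⊔ Submodule.span D (u '' S) ↔ ∃ (z : Fin d → Fin r → D) (w : Fin h → D),
     (∀ b, v b = ∑ l, algebraMap (MvPowerSeries (Fin d) k) D (X l) ^ t l * z l b + ∑ a, w a * u a b) ∧
     ∀ a ∉ S, w a = 0 := by
  classical
  constructor
  · intro hv
    obtain ⟨y, hy, y', hy', rfl⟩ := Submodule.mem_sup.1 hv
    have h1 : ∀ b, ∃ z : Fin d → D, y b = ∑ l, algebraMap (MvPowerSeries (Fin d) k) D (X l) ^ t l * z l := by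
      intro b
      have := (mem_xW' r t y).1 hy b
      rw [xD_eq, Ideal.mem_span_range_iff_exists_fun] at this
      obtain ⟨c, hc⟩ := this
      exact ⟨c, by rw [← hc]; exact Finset.sum_congr rfl fun _ _ => mul_comm _ _⟩
    choose z hz using h1
    have h2 : ∃ w : Fin h → D, (∀ b, y' b = ∑ a, w a * u a b) ∧ ∀ a ∉ S, w a = 0 := by
      refine Submodule.span_induction ?_ ?_ ?_ ?_ hy'
      · rintro _ ⟨a, ha, rfl⟩
        refine ⟨Pi.single a 1, fun b => ?_, ?_⟩
        · rw [Finset.sum_eq_single a]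
          · simp
          · intro a' _ hne; simp [Pi.single_eq_of_ne hne]
          · simp
        · intro a' ha'
          rw [Pi.single_eq_of_ne]
          rintro rfl; exact ha' ha
      · exact ⟨0, by simp, by simp⟩
      · rintro x y _ _ ⟨w, hw, hw'⟩ ⟨w2, hw2, hw2'⟩
        refine ⟨w + w2, fun b => ?_, fun a ha => ?_⟩
        · simp [hw, hw2, add_mul, Finset.sum_add_distrib]
        · simp [hw' a ha, hw2' a ha]
      · rintro c x _ ⟨w, hw, hw'⟩
        refine ⟨c • w, fun b => ?_, fun a ha => ?_⟩
        · simp [hw, Finset.mul_sum, mul_assoc]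
        · simp [hw' a ha]
    obtain ⟨w, hw, hw'⟩ := h2
    exact ⟨fun l b => z b l, w, fun b => by rw [Pi.add_apply, hz, hw], hw'⟩
  · rintro ⟨z, w, hv, hw⟩
    have : v = (fun b => ∑ l, algebraMap (MvPowerSeries (Fin d) k) D (X l) ^ t l * z l b) + ∑ a, w a • u a := by
      ext b
      rw [hv, Pi.add_apply, Finset.sum_apply]; rfl
    rw [this]
    refine Submodule.add_mem_sup ?_ ?_
    · rw [mem_xW']
      intro b
      rw [xD_eq]
      exact Ideal.sum_mem _ fun l _ => Ideal.mul_mem_right _ _ (Ideal.subset_span ⟨l, rfl⟩)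
    · refine Submodule.sum_mem _ fun a _ => ?_
      by_cases ha : a ∈ S
      · exact Submodule.smul_mem _ _ (Submodule.subset_span ⟨a, ha, rfl⟩)
      · rw [hw a ha, zero_smul]; exact Submodule.zero_mem _

theorem bc_ineq {k : Type u} [Field k] {d : ℕ} {C : Type u} [CommRing C] {D : Type v} [CommRing D] [Algebra C D]
  (ψ : C →+* MvPowerSeries (Fin d) k) (x : Fin d → C) (hx : ∀ i, ψ (x i) = X i)
  (ν n : ℕ) (hn : 0 < n) (f : Fin ν → D) (hf : Submodule.span C (Set.range f) = ⊤)
  (e : Fin n → D) (lam : Fin n → D →ₗ[C] C)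
  (c : C) (hle : ∀ i j, lam i (e j) = if i = j then c else 0)
  (hcy : ∀ y : D, c • y = ∑ i, lam i y • e i) (α : Fin d →₀ ℕ) (hα : lexOrder (ψ c) = toLex α)
  (p : ℕ) (hp : p.Prime) [CharP k p] (r h : ℕ) (t : Fin d → ℕ) (u : Fin h → Fin r → D)
  (z1 : Fin d → Fin h → Fin d → Fin r → D) (w1 : Fin d → Fin h → Fin h → D)
  (h1 : ∀ i j b, algebraMap C D (x i) * u j b = ∑ l, algebraMap C D (x l) ^ t l * z1 i j l b + ∑ a, w1 i j a * u a b)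
  (h1' : ∀ i j a, ¬ a < j → w1 i j a = 0)
  (z2 : Fin r → Fin d → Fin r → D) (w2 : Fin r → Fin h → D)
  (h2 : ∀ b b', algebraMap C D c * (Pi.single b 1 : Fin r → D) b' =
     ∑ l, algebraMap C D (x l) ^ t l * z2 b l b' + ∑ a, w2 b a * u a b') :
    (r * ∏ i, (t i : ℝ)) ≤ h + (r * ν / n : ℝ) * (∏ i, (t i : ℝ) - ∏ i, ((t i - α i : ℕ) : ℝ)) := by
  classical
  letI : Algebra C (MvPowerSeries (Fin d) k) := ψ.toAlgebra
  have hψ : ∀ a, algebraMap C (MvPowerSeries (Fin d) k) a = ψ a := fun a => rfl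
  let D' := MvPowerSeries (Fin d) k ⊗[C] D
  let θ : D →ₐ[C] D' := Algebra.TensorProduct.includeRight
  have hθ : ∀ a, θ (algebraMap C D a) = algebraMap (MvPowerSeries (Fin d) k) D' (ψ a) := by
    intro a
    rw [AlgHom.commutes, IsScalarTower.algebraMap_apply C (MvPowerSeries (Fin d) k) D']; rfl
  let L : Fin n → D' →ₗ[MvPowerSeries (Fin d) k] MvPowerSeries (Fin d) k := fun i =>
    (TensorProduct.AlgebraTensorModule.rid C (MvPowerSeries (Fin d) k) (MvPowerSeries (Fin d) k)).toLinearMap ∘ₗ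
      (lam i).baseChange (MvPowerSeries (Fin d) k)
  have hL : ∀ i b y, L i (b ⊗ₜ y) = ψ (lam i y) * b := by
    intro i b y
    show TensorProduct.AlgebraTensorModule.rid C (MvPowerSeries (Fin d) k) (MvPowerSeries (Fin d) k)
      ((lam i).baseChange (MvPowerSeries (Fin d) k) (b ⊗ₜ y)) = _
    rw [LinearMap.baseChange_tmul, TensorProduct.AlgebraTensorModule.rid_tmul, Algebra.smul_def, hψ]
  have hθ' : ∀ y, θ y = (1 : MvPowerSeries (Fin d) k) ⊗ₜ y := fun y => rfl
  have hsm : ∀ (b : MvPowerSeries (Fin d) k) y, b • θ y = b ⊗ₜ y := by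
    intro b y; rw [hθ', TensorProduct.smul_tmul', smul_eq_mul, mul_one]
  refine charp_ineq (D := D') ν n hn (fun j => θ (f j)) ?_ (fun i => θ (e i)) L (ψ c) ?_ ?_ α hα p hp r h t
    (fun j b => θ (u j b)) ?_ ?_
  · rw [eq_top_iff]
    rintro y -
    induction y using TensorProduct.induction_on with
    | zero => exact Submodule.zero_mem _
    | add x y hx hy => exact Submodule.add_mem _ hx hy
    | tmul b y =>
      rw [← hsm]
      refine Submodule.smul_mem _ _ ?_
      have hy : y ∈ Submodule.span C (Set.range f) := by rw [hf]; trivial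
      refine Submodule.span_induction ?_ ?_ ?_ ?_ hy
      · rintro _ ⟨j, rfl⟩; exact Submodule.subset_span ⟨j, rfl⟩
      · rw [map_zero]; exact Submodule.zero_mem _
      · intro a b _ _ ha hb; rw [map_add]; exact Submodule.add_mem _ ha hb
      · intro a b _ hb
        rw [map_smul, ← algebraMap_smul (MvPowerSeries (Fin d) k)]
        exact Submodule.smul_mem _ _ hb
  · intro i j
    rw [hθ', hL, hle, mul_one]
    split_ifs <;> simp
  · intro y
    induction y using TensorProduct.induction_on with
    | zero => simp
    | add x y hx hy => simp only [smul_add, hx, hy, map_add, add_smul, Finset.sum_add_distrib]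
    | tmul b y =>
      have := congrArg θ (hcy y)
      rw [map_smul, map_sum, ← algebraMap_smul (MvPowerSeries (Fin d) k)] at this
      rw [← hsm, smul_comm]
      rw [← hψ, this, Finset.smul_sum]
      refine Finset.sum_congr rfl fun i _ => ?_
      rw [hsm b y, hL, map_smul, ← algebraMap_smul (MvPowerSeries (Fin d) k) (lam i y), ← mul_smul, mul_comm]; rfl
  · intro i j
    rw [mem_explicit]
    refine ⟨fun l b => θ (z1 i j l b), fun a => θ (w1 i j a), fun b => ?_, fun a ha => ?_⟩
    · have := congrArg θ (h1 i j b)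
      simp only [map_mul, map_add, map_sum, map_pow, hθ, hx] at this
      exact this
    · simp only [h1' i j a ha, map_zero]
  · intro b
    rw [← Set.image_univ, mem_explicit]
    refine ⟨fun l b' => θ (z2 b l b'), fun a => θ (w2 b a), fun b' => ?_, fun a ha => absurd trivial ha⟩
    have := congrArg θ (h2 b b')
    simp only [map_mul, map_add, map_sum, map_pow, hθ, hx] at this
    rw [← this]
    simp only [Pi.smul_apply, smul_eq_mul]
    congr 1
    by_cases hb : b' = b
    · subst hb; simp
    · simp [Pi.single_eq_of_ne hb]

end

section

open MvPowerSeries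

theorem M1_core {K : Type u} [Field K] {d : ℕ} {D : Type v} [CommRing D] [Algebra (MvPowerSeries (Fin d) K) D]
  (ν n : ℕ) (hn : 0 < n) (f : Fin ν → D) (hf : Submodule.span (MvPowerSeries (Fin d) K) (Set.range f) = ⊤)
  (e : Fin n → D) (lam : Fin n → D →ₗ[MvPowerSeries (Fin d) K] (MvPowerSeries (Fin d) K))
  (c : MvPowerSeries (Fin d) K) (hle : ∀ i j, lam i (e j) = if i = j then c else 0)
  (hcy : ∀ y : D, c • y = ∑ i, lam i y • e i) (α : Fin d →₀ ℕ) (hα : lexOrder c = toLex α)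
  (r h : ℕ) (t : Fin d → ℕ) (u : Fin h → Fin r → D)
    (h1 : ∀ (i : Fin d) (j : Fin h), algebraMap (MvPowerSeries (Fin d) K) D (X i) • u j ∈ xW K D r t ⊔ Submodule.span D (u '' {a | a < j}))
    (h2 : ∀ b, algebraMap (MvPowerSeries (Fin d) K) D c • (Pi.single b 1 : Fin r → D) ∈ xW K D r t ⊔ Submodule.span D (Set.range u)) :
    (r * ∏ i, (t i : ℝ)) ≤ h + (r * ν / n : ℝ) * (∏ i, (t i : ℝ) - ∏ i, ((t i - α i : ℕ) : ℝ)) := by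
  classical
  simp only [← Set.image_univ, mem_explicit] at h1 h2
  choose z1 w1 h1 h1' using h1
  choose z2 w2 h2 h2' using h2
  obtain ⟨w, b, hw, hcenc⟩ := lex_encode c α hα
  obtain ⟨w', hww'⟩ := hw.exists_right_inv
  have hφ : ∀ y : D, ∃ φ : Fin ν → MvPowerSeries (Fin d) K, ∑ j, φ j • f j = y := fun y =>
    (Submodule.mem_span_range_iff_exists_fun _).1 (by rw [hf]; trivial)
  choose φ hφ using hφ
  let Z : Set D := {1} ∪ (Set.range fun ij : Fin ν × Fin ν => f ij.1 * f ij.2) ∪ Set.range e ∪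
    (Set.range fun a : Fin h × Fin r => u a.1 a.2) ∪
    (Set.range fun a : Fin d × Fin h × Fin d × Fin r => z1 a.1 a.2.1 a.2.2.1 a.2.2.2) ∪
    (Set.range fun a : Fin d × Fin h × Fin h => w1 a.1 a.2.1 a.2.2) ∪
    (Set.range fun a : Fin r × Fin d × Fin r => z2 a.1 a.2.1 a.2.2) ∪
    (Set.range fun a : Fin r × Fin h => w2 a.1 a.2)
  have hZ : Z.Finite := by
    simp only [Z, Set.finite_union, Set.finite_singleton, Set.finite_range, and_self]
  let s : Set (MvPowerSeries (Fin d) K) := {c, w, w'} ∪ Set.range X ∪ Set.range b ∪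
    (Set.range fun a : Fin n × Fin ν => lam a.1 (f a.2)) ∪ ⋃ y ∈ Z, Set.range (φ y)
  have hs : s.Finite := by
    simp only [s, Set.finite_union, Set.finite_range, and_true]
    refine ⟨Set.toFinite _, hZ.biUnion fun y _ => Set.finite_range _⟩
  obtain ⟨C, hC⟩ : ∃ C, C = Subring.closure s := ⟨_, rfl⟩
  have hsC : s ⊆ C := by rw [hC]; exact Subring.subset_closure
  have hX : ∀ i, (X i : MvPowerSeries (Fin d) K) ∈ C := fun i => hsC (by simp [s])
  have hcC : c ∈ C := hsC (by simp [s])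
  have hwC : w ∈ C := hsC (by simp [s])
  have hwC' : w' ∈ C := hsC (by simp [s])
  have hbC : ∀ i, b i ∈ C := fun i => hsC (by simp [s])
  have hlC : ∀ i j, lam i (f j) ∈ C := fun i j => hsC (by
    refine Or.inl (Or.inr ⟨(i, j), rfl⟩))
  have hφC : ∀ y ∈ Z, ∀ j, φ y j ∈ C := fun y hy j => hsC (by
    refine Or.inr ?_
    simp only [Set.mem_iUnion]
    exact ⟨y, hy, j, rfl⟩)
  obtain ⟨p, hp, k, _, _, ψ, hψ⟩ := transfer d K s hs C hC hX
  have hmono : ∀ m : Fin d →₀ ℕ, ∃ hm : (monomial m (1:K) : MvPowerSeries (Fin d) K) ∈ C, ψ ⟨_, hm⟩ = monomial m 1 := by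
    intro m
    have e1 : (monomial m (1:K) : MvPowerSeries (Fin d) K) = ((∏ i, (⟨X i, hX i⟩ : C) ^ m i : C) : MvPowerSeries (Fin d) K) := by
      rw [monomial_eq_prod]; simp
    refine ⟨by rw [e1]; exact Subtype.property _, ?_⟩
    have e2 : (⟨monomial m (1:K), by rw [e1]; exact Subtype.property _⟩ : C) = ∏ i, (⟨X i, hX i⟩ : C) ^ m i := Subtype.ext e1
    rw [e2, map_prod, monomial_eq_prod]
    simp only [map_pow, hψ]
  choose hm1 hm2 using hmono
  have hord : lexOrder (ψ ⟨c, hcC⟩) = toLex α := by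
    refine lex_decode _ α (ψ ⟨w, hwC⟩) (fun i => ψ ⟨b i, hbC i⟩) ?_ ?_
    · refine IsUnit.of_mul_eq_one (ψ ⟨w', hwC'⟩) ?_
      rw [← map_mul, ← map_one ψ]
      congr 1
      exact Subtype.ext hww'
    · have : (⟨c, hcC⟩ : C) = ⟨_, hm1 α⟩ * ⟨w, hwC⟩ + ∑ i, ⟨_, hm1 (lexm α i)⟩ * ⟨b i, hbC i⟩ := by
        apply Subtype.ext
        simp only [Subring.coe_add, Subring.coe_mul, AddSubmonoidClass.coe_finsetSum]
        exact hcenc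
      rw [this]
      simp only [map_add, map_mul, map_sum, hm2]
  let N : Submodule C D := Submodule.span C (Set.range f)
  have hZN : ∀ y ∈ Z, y ∈ N := by
    intro y hy
    rw [← hφ y]
    refine Submodule.sum_mem _ fun j _ => ?_
    exact Submodule.smul_mem N (⟨φ y j, hφC y hy j⟩ : C) (Submodule.subset_span ⟨j, rfl⟩)
  have hN1 : (1 : D) ∈ N := hZN 1 (by simp [Z])
  have hNm : ∀ x y, x ∈ N → y ∈ N → x * y ∈ N := by
    have : N * N ≤ N := by
      rw [Submodule.span_mul_span, Submodule.span_le]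
      rintro _ ⟨_, ⟨i, rfl⟩, _, ⟨j, rfl⟩, rfl⟩
      refine hZN _ ?_
      simp only [Z, Set.mem_union]
      iterate 6 left
      exact Or.inr ⟨(i, j), rfl⟩
    exact fun x y hx hy => this (Submodule.mul_mem_mul hx hy)
  let D0 : Subalgebra C D := N.toSubalgebra hN1 hNm
  have hD0 : ∀ y, y ∈ D0 ↔ y ∈ N := fun y => Iff.rfl
  have hfN : ∀ j, f j ∈ D0 := fun j => Submodule.subset_span ⟨j, rfl⟩
  have heN : ∀ j, e j ∈ D0 := fun j => hZN _ (by simp [Z])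
  have huN : ∀ j b, u j b ∈ D0 := fun j b => hZN _ (by
    simp only [Z, Set.mem_union]; iterate 4 left
    exact Or.inr ⟨(j, b), rfl⟩)
  have hz1N : ∀ i j l b, z1 i j l b ∈ D0 := fun i j l b => hZN _ (by
    simp only [Z, Set.mem_union]; iterate 3 left
    exact Or.inr ⟨(i, j, l, b), rfl⟩)
  have hw1N : ∀ i j l, w1 i j l ∈ D0 := fun i j l => hZN _ (by
    simp only [Z, Set.mem_union]; iterate 2 left
    exact Or.inr ⟨(i, j, l), rfl⟩)
  have hz2N : ∀ i j l, z2 i j l ∈ D0 := fun i j l => hZN _ (by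
    simp only [Z, Set.mem_union]; iterate 1 left
    exact Or.inr ⟨(i, j, l), rfl⟩)
  have hw2N : ∀ i j, w2 i j ∈ D0 := fun i j => hZN _ (by
    simp only [Z, Set.mem_union]
    exact Or.inr ⟨(i, j), rfl⟩)
  have hlamN : ∀ i, ∀ y ∈ N, lam i y ∈ C := by
    intro i y hy
    refine Submodule.span_induction ?_ ?_ ?_ ?_ hy
    · rintro _ ⟨j, rfl⟩; exact hlC i j
    · rw [map_zero]; exact C.zero_mem
    · intro x y _ _ hx hy; rw [map_add]; exact C.add_mem hx hy
    · intro a y _ hy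
      have : lam i (a • y) = (a : MvPowerSeries (Fin d) K) * lam i y := by
        rw [Subring.smul_def, map_smul, smul_eq_mul]
      rw [this]; exact C.mul_mem a.2 hy
  let L : Fin n → D0 →ₗ[C] C := fun i =>
    { toFun := fun y => ⟨lam i y, hlamN i y y.2⟩
      map_add' := fun x y => Subtype.ext (by simp)
      map_smul' := fun a y => Subtype.ext (by
        show lam i (a • (y : D)) = (a : MvPowerSeries (Fin d) K) * lam i y
        rw [Subring.smul_def, map_smul, smul_eq_mul]) }
  have hamap : ∀ a : C, ((algebraMap C D0 a : D0) : D) = algebraMap (MvPowerSeries (Fin d) K) D a := fun a => rfl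
  refine bc_ineq (C := C) (D := D0) ψ (fun i => ⟨X i, hX i⟩) hψ ν n hn (fun j => ⟨f j, hfN j⟩) ?_
    (fun j => ⟨e j, heN j⟩) L ⟨c, hcC⟩ ?_ ?_ α hord p hp r h t (fun j b => ⟨u j b, huN j b⟩)
    (fun i j l b => ⟨z1 i j l b, hz1N i j l b⟩) (fun i j l => ⟨w1 i j l, hw1N i j l⟩) ?_ ?_
    (fun i j l => ⟨z2 i j l, hz2N i j l⟩) (fun i j => ⟨w2 i j, hw2N i j⟩) ?_
  · rw [eq_top_iff]
    rintro ⟨y, hy⟩ -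
    obtain ⟨a, ha⟩ := (Submodule.mem_span_range_iff_exists_fun C).1 hy
    have : (⟨y, hy⟩ : D0) = ∑ j, a j • ⟨f j, hfN j⟩ := by
      apply Subtype.ext
      simp only [AddSubmonoidClass.coe_finsetSum, ← ha]
      rfl
    rw [this]
    exact Submodule.sum_mem _ fun j _ => Submodule.smul_mem _ _ (Submodule.subset_span ⟨j, rfl⟩)
  · intro i j
    apply Subtype.ext
    show lam i (e j) = _
    rw [hle]
    split_ifs <;> rfl
  · intro y
    apply Subtype.ext
    rw [AddSubmonoidClass.coe_finsetSum]
    exact hcy y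
  · intro i j b
    apply Subtype.ext
    simp only [Subalgebra.coe_add, Subalgebra.coe_mul, AddSubmonoidClass.coe_finsetSum, hamap, Subalgebra.coe_pow]
    exact h1 i j b
  · intro i j a ha
    exact Subtype.ext (h1' i j a ha)
  · intro b b'
    apply Subtype.ext
    simp only [Subalgebra.coe_add, Subalgebra.coe_mul, AddSubmonoidClass.coe_finsetSum, hamap, Subalgebra.coe_pow]
    rw [← h2 b b']
    simp only [Pi.smul_apply, smul_eq_mul]
    congr 1
    by_cases hb : b' = b
    · subst hb; simp
    · simp [Pi.single_eq_of_ne hb]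

end

section

open MvPowerSeries

instance mps_domain' {K : Type u} [Field K] {d : ℕ} : IsDomain (MvPowerSeries (Fin d) K) := NoZeroDivisors.to_isDomain _

theorem good_exists {A : Type u} [CommRing A] [IsDomain A] {D : Type v} [CommRing D] [IsDomain D] [Algebra A D]
    [Module.Finite A D] (hinj : Function.Injective (algebraMap A D)) (c0 : D) (hc0 : c0 ≠ 0) :
    ∃ (n : ℕ) (_ : 0 < n) (e : Fin n → D) (lam : Fin n → D →ₗ[A] A) (c : A), c ≠ 0 ∧
      (∀ i j, lam i (e j) = if i = j then c else 0) ∧ (∀ y : D, c • y = ∑ i, lam i y • e i) ∧ ∃ z, algebraMap A D c = z * c0 := by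
  classical
  haveI : Module.IsTorsionFree A D := by
    haveI : FaithfulSMul A D := (faithfulSMul_iff_algebraMap_injective A D).2 hinj
    infer_instance
  obtain ⟨n, hndef⟩ : ∃ n, n = Module.finrank A D := ⟨_, rfl⟩
  obtain ⟨e, he⟩ := exists_linearIndependent_of_le_finrank (R := A) (M := D) hndef.le
  have key : ∀ y : D, ∃ a : A, a ≠ 0 ∧ a • y ∈ Submodule.span A (Set.range e) := by
    intro y
    by_contra! hcon
    have : LinearIndependent A (Fin.cons y e : Fin (n+1) → D) := by
      refine he.finCons' y e (fun c x hx hc => ?_)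
      by_contra hne
      refine hcon c hne ?_
      rw [eq_neg_of_add_eq_zero_left hc]
      exact Submodule.neg_mem _ hx
    have := this.fintype_card_le_finrank
    rw [Fintype.card_fin] at this
    omega
  obtain ⟨ν, f, hf⟩ := Module.Finite.exists_fin (R := A) (M := D)
  choose a ha0 ha using key
  obtain ⟨a0, ha00, hz0⟩ : ∃ a0 : A, a0 ≠ 0 ∧ ∃ z, algebraMap A D a0 = z * c0 := by
    have h1 : Ideal.comap (algebraMap A D) (Ideal.span {c0}) ≠ ⊥ :=
      Ideal.comap_ne_bot_of_integral_mem hc0 (Ideal.mem_span_singleton_self c0) (Algebra.IsIntegral.isIntegral c0)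
    obtain ⟨a, ha, ha0⟩ := Submodule.exists_mem_ne_zero_of_ne_bot h1
    obtain ⟨z, hz⟩ := Ideal.mem_span_singleton'.1 (Ideal.mem_comap.1 ha)
    exact ⟨a, ha0, z, hz.symm⟩
  obtain ⟨z, hz⟩ := hz0
  set c := a0 * ∏ j, a (f j) with hcdef
  have hc : c ≠ 0 := mul_ne_zero ha00 (Finset.prod_ne_zero_iff.2 fun j _ => ha0 _)
  have hcs : ∀ y, c • y ∈ Submodule.span A (Set.range e) := by
    intro y
    have hy : y ∈ Submodule.span A (Set.range f) := by rw [hf]; trivial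
    refine Submodule.span_induction ?_ ?_ ?_ ?_ hy
    · rintro _ ⟨j, rfl⟩
      rw [hcdef, ← Finset.mul_prod_erase _ _ (Finset.mem_univ j), mul_comm (a (f j)), ← mul_assoc, mul_smul]
      exact Submodule.smul_mem _ _ (ha _)
    · rw [smul_zero]; exact Submodule.zero_mem _
    · intro x y _ _ hx hy; rw [smul_add]; exact Submodule.add_mem _ hx hy
    · intro b y _ hy; rw [smul_comm]; exact Submodule.smul_mem _ _ hy
  let B := Module.Basis.span he
  let g : D →ₗ[A] Submodule.span A (Set.range e) := (LinearMap.lsmul A D c).codRestrict _ hcs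
  have hg : ∀ y, (g y : D) = c • y := fun y => rfl
  refine ⟨n, ?_, e, fun i => (B.coord i) ∘ₗ g, c, hc, ?_, ?_, (algebraMap A D (∏ j, a (f j))) * z, ?_⟩
  · rw [hndef]; exact Module.finrank_pos
  · intro i j
    have : g (e j) = c • B j := by
      apply Subtype.ext
      rw [hg, Submodule.coe_smul, Module.Basis.span_apply]
    simp only [LinearMap.comp_apply, this, map_smul, Module.Basis.coord_apply, Module.Basis.repr_self, Finsupp.single_apply, smul_eq_mul]
    by_cases h : i = j
    · simp [h]
    · simp [h, Ne.symm h]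
  · intro y
    rw [← hg y, ← B.sum_repr (g y)]
    simp only [AddSubmonoidClass.coe_finsetSum, Submodule.coe_smul, B, Module.Basis.span_apply]
    refine Finset.sum_congr rfl fun i _ => ?_
    simp [B]
  · rw [hcdef, map_mul, hz]; ring

theorem M1 {K : Type u} [Field K] {d : ℕ} {D : Type v} [CommRing D] [IsDomain D] [Algebra (MvPowerSeries (Fin d) K) D]
    [Module.Finite (MvPowerSeries (Fin d) K) D] (hinj : Function.Injective (algebraMap (MvPowerSeries (Fin d) K) D))
    (c0 : D) (hc0 : c0 ≠ 0) : ∃ (E : ℝ) (α : Fin d →₀ ℕ), 0 ≤ E ∧ ∀ (r h : ℕ) (t : Fin d → ℕ) (u : Fin h → Fin r → D)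
    (h1 : ∀ (i : Fin d) (j : Fin h), algebraMap (MvPowerSeries (Fin d) K) D (X i) • u j ∈ xW K D r t ⊔ Submodule.span D (u '' {a | a < j}))
    (h2 : ∀ b, c0 • (Pi.single b 1 : Fin r → D) ∈ xW K D r t ⊔ Submodule.span D (Set.range u)),
    (r * ∏ i, (t i : ℝ)) ≤ h + r * E * (∏ i, (t i : ℝ) - ∏ i, ((t i - α i : ℕ) : ℝ)) := by
  obtain ⟨n, hn, e, lam, c, hc, hle, hcy, z, hz⟩ := good_exists hinj c0 hc0
  obtain ⟨ν, f, hf⟩ := Module.Finite.exists_fin (R := MvPowerSeries (Fin d) K) (M := D)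
  obtain ⟨α, hα⟩ := exists_finsupp_eq_lexOrder_of_ne_zero hc
  refine ⟨ν / n, α, by positivity, fun r h t u h1 h2 => ?_⟩
  rw [← mul_div_assoc]
  refine M1_core ν n hn f hf e lam c hle hcy α hα r h t u h1 fun b => ?_
  rw [hz, mul_smul]
  exact Submodule.smul_mem _ _ (h2 b)

end

section

theorem frob_section {κ : Type u} [Field κ] {P : Type v} [CommRing P] (p : ℕ) [hp : Fact p.Prime] [CharP P p]
    (π : P →+* κ) (hπ : Function.Surjective π) (hker : ∀ b, π b = 0 → b ^ p = 0) :
    ∃ σ : κ →+* P, ∀ a, π (σ a) = a := by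
  classical
  haveI : CharP κ p := by
    have h0 : (p : κ) = 0 := by rw [← map_natCast π, CharP.cast_eq_zero, map_zero]
    exact (CharP.charP_iff_prime_eq_zero hp.1).2 h0
  haveI : Nontrivial P := π.domain_nontrivial
  let T : Set (Subring P) := {Γ | (∀ b ∈ Γ, π b = 0 → b = 0) ∧ (frobenius P p).range ≤ Γ}
  obtain ⟨Γ, hΓ0, hΓ⟩ := zorn_le_nonempty₀ T (by
    intro c hc hchain y hy
    have hdir : DirectedOn (· ≤ ·) c := hchain.directedOn
    refine ⟨sSup c, ⟨?_, ?_⟩, fun z hz => le_sSup hz⟩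
    · intro b hb
      rw [Subring.mem_sSup_of_directedOn ⟨y, hy⟩ hdir] at hb
      obtain ⟨s, hs, hb⟩ := hb
      exact (hc hs).1 b hb
    · exact (hc hy).2.trans (le_sSup hy)) (frobenius P p).range ⟨by
      rintro _ ⟨a, rfl⟩ h
      rw [frobenius_def, map_pow] at h
      rw [frobenius_def]
      exact hker a (pow_eq_zero_iff hp.1.ne_zero |>.1 h), le_rfl⟩
  have hΓi := hΓ.1.1
  have hfr : ∀ a : P, a ^ p ∈ Γ := fun a => hΓ0 ⟨a, rfl⟩
  let F : Subfield κ :=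
    { Γ.map π with
      inv_mem' := by
        rintro _ ⟨a, ha, rfl⟩
        by_cases h0 : π a = 0
        · rw [h0, inv_zero]; exact (Γ.map π).zero_mem
        obtain ⟨b, hb⟩ := hπ ((π a)⁻¹)
        refine ⟨b ^ p * a ^ (p-1), Γ.mul_mem (hfr b) (Γ.pow_mem ha _), ?_⟩
        rw [map_mul, map_pow, map_pow, hb]
        have : p = (p - 1) + 1 := (Nat.succ_pred_eq_of_pos hp.1.pos).symm
        conv_lhs => rw [this]
        rw [Nat.add_sub_cancel, pow_succ, inv_pow]
        field_simp }
  have hF : ∀ y, y ∈ F ↔ ∃ a ∈ Γ, π a = y := fun y => Iff.rfl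
  have hsurj : ∀ y : κ, ∃ a ∈ Γ, π a = y := by
    intro y
    by_contra hy
    rw [← hF] at hy
    obtain ⟨β, hβ⟩ := hπ y
    have hβp : β ^ p ∈ Γ := hfr β
    let πF : Γ →+* F := (π.comp Γ.subtype).codRestrict F (fun a => ⟨a, a.2, rfl⟩)
    have hπF : Function.Injective πF := by
      rw [injective_iff_map_eq_zero]
      intro a ha
      apply Subtype.ext
      exact hΓi a a.2 (congrArg Subtype.val ha)
    let Γ' : Subring P := (Polynomial.eval₂RingHom Γ.subtype β).range
    have hle : Γ ≤ Γ' := fun a ha => ⟨Polynomial.C ⟨a, ha⟩, by simp⟩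
    have hβ' : β ∈ Γ' := ⟨Polynomial.X, by simp⟩
    have hT : Γ' ∈ T := by
      refine ⟨?_, hΓ.1.2.trans hle⟩
      rintro _ ⟨q, rfl⟩ h0
      let mon : Polynomial Γ := Polynomial.X ^ p - Polynomial.C ⟨β ^ p, hβp⟩
      have hmon : mon.Monic := Polynomial.monic_X_pow_sub_C _ hp.1.ne_zero
      have hev : Polynomial.eval₂ Γ.subtype β mon = 0 := by simp [mon]
      have hq : Polynomial.eval₂ Γ.subtype β q = Polynomial.eval₂ Γ.subtype β (q %ₘ mon) := by
        conv_lhs => rw [← Polynomial.modByMonic_add_div q mon]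
        rw [Polynomial.eval₂_add, Polynomial.eval₂_mul, hev, zero_mul, add_zero]
      rw [Polynomial.coe_eval₂RingHom, hq] at h0 ⊢
      set r := q %ₘ mon with hr
      have hdeg : (r.map πF).degree < p := by
        refine (Polynomial.degree_map_le).trans_lt ?_
        have := Polynomial.degree_modByMonic_lt q hmon
        rwa [Polynomial.degree_X_pow_sub_C hp.1.pos] at this
      have hr0 : r.map πF = 0 := by
        by_contra hne
        have hirr : Irreducible (Polynomial.X ^ p - Polynomial.C (πF ⟨β ^ p, hβp⟩)) := by
          refine X_pow_sub_C_irreducible_of_prime hp.1 fun b hb => hy ?_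
          have h1 : (b : κ) ^ p = y ^ p := by
            have h2 : (b : κ) ^ p = π (β ^ p) := congrArg Subtype.val hb
            rw [h2, map_pow, hβ]
          have : (b : κ) = y := frobenius_inj κ p (by simpa [frobenius_def] using h1)
          rw [← this]; exact b.2
        have hroot : Polynomial.aeval y (r.map πF) = 0 := by
          rw [Polynomial.aeval_def, Polynomial.eval₂_map, ← h0, Polynomial.hom_eval₂, hβ]
          rfl
        have hroot2 : Polynomial.aeval y (Polynomial.X ^ p - Polynomial.C (πF ⟨β ^ p, hβp⟩)) = 0 := by
          rw [map_sub, map_pow, Polynomial.aeval_X, Polynomial.aeval_C, sub_eq_zero, ← hβ, ← map_pow]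
          rfl
        have hmin := minpoly.eq_of_irreducible_of_monic hirr hroot2 (Polynomial.monic_X_pow_sub_C _ hp.1.ne_zero)
        have := minpoly.degree_le_of_ne_zero F y hne hroot
        rw [← hmin, Polynomial.degree_X_pow_sub_C hp.1.pos] at this
        exact absurd hdeg (not_lt.2 this)
      have : r = 0 := Polynomial.map_injective πF hπF (by rw [hr0, Polynomial.map_zero])
      rw [this, Polynomial.eval₂_zero]
    have := hΓ.2 hT hle hβ'
    exact hy ⟨β, this, hβ⟩
  let e : Γ →+* κ := π.comp Γ.subtype
  have he : Function.Bijective e := by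
    constructor
    · rw [injective_iff_map_eq_zero]
      intro a ha
      exact Subtype.ext (hΓi a a.2 ha)
    · intro y
      obtain ⟨a, ha, h⟩ := hsurj y
      exact ⟨⟨a, ha⟩, h⟩
  let E := RingEquiv.ofBijective e he
  exact ⟨Γ.subtype.comp E.symm.toRingHom, fun a => E.apply_symm_apply a⟩

theorem formallySmooth_zmod (p : ℕ) [hp : Fact p.Prime] (κ : Type u) [Field κ] [Algebra (ZMod p) κ] :
    Algebra.FormallySmooth (ZMod p) κ := by
  apply Algebra.FormallySmooth.of_comp_surjective
  intro B _ _ I hI φ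
  let P : Subring (κ × B) := RingHom.eqLocus (φ.toRingHom.comp (RingHom.fst κ B)) ((Ideal.Quotient.mk I).comp (RingHom.snd κ B))
  have hP : ∀ x : κ × B, x ∈ P ↔ φ x.1 = Ideal.Quotient.mk I x.2 := fun x => Iff.rfl
  have hpκ : (p : κ) = 0 := by rw [← map_natCast (algebraMap (ZMod p) κ), CharP.cast_eq_zero, map_zero]
  have hpB : (p : B) = 0 := by rw [← map_natCast (algebraMap (ZMod p) B), CharP.cast_eq_zero, map_zero]
  haveI : Nontrivial P := ⟨0, 1, fun h => zero_ne_one (congrArg (fun x : P => x.1.1) h)⟩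
  haveI : CharP P p := (CharP.charP_iff_prime_eq_zero hp.1).2 (Subtype.ext (Prod.ext (by simpa using hpκ) (by simpa using hpB)))
  obtain ⟨σ, hσ⟩ := frob_section p ((RingHom.fst κ B).comp P.subtype) (by
      intro a
      obtain ⟨b, hb⟩ := Ideal.Quotient.mk_surjective (φ a)
      exact ⟨⟨(a, b), hb.symm⟩, rfl⟩) (by
      rintro ⟨⟨a, b⟩, h⟩ ha
      have ha : a = 0 := ha
      subst ha
      rw [hP] at h
      simp only [map_zero] at h
      have hb : b ∈ I := Ideal.Quotient.eq_zero_iff_mem.1 h.symm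
      have hb2 : b ^ p = 0 := by
        have h2 : b ^ 2 = 0 := by
          have := Ideal.pow_mem_pow hb 2
          rwa [hI] at this
        obtain ⟨m, hm⟩ := Nat.exists_eq_add_of_le hp.1.two_le
        rw [hm, pow_add, h2, zero_mul]
      apply Subtype.ext
      apply Prod.ext
      · simp [hp.1.ne_zero]
      · simpa using hb2)
  refine ⟨{ (RingHom.snd κ B).comp (P.subtype.comp σ) with commutes' := fun r => ?_ }, ?_⟩
  · exact congrFun (congrArg DFunLike.coe (RingHom.ext_zmod (((RingHom.snd κ B).comp (P.subtype.comp σ)).comp (algebraMap (ZMod p) κ)) (algebraMap (ZMod p) B))) r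
  · ext a
    have h1 := (hP (σ a).1).1 (σ a).2
    have h2 : (σ a).1.1 = a := hσ a
    rw [h2] at h1
    exact h1.symm

theorem formallySmooth_rat (κ : Type u) [Field κ] [Algebra ℚ κ] : Algebra.FormallySmooth ℚ κ := by
  obtain ⟨s, hs⟩ := exists_isTranscendenceBasis ℚ κ
  haveI : Algebra.IsAlgebraic (IntermediateField.adjoin ℚ (Set.range ((↑) : s → κ))) κ := hs.isAlgebraic_field
  exact Algebra.FormallySmooth.of_algebraicIndependent_of_isSeparable hs.1

open IsLocalRing in
theorem coeff_field (S : Type u) [CommRing S] [IsLocalRing S] [IsAdicComplete (maximalIdeal S) S]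
    (hS : ∃ K : Subring S, IsField K) : ∃ σ : ResidueField S →+* S, ∀ a, residue S (σ a) = a := by
  obtain ⟨K, hK⟩ := hS
  letI := hK.toField
  obtain ⟨p, hp⟩ := CharP.exists K
  rcases CharP.char_is_prime_or_zero K p with hp' | rfl
  · haveI : Fact p.Prime := ⟨hp'⟩
    letI : Algebra (ZMod p) S := (K.subtype.comp (ZMod.castHom dvd_rfl K)).toAlgebra
    letI : Algebra (ZMod p) (ResidueField S) := inferInstance
    haveI := formallySmooth_zmod p (ResidueField S)
    obtain ⟨g, hg⟩ := Algebra.FormallySmooth.exists_mkₐ_comp_eq_of_isAdicComplete (R := ZMod p) (I := maximalIdeal S) (AlgHom.id (ZMod p) (ResidueField S))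
    exact ⟨g.toRingHom, fun a => DFunLike.congr_fun hg a⟩
  · haveI : CharZero K := CharP.charP_to_charZero K
    letI : Algebra ℚ S := (K.subtype.comp (algebraMap ℚ K)).toAlgebra
    letI : Algebra ℚ (ResidueField S) := ((residue S).comp (algebraMap ℚ S)).toAlgebra
    haveI := formallySmooth_rat (ResidueField S)
    obtain ⟨g, hg⟩ := Algebra.FormallySmooth.exists_mkₐ_comp_eq_of_isAdicComplete (R := ℚ) (I := maximalIdeal S) (AlgHom.id ℚ (ResidueField S))
    exact ⟨g.toRingHom, fun a => DFunLike.congr_fun hg a⟩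

end

section

theorem mps_lift {K : Type u} [Field K] {S : Type v} [CommRing S] (I : Ideal S) [IsAdicComplete I S]
    (σ : K →+* S) {d : ℕ} (x : Fin d → S) (hx : ∀ i, x i ∈ I) :
    ∃ Φ : MvPowerSeries (Fin d) K →+* S, (∀ p : MvPolynomial (Fin d) K, Φ p = MvPolynomial.eval₂Hom σ x p) := by
  have hI : ∀ n, ∀ p ∈ (MvPolynomial.idealOfVars (Fin d) K) ^ n, MvPolynomial.eval₂Hom σ x p ∈ I ^ n := by
    intro n p hp
    have h1 : (MvPolynomial.idealOfVars (Fin d) K).map (MvPolynomial.eval₂Hom σ x) ≤ I := by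
      rw [MvPolynomial.idealOfVars, Ideal.map_span, Ideal.span_le]
      rintro _ ⟨_, ⟨i, rfl⟩, rfl⟩
      simpa using hx i
    have h2 := Ideal.mem_map_of_mem (MvPolynomial.eval₂Hom σ x) hp
    rw [Ideal.map_pow] at h2
    exact Ideal.pow_right_mono h1 n h2
  let f : (n : ℕ) → MvPowerSeries (Fin d) K →+* S ⧸ I ^ n := fun n =>
    (Ideal.Quotient.lift ((MvPolynomial.idealOfVars (Fin d) K) ^ n)
      ((Ideal.Quotient.mk (I ^ n)).comp (MvPolynomial.eval₂Hom σ x)) (fun p hp =>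
        Ideal.Quotient.eq_zero_iff_mem.2 (hI n p hp))).comp
      (MvPowerSeries.truncTotalAlgHom (Fin d) K n).toRingHom
  have hfv : ∀ n p, f n p = Ideal.Quotient.mk (I ^ n) (MvPolynomial.eval₂Hom σ x (MvPowerSeries.truncTotal n p)) :=
    fun n p => rfl
  have hf : ∀ {m n : ℕ} (hle : m ≤ n), (Ideal.Quotient.factorPow I hle).comp (f n) = f m := by
    intro m n hle
    ext p
    rw [RingHom.comp_apply, hfv, hfv]
    refine Eq.trans (Ideal.Quotient.factor_mk _ _) ?_
    rw [Ideal.Quotient.eq, ← map_sub]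
    apply hI
    exact MvPowerSeries.truncTotal_sub_truncTotal_mem_pow_idealOfVars hle le_rfl p
  refine ⟨IsAdicComplete.liftRingHom I f hf, fun p => ?_⟩
  apply sub_eq_zero.1
  have := (inferInstance : IsAdicComplete I S).toIsHausdorff
  refine (this.haus _ fun n => ?_)
  rw [SModEq.zero, smul_eq_mul, Ideal.mul_top, ← Ideal.Quotient.eq_zero_iff_mem, map_sub,
    IsAdicComplete.mk_liftRingHom, sub_eq_zero]
  rw [hfv, Ideal.Quotient.eq, ← map_sub]
  apply hI
  refine (MvPolynomial.mem_pow_idealOfVars_iff' ..).mpr (fun x hx ↦ ?_)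
  rw [MvPolynomial.coeff_sub, sub_eq_zero, MvPowerSeries.coeff_truncTotal _ (by omega), MvPolynomial.coeff_coe]

end

section

open IsLocalRing

theorem mem_smul_pi {A : Type u} [CommRing A] (I : Ideal A) (n : ℕ) (v : Fin n → A) :
    v ∈ I • (⊤ : Submodule A (Fin n → A)) ↔ ∀ i, v i ∈ I := by
  constructor
  · intro h i
    refine Submodule.smul_induction_on h ?_ ?_
    · intro a ha w _
      exact I.mul_mem_right _ ha
    · intro a b ha hb
      exact I.add_mem ha hb
  · intro h
    have : v = ∑ i, v i • (Pi.single i 1 : Fin n → A) := by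
      ext j; simp [Finset.sum_apply, Pi.single_apply]
    rw [this]
    exact Submodule.sum_mem _ fun i _ => Submodule.smul_mem_smul (h i) trivial

theorem precomplete_pi {A : Type u} [CommRing A] (I : Ideal A) [IsPrecomplete I A] (n : ℕ) :
    IsPrecomplete I (Fin n → A) := by
  refine ⟨fun f hf => ?_⟩
  have h1 : ∀ i, ∃ L : A, ∀ m, f m i ≡ L [SMOD (I ^ m • ⊤ : Submodule A A)] := by
    intro i
    refine IsPrecomplete.prec ‹_› (f := fun m => f m i) ?_
    intro m k hmk
    have := hf hmk
    rw [SModEq.sub_mem] at this ⊢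
    rw [smul_eq_mul, Ideal.mul_top]
    exact (mem_smul_pi _ n _).1 this i
  choose L hL using h1
  refine ⟨L, fun m => ?_⟩
  rw [SModEq.sub_mem]
  refine (mem_smul_pi _ n _).2 fun i => ?_
  have := hL i m
  rw [SModEq.sub_mem, smul_eq_mul, Ideal.mul_top] at this
  exact this

theorem finite_over_mps {S : Type u} [CommRing S] [IsLocalRing S] [IsAdicComplete (maximalIdeal S) S]
    (hfg : (maximalIdeal S).FG) (K : Type v) [Field K] {d : ℕ} [Algebra (MvPowerSeries (Fin d) K) S]
    (hres : ∀ a : S, ∃ b : MvPowerSeries (Fin d) K, a - algebraMap _ S b ∈ maximalIdeal S)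
    (hX : ∀ i, algebraMap (MvPowerSeries (Fin d) K) S (MvPowerSeries.X i) ∈ maximalIdeal S)
    (N : ℕ) (hN : maximalIdeal S ^ N ≤ Ideal.span (Set.range fun i => algebraMap (MvPowerSeries (Fin d) K) S (MvPowerSeries.X i))) :
    Module.Finite (MvPowerSeries (Fin d) K) S := by
  classical
  have hmap : (maximalIdeal (MvPowerSeries (Fin d) K)).map (algebraMap _ S) =
      Ideal.span (Set.range fun i => algebraMap (MvPowerSeries (Fin d) K) S (MvPowerSeries.X i)) := by
    rw [mps_maximalIdeal, Ideal.map_span, ← Set.range_comp]; rfl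
  have step : ∀ i, ∃ F : Finset S, (⊤ : Submodule (MvPowerSeries (Fin d) K) S) =
      Submodule.span _ (F : Set S) ⊔ (maximalIdeal S ^ i).restrictScalars _ := by
    intro i
    induction i with
    | zero => exact ⟨∅, by simp⟩
    | succ i ih =>
      obtain ⟨F, hF⟩ := ih
      obtain ⟨G, hG⟩ := hfg.pow (n := i)
      refine ⟨F ∪ G, ?_⟩
      symm
      rw [eq_top_iff, hF]
      refine sup_le (le_trans (Submodule.span_mono (by simp)) le_sup_left) ?_
      intro y hy
      have hy : y ∈ maximalIdeal S ^ i := hy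
      have hy1 := hy
      rw [← hG] at hy1
      have hGm : ∀ g ∈ G, g ∈ maximalIdeal S ^ i := fun g hg => hG ▸ Submodule.subset_span hg
      refine Submodule.span_induction (p := fun y _ => y ∈ _) ?_ ?_ ?_ ?_ hy1
      · intro g hg
        exact Submodule.mem_sup_left (Submodule.subset_span (by simp; right; exact hg))
      · exact Submodule.zero_mem _
      · intro a b _ _ ha hb; exact Submodule.add_mem _ ha hb
      · intro a z hz hz2
        obtain ⟨b, hb⟩ := hres a
        have : a • z = b • z + (a - algebraMap _ S b) * z := by
          rw [smul_eq_mul, Algebra.smul_def]; ring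
        rw [this]
        refine Submodule.add_mem _ (Submodule.smul_mem _ _ hz2) (Submodule.mem_sup_right ?_)
        change _ ∈ maximalIdeal S ^ (i+1)
        rw [pow_succ']
        exact Ideal.mul_mem_mul hb (hG ▸ hz)
  obtain ⟨F, hF⟩ := step N
  haveI := precomplete_pi (maximalIdeal (MvPowerSeries (Fin d) K)) F.card
  haveI : IsHausdorff (maximalIdeal (MvPowerSeries (Fin d) K)) S := by
    rw [← IsHausdorff.map_algebraMap_iff (S := S)]
    have hle : (maximalIdeal (MvPowerSeries (Fin d) K)).map (algebraMap _ S) ≤ maximalIdeal S := by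
      rw [hmap, Ideal.span_le]; rintro _ ⟨i, rfl⟩; exact hX i
    have hh := (inferInstance : IsAdicComplete (maximalIdeal S) S).toIsHausdorff
    refine ⟨fun y hy => hh.haus y fun n => ?_⟩
    have := hy n
    rw [SModEq.zero, smul_eq_mul, Ideal.mul_top] at this ⊢
    exact Ideal.pow_right_mono hle n this
  let e := F.equivFin
  let f : (Fin F.card → MvPowerSeries (Fin d) K) →ₗ[MvPowerSeries (Fin d) K] S :=
    Fintype.linearCombination _ (fun i => ((e.symm i : F) : S))
  have hrange : LinearMap.range f = Submodule.span _ (F : Set S) := by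
    rw [Fintype.range_linearCombination]
    congr 1
    ext z; simp only [Set.mem_range]
    constructor
    · rintro ⟨i, rfl⟩; exact (e.symm i).2
    · intro hz; exact ⟨e ⟨z, hz⟩, by simp⟩
  have hsurj : Function.Surjective f := by
    refine surjective_of_mkQ_comp_surjective (I := maximalIdeal (MvPowerSeries (Fin d) K)) ?_
    rw [← LinearMap.range_eq_top, LinearMap.range_comp, hrange, Submodule.map_mkQ_eq_top, sup_comm]
    refine top_le_iff.1 (hF.le.trans ?_)
    refine sup_le_sup le_rfl ?_
    rw [Ideal.smul_top_eq_map, hmap]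
    exact hN
  exact Module.Finite.of_surjective f hsurj

end

section

open IsLocalRing

theorem mps_dim_le (K : Type u) [Field K] (d : ℕ) : ringKrullDim (MvPowerSeries (Fin d) K) ≤ d := by
  rw [← IsLocalRing.maximalIdeal_height_eq_ringKrullDim]
  have h1 := (maximalIdeal (MvPowerSeries (Fin d) K)).height_le_spanFinrank Ideal.IsPrime.ne_top'
  have h2 : (maximalIdeal (MvPowerSeries (Fin d) K)).spanFinrank ≤ d := by
    rw [mps_maximalIdeal]
    refine (Submodule.spanFinrank_span_le_ncard_of_finite (Set.finite_range _)).trans ?_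
    rw [← Set.image_univ]
    refine (Set.ncard_image_le).trans ?_
    simp
  have h3 : (maximalIdeal (MvPowerSeries (Fin d) K)).height ≤ (d : ℕ∞) := h1.trans (by exact_mod_cast h2)
  exact_mod_cast h3

theorem dim_integral_le {A : Type u} {S : Type v} [CommRing A] [CommRing S] [Algebra A S] [Algebra.IsIntegral A S] :
    ringKrullDim S ≤ ringKrullDim (A ⧸ RingHom.ker (algebraMap A S)) := by
  letI := (RingHom.kerLift (algebraMap A S)).toAlgebra
  haveI : IsScalarTower A (A ⧸ RingHom.ker (algebraMap A S)) S := IsScalarTower.of_algebraMap_eq fun a => rfl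
  haveI : Algebra.IsIntegral (A ⧸ RingHom.ker (algebraMap A S)) S := Algebra.IsIntegral.tower_top A
  refine Order.krullDim_le_of_strictMono (PrimeSpectrum.comap (algebraMap (A ⧸ RingHom.ker (algebraMap A S)) S)) ?_
  intro P Q hPQ
  exact Ideal.IsIntegral.comap_lt_comap hPQ

theorem dim_completion_ge {R0 : Type u} {S : Type v} [CommRing R0] [CommRing S] [IsLocalRing R0] [IsLocalRing S] [Algebra R0 S]
    [Module.Flat R0 S] [IsLocalHom (algebraMap R0 S)] : ringKrullDim R0 ≤ ringKrullDim S := by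
  refine iSup_le fun l => ?_
  obtain ⟨Q, hQ⟩ : ∃ Q : Ideal S, ∃ _ : Q.IsPrime, Q.LiesOver l.last.asIdeal := by
    haveI : Module.FaithfullyFlat R0 S := Module.FaithfullyFlat.of_flat_of_isLocalHom
    obtain ⟨Q, hQ⟩ := PrimeSpectrum.comap_surjective_of_faithfullyFlat (A := R0) (B := S) l.last
    exact ⟨Q.asIdeal, Q.2, ⟨by rw [← hQ]; rfl⟩⟩
  obtain ⟨h1, h2⟩ := hQ
  obtain ⟨L, hL, -⟩ := Ideal.exists_ltSeries_of_hasGoingDown l Q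
  rw [← hL]
  exact le_iSup (fun L : LTSeries (PrimeSpectrum S) => ((L.length : ℕ∞) : WithBot ℕ∞)) L

theorem cohen_embed {R0 : Type u} [CommRing R0] [IsDomain R0] [IsNoetherianRing R0] [IsLocalRing R0]
    (hfield: ∃ K : Subring R0, IsField K) {d : ℕ} (hd : ringKrullDim R0 = d) (x : Fin d → R0)
    (hx : ∀ i, x i ∈ maximalIdeal R0) (N : ℕ) (hN : maximalIdeal R0 ^ N ≤ Ideal.span (Set.range x)) :
    ∃ (K : Type u) (_ : Field K) (D : Type u) (_ : CommRing D) (_ : IsDomain D)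
      (_ : Algebra (MvPowerSeries (Fin d) K) D) (_ : Module.Finite (MvPowerSeries (Fin d) K) D) (φ : R0 →+* D),
      Function.Injective (algebraMap (MvPowerSeries (Fin d) K) D) ∧ Function.Injective φ ∧
      ∀ i, φ (x i) = algebraMap (MvPowerSeries (Fin d) K) D (MvPowerSeries.X i) := by
  let S := AdicCompletion (maximalIdeal R0) R0
  have hmS : maximalIdeal S = (maximalIdeal R0).map (algebraMap R0 S) := AdicCompletion.maximalIdeal_eq_map ..
  have hfg : (maximalIdeal S).FG := by
    rw [hmS]; exact Ideal.FG.map (IsNoetherian.noetherian (maximalIdeal R0)) _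
  have hSf : ∃ K : Subring S, IsField K := by
    obtain ⟨k, hk⟩ := hfield
    refine ⟨k.map (algebraMap R0 S), ?_⟩
    letI := hk.toField
    let f : k →+* k.map (algebraMap R0 S) := ((algebraMap R0 S).comp k.subtype).codRestrict _
      (fun a => ⟨a, a.2, rfl⟩)
    have hf : Function.Bijective f := by
      refine ⟨RingHom.injective f, ?_⟩
      rintro ⟨_, ⟨a, ha, rfl⟩⟩
      exact ⟨⟨a, ha⟩, rfl⟩
    exact MulEquiv.isField hk (RingEquiv.ofBijective f hf).symm.toMulEquiv
  obtain ⟨σ, hσ⟩ := coeff_field S hSf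
  have hxS : ∀ i, algebraMap R0 S (x i) ∈ maximalIdeal S := fun i => by
    rw [hmS]; exact Ideal.mem_map_of_mem _ (hx i)
  obtain ⟨Φ, hΦ⟩ := mps_lift (maximalIdeal S) σ (fun i => algebraMap R0 S (x i)) hxS
  letI : Algebra (MvPowerSeries (Fin d) (ResidueField S)) S := Φ.toAlgebra
  have hX : ∀ i, algebraMap (MvPowerSeries (Fin d) (ResidueField S)) S (MvPowerSeries.X i) = algebraMap R0 S (x i) := by
    intro i
    have := hΦ (MvPolynomial.X i)
    rw [MvPolynomial.coe_X] at this
    refine this.trans ?_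
    simp
  haveI hfin : Module.Finite (MvPowerSeries (Fin d) (ResidueField S)) S := by
    refine finite_over_mps hfg (ResidueField S) ?_ ?_ N ?_
    · intro a
      refine ⟨MvPowerSeries.C (residue S a), ?_⟩
      have := hΦ (MvPolynomial.C (residue S a))
      rw [MvPolynomial.coe_C] at this
      change a - Φ _ ∈ _
      rw [this, ← residue_eq_zero_iff, map_sub]
      simp [hσ]
    · intro i; rw [hX]; exact hxS i
    · simp_rw [hX]
      rw [hmS, ← Ideal.map_pow]
      refine (Ideal.map_mono hN).trans ?_
      rw [Ideal.map_span, ← Set.range_comp]; rfl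
  have hinj : Function.Injective (algebraMap (MvPowerSeries (Fin d) (ResidueField S)) S) := by
    rw [injective_iff_map_eq_zero]
    intro c hc
    by_contra hc0
    have h1 : ringKrullDim R0 ≤ ringKrullDim S := dim_completion_ge
    have h2 := dim_integral_le (A := MvPowerSeries (Fin d) (ResidueField S)) (S := S)
    have h3 := ringKrullDim_succ_le_of_surjective (Ideal.Quotient.mk (RingHom.ker (algebraMap (MvPowerSeries (Fin d) (ResidueField S)) S)))
      Ideal.Quotient.mk_surjective (mem_nonZeroDivisors_of_ne_zero hc0) (Ideal.Quotient.eq_zero_iff_mem.2 hc)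
    have h4 := mps_dim_le (ResidueField S) d
    rw [hd] at h1
    have h5 : ((d : ℕ) : WithBot ℕ∞) + 1 ≤ (d : ℕ) := le_trans (by gcongr; exact h1.trans h2) (h3.trans h4)
    have : d + 1 ≤ d := by exact_mod_cast h5
    omega
  obtain ⟨Q, -, hQp, hQ⟩ := Ideal.exists_ideal_over_prime_of_isIntegral (⊥ : Ideal (MvPowerSeries (Fin d) (ResidueField S))) (⊥ : Ideal S)
    (by rw [← RingHom.ker_eq_comap_bot, (RingHom.injective_iff_ker_eq_bot _).1 hinj])
  obtain ⟨q, hq, hqQ⟩ := Ideal.exists_minimalPrimes_le (bot_le : (⊥ : Ideal S) ≤ Q)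
  haveI : q.IsPrime := hq.1.1
  refine ⟨ResidueField S, inferInstance, S ⧸ q, inferInstance, inferInstance, inferInstance, ?_,
    (Ideal.Quotient.mk q).comp (algebraMap R0 S), ?_, ?_, ?_⟩
  · infer_instance
  · rw [injective_iff_map_eq_zero]
    intro c hc
    have hc : algebraMap _ S c ∈ q := Ideal.Quotient.eq_zero_iff_mem.1 hc
    have : c ∈ Q.comap (algebraMap (MvPowerSeries (Fin d) (ResidueField S)) S) := hqQ hc
    rw [hQ] at this
    exact this
  · rw [injective_iff_map_eq_zero]
    intro c hc
    have hc : algebraMap _ S c ∈ q := Ideal.Quotient.eq_zero_iff_mem.1 hc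
    by_contra hc0
    refine notMem_nonZeroDivisors_of_mem_mem_minimalPrimes hc hq ?_
    have h1 := Module.Flat.isSMulRegular_of_nonZeroDivisors (M := S) (mem_nonZeroDivisors_of_ne_zero hc0)
    rw [mem_nonZeroDivisors_iff_right]
    intro z hz
    apply h1
    change c • z = c • 0
    rw [Algebra.smul_def, mul_comm, smul_zero]
    exact hz
  · intro i
    change Ideal.Quotient.mk q _ = Ideal.Quotient.mk q _
    rw [hX]

end

section

open IsLocalRing
open scoped TensorProduct

theorem frac_map {R0 : Type u} [CommRing R0] [IsDomain R0] {N : Type v} [AddCommGroup N] [Module R0 N] [Module.Finite R0 N]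
    (r : ℕ) (hr : Module.finrank (FractionRing R0) (FractionRing R0 ⊗[R0] N) = r) :
    ∃ (g : N →ₗ[R0] (Fin r → R0)) (c : R0), c ≠ 0 ∧ ∀ b, ∃ n, g n = c • (Pi.single b 1 : Fin r → R0) := by
  classical
  let B := Module.finBasisOfFinrankEq (FractionRing R0) (FractionRing R0 ⊗[R0] N) hr
  let ι : N →ₗ[R0] FractionRing R0 ⊗[R0] N := TensorProduct.mk R0 (FractionRing R0) N 1
  let g1 : N →ₗ[R0] (Fin r → FractionRing R0) := (B.equivFun.toLinearMap.restrictScalars R0) ∘ₗ ι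
  obtain ⟨k, n, hn⟩ := Module.Finite.exists_fin (R := R0) (M := N)
  obtain ⟨c, hc⟩ := IsLocalization.exist_integer_multiples_of_finite (nonZeroDivisors R0)
    (fun z : Fin k × Fin r => g1 (n z.1) z.2)
  have hc0 : (c : R0) ≠ 0 := nonZeroDivisors.ne_zero c.2
  let L : (Fin r → R0) →ₗ[R0] (Fin r → FractionRing R0) :=
    LinearMap.pi fun b => (Algebra.linearMap R0 (FractionRing R0)) ∘ₗ LinearMap.proj b
  have hLv : ∀ v b, L v b = algebraMap R0 (FractionRing R0) (v b) := fun v b => rfl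
  have hL : Function.Injective L := by
    intro v w h
    ext b
    exact IsFractionRing.injective R0 (FractionRing R0) (congrFun h b)
  have hrg : ∀ y, ((c : R0) • g1) y ∈ LinearMap.range L := by
    intro y
    have hy : y ∈ Submodule.span R0 (Set.range n) := hn ▸ trivial
    refine Submodule.span_induction (p := fun y _ => ((c : R0) • g1) y ∈ LinearMap.range L) ?_ ?_ ?_ ?_ hy
    · rintro _ ⟨i, rfl⟩
      choose a ha using fun b => hc (i, b)
      exact ⟨a, funext fun b => ha b⟩
    · simp
    · intro a b _ _ h1 h2; rw [map_add]; exact Submodule.add_mem _ h1 h2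
    · intro a b _ h1; rw [map_smul]; exact Submodule.smul_mem _ _ h1
  let g : N →ₗ[R0] (Fin r → R0) := (LinearEquiv.ofInjective L hL).symm.toLinearMap ∘ₗ
    (LinearMap.codRestrict (LinearMap.range L) ((c : R0) • g1) hrg)
  have hg : ∀ y, L (g y) = (c : R0) • g1 y := by
    intro y
    have : (LinearEquiv.ofInjective L hL) (g y) = LinearMap.codRestrict (LinearMap.range L) ((c : R0) • g1) hrg y := by
      simp only [g, LinearMap.comp_apply, LinearEquiv.coe_coe, LinearEquiv.apply_symm_apply]
    have := congrArg Subtype.val this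
    exact this
  choose z hz using fun b => IsLocalizedModule.surj (nonZeroDivisors R0) ι (B b)
  let s : Fin r → R0 := fun b => (z b).2
  have hs : ∀ b, s b ≠ 0 := fun b => nonZeroDivisors.ne_zero (z b).2.2
  have hs' : ∀ b, s b • B b = ι (z b).1 := fun b => hz b
  refine ⟨g, c * ∏ b, s b, mul_ne_zero hc0 (Finset.prod_ne_zero_iff.2 fun b _ => hs b), fun b => ?_⟩
  refine ⟨(∏ a ∈ Finset.univ.erase b, s a) • (z b).1, hL ?_⟩
  rw [hg, map_smul]
  have h1 : g1 (z b).1 = s b • (Pi.single b 1 : Fin r → FractionRing R0) := by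
    change B.equivFun (ι (z b).1) = _
    rw [← hs']
    have : B.equivFun (s b • B b) = s b • B.equivFun (B b) :=
      (B.equivFun.toLinearMap.restrictScalars R0).map_smul _ _
    rw [this]
    congr 1
    ext a
    rw [Module.Basis.equivFun_self, Pi.single_apply]
    simp [eq_comm]
  rw [h1, map_smul, smul_smul, smul_smul]
  have h2 : L (Pi.single b 1) = Pi.single b 1 := by
    ext a; rw [hLv]; by_cases h : a = b
    · subst h; simp
    · simp [Pi.single_eq_of_ne h]
  rw [h2, mul_assoc, mul_comm (∏ a ∈ _, s a), Finset.mul_prod_erase Finset.univ s (Finset.mem_univ b)]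

theorem sup_span_mem_mono {D : Type u} {V : Type v} [CommRing D] [AddCommGroup V] [Module D V] (W : Submodule D V) {A B : Set V}
    (h : A ⊆ B) {v : V} (hv : v ∈ W ⊔ Submodule.span D A) : v ∈ W ⊔ Submodule.span D B := by
  have : W ⊔ Submodule.span D A ≤ W ⊔ Submodule.span D B := sup_le_sup le_rfl (Submodule.span_mono h)
  exact this hv

theorem chain_transfer {R : Type u} [CommRing R] {M : Type v} [AddCommGroup M] [Module R M]
    {K : Type u} [Field K] {d : ℕ} {D : Type w} [CommRing D] [Algebra (MvPowerSeries (Fin d) K) D]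
    (φ : R →+* D) (x : Fin d → R) (hφ : ∀ i, φ (x i) = algebraMap (MvPowerSeries (Fin d) K) D (MvPowerSeries.X i))
    {r : ℕ} (g : M →ₛₗ[φ] (Fin r → D)) (c0 : D) (hg : ∀ b, ∃ n, g n = c0 • (Pi.single b 1 : Fin r → D))
    (t : Fin d → ℕ) (h : ℕ)
    (H : HasQLFiltration R (Ideal.span (Set.range x)) (M ⧸ (powerIdeal x t • (⊤ : Submodule R M))) h) :
    ∃ u : Fin h → Fin r → D, (∀ i j, algebraMap (MvPowerSeries (Fin d) K) D (MvPowerSeries.X i) • u j ∈ xW K D r t ⊔ Submodule.span D (u '' {a | a < j})) ∧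
      (∀ b, c0 • (Pi.single b 1 : Fin r → D) ∈ xW K D r t ⊔ Submodule.span D (Set.range u)) := by
  obtain ⟨c, hmono, hc0, hcl, hc⟩ := H
  choose m hm using fun i => (hc i).1
  choose y hy using fun i => Submodule.Quotient.mk_surjective _ (m i)
  let u : Fin h → Fin r → D := fun i => g (y i)
  have key : ∀ j : Fin (h+1), ∀ w : M, Submodule.Quotient.mk w ∈ c j →
      g w ∈ xW K D r t ⊔ Submodule.span D (u '' {a | a.castSucc < j}) := by
    intro j
    induction j using Fin.induction with
    | zero =>
      intro w hw
      rw [hc0, Submodule.mem_bot, Submodule.Quotient.mk_eq_zero] at hw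
      refine Submodule.mem_sup_left ?_
      refine Submodule.smul_induction_on hw ?_ ?_
      · intro a ha n _
        rw [map_smulₛₗ, mem_xW']
        intro b
        rw [Pi.smul_apply, smul_eq_mul]
        refine Ideal.mul_mem_right _ _ ?_
        rw [xD_eq]
        have h1 := Ideal.mem_map_of_mem φ ha
        rw [powerIdeal, Ideal.map_span, ← Set.range_comp] at h1
        have : (φ ∘ fun i => x i ^ t i) = fun i => algebraMap (MvPowerSeries (Fin d) K) D (MvPowerSeries.X i) ^ t i := by
          ext i; simp [hφ]
        rw [this] at h1
        exact h1
      · intro a b ha hb; rw [map_add]; exact Submodule.add_mem _ ha hb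
    | succ j ih =>
      intro w hw
      rw [hm j, Submodule.mem_sup] at hw
      obtain ⟨p, hp, q, hq, hpq⟩ := hw
      obtain ⟨a, rfl⟩ := Submodule.mem_span_singleton.1 hq
      have h1 : (Submodule.Quotient.mk (w - a • y j) : M ⧸ (powerIdeal x t • (⊤ : Submodule R M))) ∈ c j.castSucc := by
        rw [Submodule.Quotient.mk_sub, Submodule.Quotient.mk_smul, hy, ← hpq, add_sub_cancel_right]
        exact hp
      have h2 := ih _ h1
      have h3 : g w = g (w - a • y j) + φ a • u j := by
        rw [map_sub, map_smulₛₗ]; simp [u]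
      rw [h3]
      refine Submodule.add_mem _ ?_ ?_
      · refine sup_span_mem_mono _ (Set.image_mono ?_) h2
        intro a ha
        exact lt_trans (show a.castSucc < j.castSucc from ha) (Fin.castSucc_lt_succ)
      · refine Submodule.mem_sup_right (Submodule.smul_mem _ _ (Submodule.subset_span ⟨j, Fin.castSucc_lt_succ, rfl⟩))
  refine ⟨u, ?_, ?_⟩
  · intro i j
    have h1 : (Submodule.Quotient.mk (x i • y j) : M ⧸ (powerIdeal x t • (⊤ : Submodule R M))) ∈ c j.castSucc := by
      rw [Submodule.Quotient.mk_smul, hy]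
      refine (hc j).2 _ (Ideal.subset_span ⟨i, rfl⟩) _ ?_
      rw [hm j]
      exact Submodule.mem_sup_right (Submodule.mem_span_singleton_self _)
    have h2 := key _ _ h1
    rw [map_smulₛₗ, hφ] at h2
    exact h2
  · intro b
    obtain ⟨n, hn⟩ := hg b
    rw [← hn]
    have h1 := key (Fin.last h) n (by rw [hcl]; trivial)
    exact sup_span_mem_mono _ (Set.image_subset_range _ _) h1

end

section

open IsLocalRing
open scoped TensorProduct ENNReal

theorem subfield_map {R : Type u} {S : Type v} [CommRing R] [CommRing S] [Nontrivial S] (f : R →+* S)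
    (hfield : ∃ K : Subring R, IsField K) : ∃ K : Subring S, IsField K := by
  obtain ⟨k, hk⟩ := hfield
  refine ⟨k.map f, ?_⟩
  letI := hk.toField
  let g : k →+* k.map f := (f.comp k.subtype).codRestrict _ (fun a => ⟨a, a.2, rfl⟩)
  have hf : Function.Bijective g := by
    refine ⟨RingHom.injective g, ?_⟩
    rintro ⟨_, ⟨a, ha, rfl⟩⟩
    exact ⟨⟨a, ha⟩, rfl⟩
  exact MulEquiv.isField hk (RingEquiv.ofBijective g hf).symm.toMulEquiv

theorem quasilength_ge {S : Type u} [CommRing S] (J : Ideal S)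
    (M : Type v) [AddCommGroup M] [Module S M] (a : ℝ≥0∞) (h : ∀ h : ℕ, HasQLFiltration S J M h → a ≤ (h : ℝ≥0∞)) :
    a ≤ (quasilength S J M : ℝ≥0∞) := by
  by_cases hne : {n : ℕ∞ | ∃ h : ℕ, n = (h : ℕ∞) ∧ HasQLFiltration S J M h}.Nonempty
  · obtain ⟨n, hn, hn'⟩ := csInf_mem hne
    rw [quasilength, hn]
    simpa using h n hn'
  · rw [quasilength, Set.not_nonempty_iff_eq_empty.1 hne]
    simp

theorem quasilength_le {S : Type u} [CommRing S] (J : Ideal S)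
    (M : Type v) [AddCommGroup M] [Module S M] (h : ℕ) (H : HasQLFiltration S J M h) :
    (quasilength S J M : ℝ≥0∞) ≤ h := by
  have : quasilength S J M ≤ (h : ℕ∞) := sInf_le ⟨h, rfl, H⟩
  simpa using (ENat.toENNReal_le (m := quasilength S J M) (n := h)).2 this

theorem err_bound {d : ℕ} (s : ℕ) (hs : 0 < s) (t α : Fin d → ℕ) (ht : ∀ i, s ≤ t i) (F : Finset (Fin d)) :
    (1 - ∑ i ∈ F, (α i : ℝ) / s) * ∏ i ∈ F, (t i : ℝ) ≤ ∏ i ∈ F, ((t i - α i : ℕ) : ℝ) := by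
  classical
  induction F using Finset.induction_on with
  | empty => simp
  | insert a F ha ih =>
    rw [Finset.sum_insert ha, Finset.prod_insert ha, Finset.prod_insert ha]
    have hs' : (0:ℝ) < s := by exact_mod_cast hs
    have hts : (s:ℝ) ≤ t a := by exact_mod_cast ht a
    have hT : 0 ≤ ∏ i ∈ F, (t i : ℝ) := Finset.prod_nonneg fun _ _ => Nat.cast_nonneg _
    have hP : 0 ≤ ∏ i ∈ F, ((t i - α i : ℕ) : ℝ) := Finset.prod_nonneg fun _ _ => Nat.cast_nonneg _
    have hQ : 0 ≤ ∑ i ∈ F, (α i : ℝ) / s := Finset.sum_nonneg fun _ _ => by positivity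
    have hb : 0 ≤ (α a : ℝ) / s := by positivity
    have hsub : (1 - (α a : ℝ)/s) * t a ≤ ((t a - α a : ℕ) : ℝ) := by
      have h1 : (t a : ℝ) - α a ≤ ((t a - α a : ℕ) : ℝ) := by
        rw [sub_le_iff_le_add]; exact_mod_cast (by omega)
      have h2 : (α a : ℝ) ≤ α a / s * t a := by
        rw [div_mul_eq_mul_div, le_div_iff₀ hs']
        exact mul_le_mul_of_nonneg_left hts (Nat.cast_nonneg _)
      linarith
    generalize (∑ i ∈ F, (α i : ℝ) / s) = q at *
    generalize (α a : ℝ) / s = b at *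
    have hta : (0:ℝ) ≤ t a := Nat.cast_nonneg _
    have hta2 : (0:ℝ) ≤ ((t a - α a : ℕ) : ℝ) := Nat.cast_nonneg _
    by_cases h0 : 1 - (b + q) ≤ 0
    · exact (mul_nonpos_of_nonpos_of_nonneg h0 (mul_nonneg hta hT)).trans (mul_nonneg hta2 hP)
    · push Not at h0
      have h1 : ((1 - b) * t a) * ((1 - q) * ∏ i ∈ F, (t i : ℝ)) ≤ ((t a - α a : ℕ) : ℝ) * ∏ i ∈ F, ((t i - α i : ℕ) : ℝ) :=
        mul_le_mul hsub ih (mul_nonneg (by linarith) hT) hta2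
      refine le_trans ?_ h1
      have h2 : 1 - (b + q) ≤ (1 - b) * (1 - q) := by nlinarith
      have := mul_le_mul_of_nonneg_right h2 (mul_nonneg hta hT)
      linarith

theorem lower_bound {R : Type u} [CommRing R] [IsNoetherianRing R] [IsLocalRing R]
    (hfield : ∃ K : Subring R, IsField K)
    (M : Type u) [AddCommGroup M] [Module R M] [Module.Finite R M]
    {d : ℕ} (x : Fin d → R) (hx : ∀ i, x i ∈ maximalIdeal R) (P : Ideal R) [P.IsPrime]
    (hdP : ringKrullDim (R ⧸ P) = d) (N : ℕ) (hN : maximalIdeal R ^ N ≤ P ⊔ Ideal.span (Set.range x)) :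
    (Module.finrank (FractionRing (R ⧸ P))
          (FractionRing (R ⧸ P) ⊗[R ⧸ P] (M ⧸ (P • (⊤ : Submodule R M)))) : ℝ≥0∞) ≤ content x M := by
  haveI : IsLocalRing (R ⧸ P) := IsLocalRing.of_surjective' _ (Ideal.Quotient.mk_surjective (I := P))
  haveI : Module.Finite (R ⧸ P) (M ⧸ (P • (⊤ : Submodule R M))) := Module.Finite.of_restrictScalars_finite R _ _
  obtain ⟨r, hr⟩ : ∃ r, r = Module.finrank (FractionRing (R ⧸ P))
          (FractionRing (R ⧸ P) ⊗[R ⧸ P] (M ⧸ (P • (⊤ : Submodule R M)))) := ⟨_, rfl⟩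
  obtain ⟨g, c, hc0, hg⟩ := frac_map r hr.symm
  rw [← hr]
  have hmap : maximalIdeal (R ⧸ P) = (maximalIdeal R).map (Ideal.Quotient.mk P) :=
    (IsLocalRing.map_maximalIdeal_of_surjective _ Ideal.Quotient.mk_surjective).symm
  obtain ⟨K, iK, D, iD, iDD, iA, iF, φ, hinj, hφ, hφx⟩ := cohen_embed (R0 := R ⧸ P) (subfield_map (Ideal.Quotient.mk P) hfield) hdP
    (fun i => Ideal.Quotient.mk P (x i)) (fun i => by rw [hmap]; exact Ideal.mem_map_of_mem _ (hx i)) N (by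
      rw [hmap, ← Ideal.map_pow]
      refine (Ideal.map_mono hN).trans ?_
      rw [Ideal.map_sup, Ideal.map_quotient_self, bot_sup_eq, Ideal.map_span, ← Set.range_comp]; rfl)
  let ψ : R →+* D := φ.comp (Ideal.Quotient.mk P)
  let G : M →ₛₗ[ψ] (Fin r → D) :=
    { toFun := fun m b => φ (g (Submodule.Quotient.mk m) b)
      map_add' := fun a b => by ext; simp
      map_smul' := fun a b => by
        ext j
        have : g (Submodule.Quotient.mk (a • b)) = (Ideal.Quotient.mk P a) • g (Submodule.Quotient.mk b) := by
          rw [← map_smul]; rfl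
        change φ (g (Submodule.Quotient.mk (a • b)) j) = φ (Ideal.Quotient.mk P a) * φ (g (Submodule.Quotient.mk b) j)
        rw [this, ← map_mul]; rfl }
  have hc0' : φ c ≠ 0 := fun h => hc0 (hφ (by rw [h, map_zero]))
  obtain ⟨E, α, hE, hM⟩ := M1 hinj (φ c) hc0'
  have hG : ∀ b, ∃ n, G n = φ c • (Pi.single b 1 : Fin r → D) := by
    intro b
    obtain ⟨n, hn⟩ := hg b
    obtain ⟨m, rfl⟩ := Submodule.Quotient.mk_surjective _ n
    refine ⟨m, ?_⟩
    ext j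
    change φ (g _ j) = _
    rw [hn]
    by_cases h : j = b
    · subst h; simp
    · simp [Pi.single_eq_of_ne h]
  obtain ⟨A, hA⟩ : ∃ A : ℝ, A = ∑ i, (α i : ℝ) := ⟨_, rfl⟩
  have hs : ∀ s : ℕ, ENNReal.ofReal (r - r * E * A / (s + 1 : ℕ)) ≤ content x M := by
    intro s
    refine le_trans ?_ (le_iSup _ (s + 1))
    refine le_iInf fun t => ?_
    obtain ⟨t, ht⟩ := t
    dsimp only
    have hT : (0:ℝ) < ∏ i, (t i : ℝ) := Finset.prod_pos fun i _ => by exact_mod_cast (ht i).2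
    have hTc : (∏ i, (t i : ℝ≥0∞)) = ENNReal.ofReal (∏ i, (t i : ℝ)) := by
      rw [ENNReal.ofReal_prod_of_nonneg (fun i _ => Nat.cast_nonneg _)]
      simp
    rw [ENNReal.le_div_iff_mul_le (by rw [hTc]; left; simp [hT]) (by rw [hTc]; left; simp)]
    refine quasilength_ge _ _ _ fun h H => ?_
    obtain ⟨w, h1, h2⟩ := chain_transfer ψ x hφx G (φ c) hG t h H
    have h3 := hM r h t w h1 h2
    have h4 := err_bound (s+1) (Nat.succ_pos s) t α (fun i => (ht i).1) Finset.univ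
    rw [hTc, ← ENNReal.ofReal_mul' hT.le, ← ENNReal.ofReal_natCast h]
    apply ENNReal.ofReal_le_ofReal
    rw [← Finset.sum_div, ← hA] at h4
    have h5 : (∏ i, (t i : ℝ)) - ∏ i, ((t i - α i : ℕ) : ℝ) ≤ A / (s+1 : ℕ) * ∏ i, (t i : ℝ) := by linarith
    have h6 := mul_le_mul_of_nonneg_left h5 (mul_nonneg (Nat.cast_nonneg (α := ℝ) r) hE)
    have h7 : (r - r * E * A / (s + 1 : ℕ)) * ∏ i, (t i : ℝ) = r * ∏ i, (t i : ℝ) - r * E * (A / (s+1 : ℕ) * ∏ i, (t i : ℝ)) := by ring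
    rw [h7]
    linarith
  have hlim : Filter.Tendsto (fun s : ℕ => ENNReal.ofReal (r - r * E * A / (s + 1 : ℕ))) Filter.atTop (nhds (ENNReal.ofReal (r - 0))) := by
    refine ENNReal.tendsto_ofReal ?_
    refine tendsto_const_nhds.sub ?_
    exact (tendsto_const_div_atTop_nhds_zero_nat (r * E * A)).comp (Filter.tendsto_add_atTop_nat 1)
  have := le_of_tendsto' hlim hs
  simpa using this

end

section

open IsLocalRing
open scoped TensorProduct ENNReal

/-- Chains of submodules with cyclic factors killed by `I`. -/
inductive QLs {R : Type u} [CommRing R] (I : Ideal R) {M : Type v} [AddCommGroup M] [Module R M] :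
    Submodule R M → Submodule R M → ℕ → Prop
  | refl (W : Submodule R M) : QLs I W W 0
  | step (W W' : Submodule R M) (h : ℕ) (m : M) (H : QLs I W W' h) (hm : ∀ a ∈ I, a • m ∈ W') :
      QLs I W (W' ⊔ Submodule.span R {m}) (h + 1)

section
variable {R : Type u} [CommRing R] {I : Ideal R} {M : Type v} [AddCommGroup M] [Module R M]
  {N : Type w} [AddCommGroup N] [Module R N]

theorem QLs.le {W W' : Submodule R M} {h : ℕ} (H : QLs I W W' h) : W ≤ W' := by
  induction H with
  | refl => exact le_rfl
  | step W' h m H hm ih => exact ih.trans le_sup_left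

theorem QLs.trans {W W' W'' : Submodule R M} {h h' : ℕ} (H : QLs I W W' h) (H' : QLs I W' W'' h') :
    QLs I W W'' (h + h') := by
  induction H' with
  | refl => exact H
  | step W2 h' m H' hm ih => exact QLs.step _ _ _ _ ih hm

theorem QLs.weaken {W W' : Submodule R M} {h h' : ℕ} (H : QLs I W W' h) (hh : h ≤ h') : QLs I W W' h' := by
  induction h', hh using Nat.le_induction with
  | base => exact H
  | succ n hn ih =>
    have := QLs.step _ _ _ 0 ih (by simp)
    simpa using this

theorem QLs.sup {W W' : Submodule R M} {h : ℕ} (H : QLs I W W' h) (V : Submodule R M) :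
    QLs I (W ⊔ V) (W' ⊔ V) h := by
  induction H with
  | refl => exact QLs.refl _
  | step W' h m H hm ih =>
    rw [sup_right_comm]
    exact QLs.step _ _ _ _ ih fun a ha => Submodule.mem_sup_left (hm a ha)

theorem QLs.start {W W' : Submodule R M} {h : ℕ} (H : QLs I W W' h) {V : Submodule R M} (hV : W ≤ V) :
    QLs I V (W' ⊔ V) h := by
  have := H.sup V
  rwa [sup_eq_right.2 hV] at this

theorem QLs.map {W W' : Submodule R M} {h : ℕ} (H : QLs I W W' h) (f : M →ₗ[R] N) :
    QLs I (W.map f) (W'.map f) h := by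
  induction H with
  | refl => exact QLs.refl _
  | step W' h m H hm ih =>
    rw [Submodule.map_sup, Submodule.map_span, Set.image_singleton]
    exact QLs.step _ _ _ _ ih fun a ha => ⟨a • m, hm a ha, by simp⟩

theorem QLs.comap {W W' : Submodule R N} {h : ℕ} (H : QLs I W W' h) (f : M →ₗ[R] N) (hf : Function.Surjective f) :
    QLs I (W.comap f) (W'.comap f) h := by
  induction H with
  | refl => exact QLs.refl _
  | step W' h m H hm ih =>
    obtain ⟨m, rfl⟩ := hf m
    have : (W' ⊔ Submodule.span R {f m}).comap f = W'.comap f ⊔ Submodule.span R {m} := by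
      apply le_antisymm
      · intro z hz
        rw [Submodule.mem_comap, Submodule.mem_sup] at hz
        obtain ⟨p, hp, q, hq, hpq⟩ := hz
        obtain ⟨a, rfl⟩ := Submodule.mem_span_singleton.1 hq
        refine Submodule.mem_sup.2 ⟨z - a • m, ?_, a • m, Submodule.smul_mem _ _ (Submodule.mem_span_singleton_self m), by simp⟩
        rw [Submodule.mem_comap, map_sub, map_smul, ← hpq, add_sub_cancel_right]
        exact hp
      · refine sup_le (Submodule.comap_mono le_sup_left) ?_
        rw [Submodule.span_singleton_le_iff_mem]
        exact Submodule.mem_sup_right (Submodule.mem_span_singleton_self _)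
    rw [this]
    exact QLs.step _ _ _ _ ih fun a ha => by rw [Submodule.mem_comap, map_smul]; exact hm a ha

theorem QLs.exact {A : Type*} [AddCommGroup A] [Module R A] (f : A →ₗ[R] M) (g : M →ₗ[R] N) (hg : Function.Surjective g)
    {WA : Submodule R A} {WB : Submodule R M} {WC : Submodule R N} (h1 : WA.map f ≤ WB)
    (h2 : WC.comap g ≤ WB ⊔ LinearMap.range f) {a b : ℕ} (HA : QLs I WA ⊤ a) (HC : QLs I WC ⊤ b) :
    QLs I WB ⊤ (a + b) := by
  have H1 := (HA.map f).start h1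
  have H2 := (HC.comap g hg).start h2
  rw [Submodule.map_top, sup_comm] at H1
  rw [Submodule.comap_top, top_sup_eq] at H2
  exact H1.trans H2

theorem QLs.exists_chain {W W' : Submodule R M} {h : ℕ} (H : QLs I W W' h) :
    ∃ c : ℕ → Submodule R M, c 0 = W ∧ c h = W' ∧ ∀ i < h, ∃ m, c (i+1) = c i ⊔ Submodule.span R {m} ∧ ∀ a ∈ I, a • m ∈ c i := by
  induction H with
  | refl => exact ⟨fun _ => W, rfl, rfl, by simp⟩
  | step W' h m H hm ih =>
    obtain ⟨c, h0, h1, h2⟩ := ih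
    refine ⟨fun n => if n ≤ h then c n else W' ⊔ Submodule.span R {m}, by simp [h0], by simp, ?_⟩
    intro i hi
    rcases Nat.lt_succ_iff_lt_or_eq.1 hi with hi | rfl
    · obtain ⟨m', h3, h4⟩ := h2 i hi
      refine ⟨m', ?_, ?_⟩
      · simp only [if_pos hi.le, if_pos (Nat.succ_le_of_lt hi), h3]
      · simpa only [if_pos hi.le] using h4
    · refine ⟨m, ?_, ?_⟩
      · simp [h1]
      · simpa [h1] using hm

theorem QLs.hasQL {W : Submodule R M} {h : ℕ} (H : QLs I W ⊤ h) : HasQLFiltration R I (M ⧸ W) h := by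
  have H' := H.map W.mkQ
  rw [Submodule.map_top, Submodule.range_mkQ, Submodule.mkQ_map_self] at H'
  obtain ⟨c, h0, h1, h2⟩ := H'.exists_chain
  refine ⟨fun i => c i, ?_, h0, by simpa using h1, ?_⟩
  · refine Fin.monotone_iff_le_succ.2 fun i => ?_
    obtain ⟨m, hm, -⟩ := h2 i i.2
    simp only [Fin.val_succ, Fin.val_castSucc, hm]
    exact le_sup_left
  · intro i
    obtain ⟨m, hm, hm'⟩ := h2 i i.2
    simp only [Fin.val_succ, Fin.val_castSucc]
    refine ⟨⟨m, hm⟩, fun a ha z hz => ?_⟩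
    rw [hm, Submodule.mem_sup] at hz
    obtain ⟨p, hp, q, hq, rfl⟩ := hz
    obtain ⟨b, rfl⟩ := Submodule.mem_span_singleton.1 hq
    rw [smul_add, smul_comm a b m]
    exact Submodule.add_mem _ (Submodule.smul_mem _ _ hp) (Submodule.smul_mem _ _ (hm' a ha))

theorem QLs.monomial {d : ℕ} (x : Fin d → R) (t : Fin d → ℕ) (F : Finset (Fin d)) (W : Submodule R M) (m : M)
    (h1 : ∀ i ∉ F, x i • m ∈ W) (h2 : ∀ i ∈ F, x i ^ t i • m ∈ W) :
    QLs (Ideal.span (Set.range x)) W (W ⊔ Submodule.span R {m}) (∏ i ∈ F, t i) := by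
  classical
  induction F using Finset.induction_on generalizing W m with
  | empty =>
    rw [Finset.prod_empty]
    refine QLs.step _ _ 0 m (QLs.refl W) ?_
    intro a ha
    refine Submodule.span_induction (p := fun a _ => a • m ∈ W) ?_ ?_ ?_ ?_ ha
    · rintro _ ⟨i, rfl⟩; exact h1 i (by simp)
    · simp
    · intro a b _ _ ha hb; rw [add_smul]; exact W.add_mem ha hb
    · intro a b _ hb; rw [smul_assoc]; exact W.smul_mem _ hb
  | insert a F ha ih =>
    rw [Finset.prod_insert ha]
    have key : ∀ j ≤ t a, QLs (Ideal.span (Set.range x)) W (W ⊔ Submodule.span R {x a ^ (t a - j) • m}) (j * ∏ i ∈ F, t i) := by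
      intro j
      induction j with
      | zero =>
        intro _
        have : W ⊔ Submodule.span R {x a ^ (t a - 0) • m} = W := by
          rw [sup_eq_left, Submodule.span_singleton_le_iff_mem]
          exact h2 a (by simp)
        rw [this, zero_mul]
        exact QLs.refl W
      | succ j ihj =>
        intro hj
        have e : x a ^ (t a - j) • m = x a • (x a ^ (t a - (j+1)) • m) := by
          rw [smul_smul, ← pow_succ']; congr 2; omega
        have h3 := ihj (by omega)
        have h4 := ih (W ⊔ Submodule.span R {x a ^ (t a - j) • m}) (x a ^ (t a - (j+1)) • m) (by
          intro i hi
          by_cases hia : i = a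
          · subst hia
            rw [← e]
            exact Submodule.mem_sup_right (Submodule.mem_span_singleton_self _)
          · rw [smul_comm]
            exact Submodule.mem_sup_left (W.smul_mem _ (h1 i (by simp [hia, hi])))) (by
          intro i hi
          rw [smul_comm]
          exact Submodule.mem_sup_left (W.smul_mem _ (h2 i (by simp [hi]))))
        have h5 : W ⊔ Submodule.span R {x a ^ (t a - j) • m} ⊔ Submodule.span R {x a ^ (t a - (j + 1)) • m} =
            W ⊔ Submodule.span R {x a ^ (t a - (j + 1)) • m} := by
          rw [sup_assoc]
          congr 1
          rw [sup_eq_right, Submodule.span_singleton_le_iff_mem, e]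
          exact Submodule.smul_mem _ _ (Submodule.mem_span_singleton_self _)
        rw [h5] at h4
        rw [add_mul, one_mul]
        exact h3.trans h4
    have := key (t a) le_rfl
    rwa [Nat.sub_self, pow_zero, one_smul] at this

theorem QLs.gens {d : ℕ} (x : Fin d → R) (t : Fin d → ℕ) (W : Submodule R M) (hW : powerIdeal x t • ⊤ ≤ W)
    {r : ℕ} (m : Fin r → M) :
    QLs (Ideal.span (Set.range x)) W (W ⊔ Submodule.span R (Set.range m)) (r * ∏ i, t i) := by
  induction r with
  | zero =>
    have : W ⊔ Submodule.span R (Set.range m) = W := by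
      rw [Set.range_eq_empty]; simp
    rw [this, zero_mul]; exact QLs.refl W
  | succ r ih =>
    have h1 := ih (fun i => m i.castSucc)
    have h2 := QLs.monomial x t Finset.univ (W ⊔ Submodule.span R (Set.range fun i : Fin r => m i.castSucc)) (m (Fin.last r))
      (by simp) (by
        intro i _
        exact Submodule.mem_sup_left (hW (Submodule.smul_mem_smul (Ideal.subset_span ⟨i, rfl⟩) trivial)))
    rw [sup_assoc, ← Submodule.span_union] at h2
    have h3 : (Set.range fun i : Fin r => m i.castSucc) ∪ {m (Fin.last r)} = Set.range m := by
      ext z; constructor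
      · rintro (⟨i, rfl⟩ | hz)
        · exact ⟨_, rfl⟩
        · exact ⟨_, hz.symm⟩
      · rintro ⟨i, rfl⟩
        induction i using Fin.lastCases with
        | last => right; rfl
        | cast i => left; exact ⟨i, rfl⟩
    rw [h3] at h2
    rw [add_mul, one_mul]
    exact h1.trans h2
end

end

section

open IsLocalRing
open scoped TensorProduct ENNReal

theorem dim_strict {R : Type u} [CommRing R] (p Q : Ideal R) [p.IsPrime] (hpQ : p ≤ Q) (y : R) (hyQ : y ∈ Q) (hy : y ∉ p) :
    ringKrullDim (R ⧸ Q) + 1 ≤ ringKrullDim (R ⧸ p) := by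
  refine ringKrullDim_succ_le_of_surjective (Ideal.Quotient.factor hpQ) (Ideal.Quotient.factor_surjective hpQ)
    (r := Ideal.Quotient.mk p y) (mem_nonZeroDivisors_of_ne_zero ?_) ?_
  · rwa [Ne, Ideal.Quotient.eq_zero_iff_mem]
  · rw [Ideal.Quotient.factor_mk, Ideal.Quotient.eq_zero_iff_mem]; exact hyQ

theorem comap_smul_top {R : Type u} [CommRing R] {M : Type v} {N : Type w} [AddCommGroup M] [Module R M] [AddCommGroup N] [Module R N]
    (g : M →ₗ[R] N) (hg : Function.Surjective g) (J : Ideal R) :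
    (J • (⊤ : Submodule R N)).comap g = J • ⊤ ⊔ LinearMap.ker g := by
  rw [← LinearMap.range_eq_top.2 hg, ← Submodule.map_top, ← Submodule.map_smul'', Submodule.comap_map_eq]

/-- Support condition used in the growth estimate. -/
def GCond {R : Type u} [CommRing R] [IsLocalRing R] (I : Ideal R) (δ : ℕ) (C : Type v) [AddCommGroup C] [Module R C] : Prop :=
  ∀ Q : Ideal R, Q.IsPrime → Module.annihilator R C ≤ Q → (I ≤ Q → Q = maximalIdeal R) ∧ ringKrullDim (R ⧸ Q) ≤ δ

theorem growth {R : Type u} [CommRing R] [IsNoetherianRing R] [IsLocalRing R] (I : Ideal R) (hI : I ≤ maximalIdeal R) (δ : ℕ) :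
    ∀ (C : Type v) [AddCommGroup C] [Module R C] [Module.Finite R C], GCond I δ C →
      ∃ B : ℕ, ∀ n : ℕ, QLs I (I ^ n • (⊤ : Submodule R C)) ⊤ (B * n ^ δ) := by
  induction δ using Nat.strong_induction_on with
  | _ δ ih =>
  intro C _ _ _
  refine IsNoetherianRing.induction_on_isQuotientEquivQuotientPrime R (M := C) inferInstance
    (motive := fun N _ _ _ => GCond I δ N → ∃ B : ℕ, ∀ n : ℕ, QLs I (I ^ n • (⊤ : Submodule R N)) ⊤ (B * n ^ δ)) ?_ ?_ ?_
  · intro N _ _ _ _ _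
    refine ⟨0, fun n => ?_⟩
    have : (I ^ n • (⊤ : Submodule R N)) = ⊤ := Subsingleton.elim _ _
    rw [this, zero_mul]
    exact QLs.refl _
  · intro N _ _ _ p e hN
    have hann : Module.annihilator R N = p.1 := by
      rw [e.annihilator_eq, Ideal.annihilator_quotient]
    haveI := p.2
    have hp := hN p.1 p.2 hann.le
    by_cases hpm : p.1 = maximalIdeal R
    · refine ⟨1, fun n => ?_⟩
      rw [one_mul]
      rcases Nat.eq_zero_or_pos n with rfl | hn
      · have : (I ^ 0 • (⊤ : Submodule R N)) = ⊤ := by simp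
        rw [this]
        exact (QLs.refl _).weaken (Nat.zero_le _)
      · have h1 : QLs I (⊥ : Submodule R N) ⊤ 1 := by
          have h2 := QLs.step (I := I) ⊥ ⊥ 0 (e.symm 1) (QLs.refl _) (fun a ha => by
            rw [Submodule.mem_bot]
            have : a ∈ Module.annihilator R N := by rw [hann, hpm]; exact hI ha
            exact Module.mem_annihilator.1 this _)
          have h3 : (⊥ : Submodule R N) ⊔ Submodule.span R {e.symm 1} = ⊤ := by
            rw [bot_sup_eq, eq_top_iff]
            intro z _
            obtain ⟨a, ha⟩ := Ideal.Quotient.mk_surjective (e z)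
            refine Submodule.mem_span_singleton.2 ⟨a, ?_⟩
            apply e.injective
            rw [map_smul, e.apply_symm_apply, ← ha, Algebra.smul_def, mul_one]; rfl
          rwa [h3] at h2
        have := h1.start (V := I ^ n • (⊤ : Submodule R N)) bot_le
        rw [top_sup_eq] at this
        exact this.weaken (Nat.one_le_pow _ _ hn)
    · have hIp : ¬ I ≤ p.1 := fun h => hpm (hp.1 h)
      obtain ⟨y, hyI, hyp⟩ := SetLike.not_le_iff_exists.1 hIp
      obtain ⟨z, hzm, hzp⟩ : ∃ z ∈ maximalIdeal R, z ∉ p.1 := ⟨y, hI hyI, hyp⟩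
      have hpos : δ ≠ 0 := by
        rintro rfl
        have h1 := dim_strict p.1 (maximalIdeal R) (IsLocalRing.le_maximalIdeal p.2.ne_top) z hzm hzp
        have h2 : (0 : WithBot ℕ∞) ≤ ringKrullDim (R ⧸ maximalIdeal R) := ringKrullDim_nonneg_of_nontrivial
        have h3 : (0 : WithBot ℕ∞) + 1 ≤ (0 : ℕ) := (add_le_add h2 le_rfl).trans (h1.trans hp.2)
        norm_num at h3
      obtain ⟨δ', rfl⟩ := Nat.exists_eq_succ_of_ne_zero hpos
      let f : N →ₗ[R] N := y • LinearMap.id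
      have hC : GCond I δ' (N ⧸ LinearMap.range f) := by
        intro Q hQ hQa
        have h1 : p.1 ≤ Q := by
          refine le_trans ?_ hQa
          rw [← hann]
          exact LinearMap.annihilator_le_of_surjective _ (Submodule.mkQ_surjective _)
        have h2 : y ∈ Q := by
          refine hQa (Module.mem_annihilator.2 fun w => ?_)
          obtain ⟨w, rfl⟩ := Submodule.Quotient.mk_surjective _ w
          rw [← Submodule.Quotient.mk_smul, Submodule.Quotient.mk_eq_zero]
          exact ⟨w, rfl⟩
        refine ⟨(hN Q hQ (hann ▸ h1)).1, ?_⟩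
        have h3 := (dim_strict p.1 Q h1 y h2 hyp).trans hp.2
        rw [Nat.cast_succ] at h3
        exact ENat.WithBot.add_le_add_one_right_iff.1 h3
      obtain ⟨B, hB⟩ := ih δ' (Nat.lt_succ_self _) (N ⧸ LinearMap.range f) hC
      refine ⟨B, fun n => ?_⟩
      have key : ∀ k ≤ n, QLs I (I ^ k • (⊤ : Submodule R N)) ⊤ (k * (B * n ^ δ')) := by
        intro k
        induction k with
        | zero =>
          intro _
          have : (I ^ 0 • (⊤ : Submodule R N)) = ⊤ := by simp
          rw [this]
          exact (QLs.refl _).weaken (Nat.zero_le _)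
        | succ k ihk =>
          intro hk
          have h1 := ihk (by omega)
          rw [add_mul, one_mul]
          refine QLs.exact f (LinearMap.range f).mkQ (Submodule.mkQ_surjective _) ?_ ?_ h1 ((hB (k+1)).weaken ?_)
          · rw [Submodule.map_smul'', Submodule.smul_le]
            rintro a ha _ ⟨w, -, rfl⟩
            change a • y • w ∈ _
            rw [smul_smul, pow_succ]
            exact Submodule.smul_mem_smul (Ideal.mul_mem_mul ha hyI) trivial
          · rw [comap_smul_top _ (Submodule.mkQ_surjective _), Submodule.ker_mkQ]
          · exact Nat.mul_le_mul_left _ (Nat.pow_le_pow_left hk _)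
      refine (key n le_rfl).weaken (le_of_eq ?_)
      rw [Nat.succ_eq_add_one]; ring
  · intro N1 _ _ _ N2 _ _ _ N3 _ _ _ f g hf hg hfg h1 h3 hN
    obtain ⟨B1, hB1⟩ := h1 fun Q hQ hQa => hN Q hQ ((LinearMap.annihilator_le_of_injective f hf).trans hQa)
    obtain ⟨B3, hB3⟩ := h3 fun Q hQ hQa => hN Q hQ ((LinearMap.annihilator_le_of_surjective g hg).trans hQa)
    refine ⟨B1 + B3, fun n => ?_⟩
    rw [add_mul]
    refine QLs.exact f g hg ?_ ?_ (hB1 n) (hB3 n)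
    · rw [Submodule.map_smul'']; exact Submodule.smul_mono le_rfl le_top
    · rw [comap_smul_top g hg, LinearMap.exact_iff.1 hfg]

end

section

open IsLocalRing
open scoped TensorProduct ENNReal

theorem gens_domain {R0 : Type u} [CommRing R0] [IsDomain R0] {N : Type v} [AddCommGroup N] [Module R0 N] [Module.Finite R0 N]
    (r : ℕ) (hr : Module.finrank (FractionRing R0) (FractionRing R0 ⊗[R0] N) ≤ r) :
    ∃ m : Fin r → N, ∀ y, ∃ s : R0, s ≠ 0 ∧ s • y ∈ Submodule.span R0 (Set.range m) := by
  have e : Module.finrank R0 N = Module.finrank (FractionRing R0) (FractionRing R0 ⊗[R0] N) := by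
    rw [IsLocalization.finrank_eq (FractionRing R0) (nonZeroDivisors R0) le_rfl,
      IsLocalizedModule.finrank_eq (nonZeroDivisors R0) (TensorProduct.mk R0 (FractionRing R0) N 1) le_rfl]
  rw [← e] at hr
  obtain ⟨v, hv⟩ := exists_linearIndependent_of_le_finrank (R := R0) (M := N) (le_refl _)
  have h1 := finrank_span_eq_card hv
  rw [Fintype.card_fin] at h1
  have h0 := rank_quotient_add_rank_of_isDomain (Submodule.span R0 (Set.range v))
  have h2 : Module.rank R0 (N ⧸ Submodule.span R0 (Set.range v)) = 0 := by
    have h3 : Module.rank R0 (Submodule.span R0 (Set.range v)) = Module.rank R0 N := by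
      haveI : Module.Finite R0 (Submodule.span R0 (Set.range v)) := Module.Finite.span_of_finite R0 (Set.finite_range v)
      have h6 := congrArg (Nat.cast : ℕ → Cardinal.{v}) h1
      rwa [Module.finrank_eq_rank, Module.finrank_eq_rank] at h6
    rw [h3] at h0
    have h4 : Module.rank R0 N < Cardinal.aleph0 := Module.rank_lt_aleph0 R0 N
    have h5 : Module.rank R0 (N ⧸ Submodule.span R0 (Set.range v)) + Module.rank R0 N = 0 + Module.rank R0 N := by rw [h0, zero_add]
    exact Cardinal.eq_of_add_eq_add_right h5 h4
  rw [rank_eq_zero_iff] at h2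
  refine ⟨fun i => if h : i.1 < Module.finrank R0 N then v ⟨i, h⟩ else 0, fun y => ?_⟩
  obtain ⟨s, hs, h⟩ := h2 (Submodule.Quotient.mk y)
  refine ⟨s, hs, ?_⟩
  rw [← Submodule.Quotient.mk_smul, Submodule.Quotient.mk_eq_zero] at h
  refine Submodule.span_mono ?_ h
  rintro _ ⟨i, rfl⟩
  exact ⟨⟨i, i.2.trans_le hr⟩, by simp⟩

theorem gens_prime {R : Type u} [CommRing R] {M : Type v} [AddCommGroup M] [Module R M] [Module.Finite R M]
    (P : Ideal R) [P.IsPrime] (r : ℕ)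
    (hr : Module.finrank (FractionRing (R ⧸ P)) (FractionRing (R ⧸ P) ⊗[R ⧸ P] (M ⧸ (P • (⊤ : Submodule R M)))) ≤ r) :
    ∃ m : Fin r → M, ∀ y, ∃ s ∉ P, s • y ∈ Submodule.span R (Set.range m) ⊔ P • ⊤ := by
  haveI : Module.Finite (R ⧸ P) (M ⧸ (P • (⊤ : Submodule R M))) := Module.Finite.of_restrictScalars_finite R _ _
  obtain ⟨m, hm⟩ := gens_domain r hr
  choose m' hm' using fun i => Submodule.Quotient.mk_surjective _ (m i)
  refine ⟨m', fun y => ?_⟩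
  obtain ⟨s, hs, h⟩ := hm (Submodule.Quotient.mk y)
  obtain ⟨s, rfl⟩ := Ideal.Quotient.mk_surjective s
  refine ⟨s, fun h' => hs (Ideal.Quotient.eq_zero_iff_mem.2 h'), ?_⟩
  obtain ⟨c, hc⟩ := (Submodule.mem_span_range_iff_exists_fun _).1 h
  choose c' hc' using fun i => Ideal.Quotient.mk_surjective (c i)
  have h1 : Submodule.Quotient.mk (p := P • (⊤ : Submodule R M)) (s • y - ∑ i, c' i • m' i) = 0 := by
    rw [Submodule.Quotient.mk_sub, Submodule.Quotient.mk_smul, sub_eq_zero]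
    have : Submodule.Quotient.mk (p := P • (⊤ : Submodule R M)) (∑ i, c' i • m' i) = ∑ i, c i • m i := by
      rw [← Submodule.mkQ_apply, map_sum]
      refine Finset.sum_congr rfl fun i _ => ?_
      rw [map_smul, Submodule.mkQ_apply, hm', ← hc']; rfl
    rw [this, hc]; rfl
  rw [Submodule.Quotient.mk_eq_zero] at h1
  have h2 := Submodule.add_mem _ (Submodule.mem_sup_right (S := Submodule.span R (Set.range m')) h1)
    (Submodule.mem_sup_left (T := P • (⊤ : Submodule R M)) (Submodule.sum_mem (Submodule.span R (Set.range m')) (t := Finset.univ) (f := fun i => c' i • m' i)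
    fun i _ => Submodule.smul_mem _ _ (Submodule.subset_span ⟨i, rfl⟩)))
  rwa [sub_add_cancel] at h2

theorem ann_not_le {R : Type u} [CommRing R] {C : Type v} [AddCommGroup C] [Module R C] [Module.Finite R C]
    (P : Ideal R) [hP : P.IsPrime] (H : ∀ y : C, ∃ s ∉ P, s • y ∈ P • (⊤ : Submodule R C)) :
    ¬ Module.annihilator R C ≤ P := by
  obtain ⟨k, n, hn⟩ := Module.Finite.exists_fin (R := R) (M := C)
  choose s hs hs' using H
  have hsP : (∏ i, s (n i)) ∉ P := by
    intro h
    obtain ⟨i, -, hi⟩ := (Ideal.IsPrime.prod_mem_iff (hp := hP)).1 h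
    exact hs _ hi
  set t := ∏ i, s (n i) with ht
  have h1 : LinearMap.range (t • (LinearMap.id : C →ₗ[R] C)) ≤ P • ⊤ := by
    rw [← Submodule.map_top, ← hn, Submodule.map_span_le]
    rintro _ ⟨i, rfl⟩
    rw [LinearMap.smul_apply, LinearMap.id_apply, hn, ht, ← Finset.prod_erase_mul _ _ (Finset.mem_univ i), mul_smul]
    exact Submodule.smul_mem _ _ (hs' _)
  obtain ⟨p, hp, -, hc, h0⟩ := LinearMap.exists_monic_and_natDegree_eq_and_coeff_mem_pow_and_aeval_eq_zero R (t • (LinearMap.id : C →ₗ[R] C)) P h1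
  intro hle
  have h2 : p.eval t ∈ Module.annihilator R C := by
    rw [Module.mem_annihilator]
    intro y
    have h3 : (t • (LinearMap.id : C →ₗ[R] C)) = algebraMap R (Module.End R C) t := by
      ext y; simp [Module.algebraMap_end_apply]
    rw [h3, Polynomial.aeval_algebraMap_apply] at h0
    have := LinearMap.congr_fun h0 y
    simpa [Module.algebraMap_end_apply] using this
  have h3 := hle h2
  rw [Polynomial.eval_eq_sum_range, Finset.sum_range_succ, hp.coeff_natDegree, one_mul] at h3
  have h4 : ∑ i ∈ Finset.range p.natDegree, p.coeff i * t ^ i ∈ P := by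
    refine Ideal.sum_mem _ fun i hi => Ideal.mul_mem_right _ _ ?_
    exact Ideal.pow_le_self (by have := Finset.mem_range.1 hi; omega) (hc i)
  exact hsP (hP.mem_of_pow_mem _ ((Ideal.add_mem_iff_right _ h4).1 h3))

theorem gens_combine {R : Type u} [CommRing R] {M : Type v} [AddCommGroup M] [Module R M] [Module.Finite R M]
    (S : Finset (Ideal R)) (hS : ∀ P ∈ S, P.IsPrime) (hinc : ∀ P ∈ S, ∀ P' ∈ S, P ≤ P' → P = P') (r : ℕ)
    (hr : ∀ P ∈ S, Module.finrank (FractionRing (R ⧸ P)) (FractionRing (R ⧸ P) ⊗[R ⧸ P] (M ⧸ (P • (⊤ : Submodule R M)))) ≤ r) :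
    ∃ m : Fin r → M, ∀ P ∈ S, ¬ Module.annihilator R (M ⧸ Submodule.span R (Set.range m)) ≤ P := by
  classical
  have H1 : ∀ P : S, ∃ m : Fin r → M, ∀ y, ∃ s ∉ P.1, s • y ∈ Submodule.span R (Set.range m) ⊔ P.1 • ⊤ := by
    intro P
    haveI := hS P.1 P.2
    exact gens_prime P.1 r (hr P.1 P.2)
  choose m hm using H1
  have H2 : ∀ P : S, ∃ a ∉ P.1, ∀ P' : S, P' ≠ P → a ∈ P'.1 := by
    intro P
    have hP := hS P.1 P.2
    have : ∀ P' : S, ∃ b, b ∉ P.1 ∧ (P' ≠ P → b ∈ P'.1) := by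
      intro P'
      by_cases h : P' = P
      · exact ⟨1, fun h => hP.ne_top ((Ideal.eq_top_iff_one _).2 h), fun h' => (h' h).elim⟩
      · have : ¬ P'.1 ≤ P.1 := fun h' => h (Subtype.ext (hinc _ P'.2 _ P.2 h'))
        obtain ⟨b, hb, hb'⟩ := SetLike.not_le_iff_exists.1 this
        exact ⟨b, hb', fun _ => hb⟩
    choose b hb hb' using this
    refine ⟨∏ P', b P', ?_, fun P' h => Ideal.prod_mem _ (Finset.mem_univ P') (hb' P' h)⟩
    intro h
    obtain ⟨i, -, hi⟩ := (Ideal.IsPrime.prod_mem_iff (hp := hP)).1 h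
    exact hb _ hi
  choose a ha ha' using H2
  refine ⟨fun l => ∑ P : S, a P • m P l, fun P hPS => ?_⟩
  set N' := Submodule.span R (Set.range fun l => ∑ P : S, a P • m P l) with hN'
  haveI hP := hS P hPS
  let P0 : S := ⟨P, hPS⟩
  have hsub : Submodule.span R (Set.range (m P0)) ⊔ P • ⊤ ≤ (N' ⊔ P • ⊤).comap (a P0 • (LinearMap.id : M →ₗ[R] M)) := by
    refine sup_le (Submodule.span_le.2 ?_) ?_
    · rintro _ ⟨l, rfl⟩
      change a P0 • m P0 l ∈ N' ⊔ P • ⊤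
      have h1 : ∑ P : S, a P • m P l ∈ N' := Submodule.subset_span ⟨l, rfl⟩
      rw [← Finset.add_sum_erase _ _ (Finset.mem_univ P0)] at h1
      have h2 : ∑ P' ∈ Finset.univ.erase P0, a P' • m P' l ∈ P • (⊤ : Submodule R M) :=
        Submodule.sum_mem _ fun P' hP' => Submodule.smul_mem_smul (ha' P' P0 (Finset.ne_of_mem_erase hP').symm) trivial
      have := Submodule.sub_mem _ (Submodule.mem_sup_left (T := P • (⊤ : Submodule R M)) h1) (Submodule.mem_sup_right (S := N') h2)
      rwa [add_sub_cancel_right] at this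
    · intro y hy
      exact Submodule.smul_mem _ _ (Submodule.mem_sup_right hy)
  apply ann_not_le
  intro y
  obtain ⟨y, rfl⟩ := Submodule.Quotient.mk_surjective _ y
  obtain ⟨s, hs, hsy⟩ := hm P0 y
  refine ⟨a P0 * s, fun h => (hP.mem_or_mem h).elim (ha P0) hs, ?_⟩
  have h1 : a P0 • s • y ∈ N' ⊔ P • ⊤ := hsub hsy
  have h2 := comap_smul_top N'.mkQ (Submodule.mkQ_surjective _) P
  rw [Submodule.ker_mkQ, sup_comm] at h2
  rw [← h2, Submodule.mem_comap] at h1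
  rw [mul_smul]
  exact h1

end

section

open IsLocalRing
open scoped TensorProduct ENNReal

theorem pow_le_powerIdeal {R : Type u} [CommRing R] {d : ℕ} (x : Fin d → R) (T : ℕ) (hT : 1 ≤ T) :
    Ideal.span (Set.range x) ^ ((d + 1) * T) ≤ powerIdeal x (fun _ => T) := by
  classical
  have key : ∀ F : Finset (Fin d), Ideal.span (x '' F) ^ (F.card * T + 1) ≤ powerIdeal x (fun _ => T) := by
    intro F
    induction F using Finset.induction_on with
    | empty => simp
    | insert a F ha ih =>
      rw [Finset.card_insert_of_notMem ha, Finset.coe_insert, Set.image_insert_eq, Set.insert_eq, Ideal.span_union,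
        show (F.card + 1) * T + 1 = T + (F.card * T + 1) by ring]
      refine Ideal.sup_pow_add_le_pow_sup_pow.trans (sup_le ?_ ih)
      rw [Ideal.span_singleton_pow, Ideal.span_singleton_le_iff_mem]
      exact Ideal.subset_span ⟨a, rfl⟩
  have h1 := key Finset.univ
  rw [Finset.coe_univ, Set.image_univ, Finset.card_univ, Fintype.card_fin] at h1
  refine (Ideal.pow_le_pow_right ?_).trans h1
  rw [add_mul, one_mul]
  omega

theorem prime_eq_max {R : Type u} [CommRing R] [IsNoetherianRing R] [IsLocalRing R]
    (M : Type v) [AddCommGroup M] [Module R M] [Module.Finite R M] (I : Ideal R)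
    (h : ringKrullDim (R ⧸ Module.annihilator R (M ⧸ (I • (⊤ : Submodule R M)))) = 0)
    (Q : Ideal R) (hQ : Q.IsPrime) (hQa : Module.annihilator R M ≤ Q) (hQI : I ≤ Q) : Q = maximalIdeal R := by
  by_contra hne
  have hle := IsLocalRing.le_maximalIdeal hQ.ne_top
  have h1 : (⟨Q, hQ⟩ : PrimeSpectrum R) ∈ Module.support R (M ⧸ (I • (⊤ : Submodule R M))) := by
    rw [Module.support_quotient, Module.support_eq_zeroLocus]
    exact ⟨hQa, hQI⟩
  rw [Module.support_eq_zeroLocus] at h1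
  have h2 : Module.annihilator R (M ⧸ (I • (⊤ : Submodule R M))) ≤ Q := h1
  have h3 : ringKrullDim (R ⧸ Q) ≤ 0 := by
    rw [← h]
    exact ringKrullDim_le_of_surjective (Ideal.Quotient.factor h2) (Ideal.Quotient.factor_surjective h2)
  obtain ⟨y, hy, hyQ⟩ := SetLike.not_le_iff_exists.1 (fun h' => hne (le_antisymm hle h'))
  have h4 := (dim_strict Q (maximalIdeal R) hle y hy hyQ).trans h3
  have h5 : (0 : WithBot ℕ∞) ≤ ringKrullDim (R ⧸ maximalIdeal R) := ringKrullDim_nonneg_of_nontrivial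
  rw [ENat.WithBot.add_one_le_zero_iff] at h4
  rw [h4] at h5
  simp at h5

theorem upper_limit {R : Type u} [CommRing R] (M : Type v) [AddCommGroup M] [Module R M] {d : ℕ} (x : Fin d → R) (r B : ℕ)
    (H : ∀ T : ℕ, 1 ≤ T → ∃ h : ℕ, QLs (Ideal.span (Set.range x)) (powerIdeal x (fun _ => T) • (⊤ : Submodule R M)) ⊤ h ∧
      h * T ≤ (r * T + B) * T ^ d) : content x M ≤ r := by
  refine iSup_le fun s => ?_
  have hlim : Filter.Tendsto (fun T : ℕ => (r : ℝ≥0∞) + B / T) Filter.atTop (nhds r) := by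
    have h1 : Filter.Tendsto (fun T : ℕ => (B : ℝ≥0∞) / T) Filter.atTop (nhds 0) :=
      ENNReal.Tendsto.const_div ENNReal.tendsto_nat_nhds_top (Or.inr (ENNReal.natCast_ne_top B)) |>.trans (by simp)
    simpa using h1.const_add (r : ℝ≥0∞)
  refine ge_of_tendsto hlim ?_
  filter_upwards [Filter.eventually_ge_atTop (max s 1)] with T hT
  have hT1 : 1 ≤ T := (le_max_right _ _).trans hT
  obtain ⟨h, hh, hle⟩ := H T hT1
  refine (iInf_le _ ⟨fun _ => T, fun _ => ⟨(le_max_left _ _).trans hT, hT1⟩⟩).trans ?_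
  have hT0 : (T : ℝ≥0∞) ≠ 0 := by simp; omega
  have hTt : (T : ℝ≥0∞) ≠ ⊤ := ENNReal.natCast_ne_top T
  have h1 := quasilength_le (Ideal.span (Set.range x)) _ h hh.hasQL
  simp only [Finset.prod_const, Finset.card_univ, Fintype.card_fin]
  refine (ENNReal.div_le_div_right h1 _).trans ?_
  refine ENNReal.div_le_of_le_mul ?_
  have h2 : (h : ℝ≥0∞) * T ≤ (r * T + B) * T ^ d := by exact_mod_cast hle
  have h3 : (h : ℝ≥0∞) ≤ ((r * T + B) * T ^ d) / T := (ENNReal.le_div_iff_mul_le (Or.inl hT0) (Or.inl hTt)).2 h2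
  refine h3.trans (le_of_eq ?_)
  rw [mul_comm, mul_div_assoc, ENNReal.add_div, mul_div_assoc, ENNReal.div_self hT0 hTt, mul_one, mul_comm]

theorem upper_bound {R : Type u} [CommRing R] [IsNoetherianRing R] [IsLocalRing R]
    (M : Type v) [AddCommGroup M] [Module R M] [Module.Finite R M]
    {d : ℕ} (hd : ringKrullDim (R ⧸ Module.annihilator R M) = d)
    (x : Fin d → R) (hx : ∀ i, x i ∈ IsLocalRing.maximalIdeal R)
    (hxp : ∀ Q : Ideal R, Q.IsPrime → Module.annihilator R M ≤ Q → Ideal.span (Set.range x) ≤ Q → Q = maximalIdeal R)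
    (r : ℕ)
    (hr : ∀ P ∈ (Module.annihilator R M).minimalPrimes, ringKrullDim (R ⧸ P) = d →
      Module.finrank (FractionRing (R ⧸ P)) (FractionRing (R ⧸ P) ⊗[R ⧸ P] (M ⧸ (P • (⊤ : Submodule R M)))) ≤ r) :
    content x M ≤ r := by
  classical
  have hfin : {P : Ideal R | P ∈ (Module.annihilator R M).minimalPrimes ∧ ringKrullDim (R ⧸ P) = d}.Finite :=
    (Ideal.finite_minimalPrimes_of_isNoetherianRing R (Module.annihilator R M)).subset fun P hP => hP.1
  obtain ⟨m, hm⟩ := gens_combine (M := M) hfin.toFinset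
    (fun P hP => ((hfin.mem_toFinset.1 hP).1.1.1))
    (fun P hP P' hP' hle => by
      have h1 := (hfin.mem_toFinset.1 hP).1
      have h2 := (hfin.mem_toFinset.1 hP').1
      exact le_antisymm hle (h2.2 h1.1 hle)) r
    (fun P hP => hr P (hfin.mem_toFinset.1 hP).1 (hfin.mem_toFinset.1 hP).2)
  set N' := Submodule.span R (Set.range m) with hN'
  have hMC : Module.annihilator R M ≤ Module.annihilator R (M ⧸ N') :=
    LinearMap.annihilator_le_of_surjective _ (Submodule.mkQ_surjective N')
  have hdim : ∀ Q : Ideal R, Q.IsPrime → Module.annihilator R (M ⧸ N') ≤ Q → ringKrullDim (R ⧸ Q) < d := by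
    intro Q hQ hQa
    obtain ⟨P, hP, hPQ⟩ := Ideal.exists_minimalPrimes_le (hMC.trans hQa)
    haveI := hP.1.1
    have hPd : ringKrullDim (R ⧸ P) ≤ d := by
      rw [← hd]
      exact ringKrullDim_le_of_surjective (Ideal.Quotient.factor hP.1.2) (Ideal.Quotient.factor_surjective hP.1.2)
    by_cases hQP : Q ≤ P
    · have : Q = P := le_antisymm hQP hPQ
      subst this
      refine lt_of_le_of_ne hPd fun h => ?_
      exact hm Q (hfin.mem_toFinset.2 ⟨hP, h⟩) hQa
    · obtain ⟨y, hy, hyP⟩ := SetLike.not_le_iff_exists.1 hQP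
      exact ENat.WithBot.add_one_le_natCast_iff.1 ((dim_strict P Q hPQ y hy hyP).trans hPd)
  have hI : Ideal.span (Set.range x) ≤ maximalIdeal R := by
    rw [Ideal.span_le]; rintro _ ⟨i, rfl⟩; exact hx i
  rcases Nat.eq_zero_or_pos d with hd0 | hdpos
  · subst hd0
    have htop : Module.annihilator R (M ⧸ N') = ⊤ := by
      by_contra hne
      have h1 := hdim (maximalIdeal R) inferInstance (IsLocalRing.le_maximalIdeal hne)
      have h5 : (0 : WithBot ℕ∞) ≤ ringKrullDim (R ⧸ maximalIdeal R) := ringKrullDim_nonneg_of_nontrivial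
      exact absurd h1 (not_lt.2 h5)
    have hN : N' = ⊤ := by
      rw [eq_top_iff]
      intro y _
      have h1 : (1 : R) ∈ Module.annihilator R (M ⧸ N') := htop ▸ trivial
      have := Module.mem_annihilator.1 h1 (Submodule.Quotient.mk y)
      rwa [one_smul, Submodule.Quotient.mk_eq_zero] at this
    refine upper_limit M x r 0 fun T hT => ⟨r, ?_, by simp⟩
    have := QLs.gens x (fun _ => T) _ (le_refl (powerIdeal x (fun _ => T) • (⊤ : Submodule R M))) m
    rw [← hN', hN, sup_top_eq] at this
    simpa using this
  · obtain ⟨e, rfl⟩ : ∃ e, d = e + 1 := ⟨d - 1, by omega⟩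
    obtain ⟨B, hB⟩ := growth (Ideal.span (Set.range x)) hI e (M ⧸ N') fun Q hQ hQa =>
      ⟨hxp Q hQ (hMC.trans hQa), by
        have := hdim Q hQ hQa
        rw [Nat.cast_add, Nat.cast_one] at this
        exact ENat.WithBot.lt_add_one_iff.1 this⟩
    refine upper_limit M x r (B * (e + 1 + 1) ^ e) fun T hT => ?_
    refine ⟨r * ∏ i : Fin (e+1), T + B * ((e + 1 + 1) * T) ^ e, ?_, le_of_eq ?_⟩
    · have h1 := QLs.gens x (fun _ => T) _ (le_refl (powerIdeal x (fun _ => T) • (⊤ : Submodule R M))) m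
      refine h1.trans ?_
      have h2 := ((hB ((e + 1 + 1) * T)).comap N'.mkQ (Submodule.mkQ_surjective _)).start
        (V := powerIdeal x (fun _ => T) • (⊤ : Submodule R M) ⊔ N') (by
          rw [comap_smul_top _ (Submodule.mkQ_surjective _), Submodule.ker_mkQ]
          exact sup_le_sup (Submodule.smul_mono (pow_le_powerIdeal x T hT) le_rfl) le_rfl)
      rwa [Submodule.comap_top, top_sup_eq] at h2
    · simp only [Finset.prod_const, Finset.card_univ, Fintype.card_fin, mul_pow]
      ring

theorem main_final
    {R : Type u} [CommRing R] [IsNoetherianRing R] [IsLocalRing R]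
    (hfield : ∃ K : Subring R, IsField K)
    (M : Type u) [AddCommGroup M] [Module R M] [Module.Finite R M]
    {d : ℕ} (hd : ringKrullDim (R ⧸ Module.annihilator R M) = d)
    (x : Fin d → R) (hx : ∀ i, x i ∈ IsLocalRing.maximalIdeal R)
    (hxparam : ringKrullDim
      (R ⧸ Module.annihilator R (M ⧸ (Ideal.span (Set.range x) • (⊤ : Submodule R M)))) = 0) :
    content x M =
      ⨆ P : {P : Ideal R //
          P ∈ (Module.annihilator R M).minimalPrimes ∧ ringKrullDim (R ⧸ P) = d},
        (Module.finrank (FractionRing (R ⧸ P.1))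
          (FractionRing (R ⧸ P.1) ⊗[R ⧸ P.1] (M ⧸ (P.1 • (⊤ : Submodule R M)))) : ℝ≥0∞) := by
  classical
  have hxp := prime_eq_max M (Ideal.span (Set.range x)) hxparam
  apply le_antisymm
  · have hfin : {P : Ideal R | P ∈ (Module.annihilator R M).minimalPrimes ∧ ringKrullDim (R ⧸ P) = d}.Finite :=
      (Ideal.finite_minimalPrimes_of_isNoetherianRing R (Module.annihilator R M)).subset fun P hP => hP.1
    let f : Ideal R → ℕ := fun P => Module.finrank (FractionRing (R ⧸ P))
          (FractionRing (R ⧸ P) ⊗[R ⧸ P] (M ⧸ (P • (⊤ : Submodule R M))))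
    have hub := upper_bound M hd x hx hxp (hfin.toFinset.sup f)
      (fun P hP hPd => Finset.le_sup (f := f) (hfin.mem_toFinset.2 ⟨hP, hPd⟩))
    refine hub.trans ?_
    rcases hfin.toFinset.eq_empty_or_nonempty with h0 | h0
    · rw [h0]; simp
    · obtain ⟨P, hP, hPe⟩ := Finset.exists_mem_eq_sup _ h0 f
      rw [hPe]
      exact le_iSup (fun P : {P : Ideal R //
          P ∈ (Module.annihilator R M).minimalPrimes ∧ ringKrullDim (R ⧸ P) = d} => (f P.1 : ℝ≥0∞)) ⟨P, hfin.mem_toFinset.1 hP⟩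
  · refine iSup_le fun P => ?_
    haveI := P.2.1.1.1
    have hrad : maximalIdeal R ≤ (P.1 ⊔ Ideal.span (Set.range x)).radical := by
      rw [Ideal.radical_eq_sInf]
      refine le_sInf fun J hJ => ?_
      rw [hxp J hJ.2 (P.2.1.1.2.trans (le_sup_left.trans hJ.1)) (le_sup_right.trans hJ.1)]
    obtain ⟨N, hN⟩ := Ideal.exists_pow_le_of_le_radical_of_fg hrad (IsNoetherian.noetherian _)
    exact lower_bound hfield M x hx P.1 P.2.2 N hN

end

open scoped TensorProduct

/-- Over a Noetherian local ring containing a field, for a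
finitely generated module `M` of dimension `d` and a system of parameters
`x₁, …, x_d` of `M`, the content of `M` is the maximum of the ranks
`rank_{R/P}(M/PM)` over the primes `P` minimal over `Ann M` with `dim R/P = d`. -/
theorem content_eq_max_rank_module
    {R : Type u} [CommRing R] [IsNoetherianRing R] [IsLocalRing R]
    (hfield : ∃ K : Subring R, IsField K)
    (M : Type u) [AddCommGroup M] [Module R M] [Module.Finite R M]
    {d : ℕ} (hd : ringKrullDim (R ⧸ Module.annihilator R M) = d)
    (x : Fin d → R) (hx : ∀ i, x i ∈ IsLocalRing.maximalIdeal R)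
    (hxparam : ringKrullDim
      (R ⧸ Module.annihilator R (M ⧸ (Ideal.span (Set.range x) • (⊤ : Submodule R M)))) = 0) :
    content x M =
      ⨆ P : {P : Ideal R //
          P ∈ (Module.annihilator R M).minimalPrimes ∧ ringKrullDim (R ⧸ P) = d},
        (Module.finrank (FractionRing (R ⧸ P.1))
          (FractionRing (R ⧸ P.1) ⊗[R ⧸ P.1] (M ⧸ (P.1 • (⊤ : Submodule R M)))) : ℝ≥0∞) := by
  exact main_final hfield M hd x hx hxparam
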